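/- Suppose the entropy map μ ↦ h_μ(f) on M_f(X) is upper semi-continuous. Let φ ∈ C(X), T_0(q) = P(qφ), and J(q) = [D⁻T_0(q), D⁺T_0(q)]. Then the predicted spectrum is S(α) = inf{T_0(q) − qα : q ∈ ℝ} and its domain I = {α : S(α) ≥ 0} satisfies I = [lim_{q→−∞} D⁻T_0(q), lim_{q→∞} D⁺T_0(q)] = {∫φ dμ : μ ∈ M_f(X)}. For every α ∉ I, K_α^φ = ∅. For every α ∈ int I ∖ ⋃_{q∈ℝ} int J(q): h_top(K_α^φ) = lF(α) = uF(α) = inf{T_0(q) − qα : q ∈ ℝ} = sup{h_μ(f) : μ ∈ M_f(X), ∫φ dμ = α} = sup{h_μ(f) : μ ∈ M_f^e(X), μ(K_α^φ) = 1}. Moreover, if there exist compact f-invariant sets X_n ⊆ X with P_{X_n}(qφ) → P_X(qφ) for all q and q ↦ P_{X_n}(qφ) differentiable on ℝ for all n, then this chain of equalities holds for every α ∈ int I. -/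

import Mathlib

/-!
The theorem rests on the variational principle for Bowen's pressure.

*Entropy is bounded by pressure.* If an invariant measure `μ` gives full mass to `Z`, then
`h_μ + ∫ ψ dμ ≤ P_Z(ψ)` (`free_energy_le`). Covers of `Z` by Bowen balls of total weight less than
one, `∑ exp (-n s + S_n ψ) < 1`, are the pieces of a random concatenation that assigns
sub-probability weights to words (`codeQ`). The word that a typical orbit reads off a finite
partition receives weight at least about `exp (-(n s - S_n ψ))`, so Gibbs' inequality bounds the
entropy of the partition by `s - ∫ ψ dμ` up to small errors (`coding_bound`). No ergodicity is
needed, and `Z` need not be compact or invariant.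

*Pressure is attained.* Misiurewicz's construction (`misiurewicz`) turns the growth of weighted
separated sets into invariant measures of large free energy; upper semicontinuity of the entropy
then gives equilibrium states on every compact forward invariant set (`exists_equilibrium`).

*The domain.* The mean of `φ` over an equilibrium state of `q φ` is the slope of a supporting line
of `T_0` at `q`, and both endpoints of `J(q)` arise in this way. Hence the slopes `α` with
`q α ≤ T_0(q)` for all `q` form the closed interval bounded by the limits of the one-sided
derivatives (`PressureSetup.domain_eq_Icc`), and they are exactly the means of invariant measures
(`PressureSetup.domain_eq_means`). An orbit with Birkhoff average `α` forces `q α ≤ T_0(q)`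
(`PressureSetup.mem_domain_of_mem_Kbirk`).

*The spectrum.* Two inequalities hold for every `α`: the chain `h_top(K_α) ≤ lF(α) ≤ uF(α)`
(`htop_le_lF`, `lF_le_uF`) and `uF(α) ≤ T_0(q) - q α`, again by Misiurewicz's construction
(`uF_le`). It remains to find ergodic measures `μ` with mean `α` and entropy close to
`inf_q (T_0(q) - q α)`: Birkhoff's theorem gives `μ(K_α) = 1` (`kbirk_measure_one`), so
`h_μ ≤ h_top(K_α)` and the chain closes (`formalism_of_ergodic`).

For `α` interior to the domain the function `q ↦ T_0(q) - q α` is coercive, hence attains its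
minimum at some `q`, and `α ∈ J(q)`. If `α` is not interior to `J(q)`, it is an extreme value of the
mean of `φ` over the equilibrium states of `q φ`. Those with mean `α` form a nonempty closed face of
the invariant measures, which contains an ergodic measure (`exists_ergodic_equilibrium`): a
maximizer on the face of a suitable strictly convex functional cannot be split along an invariant
set. When the pressures `g_n` of subsystems are differentiable and converge to `T_0`, a minimizer
of `g_n(q) - q α` has `α` as its only slope there and carries such an ergodic measure on the
subsystem; coercivity keeps the minimizers bounded, so the minima converge to the minimum of
`T_0(q) - q α` (`formalism_of_approx`).
-/

open MeasureTheory Filter Set Topology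
open scoped ENNReal

noncomputable section

namespace Multifractal

variable {X : Type*} [MetricSpace X]

/-- The Birkhoff sum `S_n φ(x) = ∑_{k<n} φ(f^k x)`. -/
def birk (f : X → X) (φ : X → ℝ) (n : ℕ) (x : X) : ℝ :=
  ∑ k ∈ Finset.range n, φ (f^[k] x)

/-- The Bowen ball `B(x,n,δ)`. -/
def bowenBall (f : X → X) (x : X) (n : ℕ) (δ : ℝ) : Set X :=
  {y | ∀ k < n, dist (f^[k] x) (f^[k] y) < δ}

/-- A countable cover of `Z` by Bowen balls of order at least `N` and radius `δ`,
with centres in `Z`; this is the collection `P(Z,N,δ)`. -/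
def IsBowenCover (f : X → X) (Z : Set X) (N : ℕ) (δ : ℝ) (E : Set (X × ℕ)) : Prop :=
  E.Countable ∧ (∀ p ∈ E, p.1 ∈ Z ∧ N ≤ p.2) ∧ Z ⊆ ⋃ p ∈ E, bowenBall f p.1 p.2 δ

/-- The weighted sum `∑_i exp (w (x_i, n_i))` over a cover `E`. -/
def coverSum (E : Set (X × ℕ)) (w : X × ℕ → ℝ) : ℝ≥0∞ :=
  ∑' p : E, ENNReal.ofReal (Real.exp (w ↑p))

/-- The set function `m_P(Z,s,φ,δ) = lim_{N→∞} m_P(Z,s,φ,N,δ)` (the limit in `N` is a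
supremum, by monotonicity). -/
def mP (f : X → X) (Z : Set X) (s : ℝ) (φ : X → ℝ) (δ : ℝ) : ℝ≥0∞ :=
  ⨆ N : ℕ, ⨅ (E : Set (X × ℕ)) (_ : IsBowenCover f Z N δ E),
    coverSum E fun p => -(p.2 : ℝ) * s + birk f φ p.2 p.1

/-- `P_Z(φ,δ) = inf {s | m_P(Z,s,φ,δ) = 0}`, as an extended real. -/
def pressureAt (f : X → X) (Z : Set X) (φ : X → ℝ) (δ : ℝ) : EReal :=
  sInf ((fun s : ℝ => (s : EReal)) '' {s : ℝ | mP f Z s φ δ = 0})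

/-- The topological pressure `P_Z(φ) = lim_{δ→0} P_Z(φ,δ)` (the limit is a supremum, by
monotonicity in `δ`). -/
def pressure (f : X → X) (Z : Set X) (φ : X → ℝ) : EReal :=
  ⨆ (δ : ℝ) (_ : 0 < δ), pressureAt f Z φ δ

/-- Finite topological entropy: `h_top(X) = P_X(0) < ∞`. -/
def FiniteHtop (f : X → X) : Prop := pressure f univ (fun _ => 0) ≠ ⊤

/-- The set function `m_u(Z,s,δ)` used to define the `u`-dimension. -/
def mU (f : X → X) (u : X → ℝ) (Z : Set X) (s : ℝ) (δ : ℝ) : ℝ≥0∞ :=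
  ⨆ N : ℕ, ⨅ (E : Set (X × ℕ)) (_ : IsBowenCover f Z N δ E),
    coverSum E fun p => -s * birk f u p.2 p.1

/-- `dim_u(Z,δ) = inf {s | m_u(Z,s,δ) = 0}`. -/
def dimuAt (f : X → X) (u : X → ℝ) (Z : Set X) (δ : ℝ) : EReal :=
  sInf ((fun s : ℝ => (s : EReal)) '' {s : ℝ | mU f u Z s δ = 0})

/-- The `u`-dimension `dim_u Z = lim_{δ→0} dim_u(Z,δ)`, with `dim_u ∅ = -∞`. -/
def dimu (f : X → X) (u : X → ℝ) (Z : Set X) : EReal :=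
  ⨆ (δ : ℝ) (_ : 0 < δ), dimuAt f u Z δ

/-- Property (P): for every `δ>0` there exist covers `E_N ∈ P(X,N,δ)` with
`lim_{N→∞} inf_{(x,n) ∈ E_N} S_n u(x) = +∞`. -/
def PropP (f : X → X) (u : X → ℝ) : Prop :=
  ∀ δ : ℝ, 0 < δ → ∃ E : ℕ → Set (X × ℕ),
    (∀ N, IsBowenCover f univ N δ (E N)) ∧
    ∀ C : ℝ, ∃ N₀ : ℕ, ∀ N ≥ N₀, ∀ p ∈ E N, C ≤ birk f u p.2 p.1

/-- The ratio level set `K_α = {x | S_nφ(x)/S_nψ(x) → α}`. -/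
def Kratio (f : X → X) (φ ψ : X → ℝ) (α : ℝ) : Set X :=
  {x | Tendsto (fun n : ℕ => birk f φ n x / birk f ψ n x) atTop (𝓝 α)}

/-- The Birkhoff average level set `K_α^φ = {x | (1/n) S_nφ(x) → α}`. -/
def Kbirk (f : X → X) (φ : X → ℝ) (α : ℝ) : Set X :=
  {x | Tendsto (fun n : ℕ => birk f φ n x / n) atTop (𝓝 α)}

/-- The set `X̂` of points with `liminf S_nψ(x) > 0` and `liminf (1/n) S_n u(x) > 0`. -/
def Xhat (f : X → X) (ψ u : X → ℝ) : Set X :=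
  {x | 0 < Filter.liminf (fun n : ℕ => ((birk f ψ n x : ℝ) : EReal)) atTop ∧
       0 < Filter.liminf (fun n : ℕ => ((birk f u n x / n : ℝ) : EReal)) atTop}

/-- The set of points where `liminf (1/n) S_n v(x) > 0`. -/
def liminfPosSet (f : X → X) (v : X → ℝ) : Set X :=
  {x | 0 < Filter.liminf (fun n : ℕ => ((birk f v n x / n : ℝ) : EReal)) atTop}

/-- The potential `q(φ - αψ) - tu`. -/
def potential (φ ψ u : X → ℝ) (α q t : ℝ) : X → ℝ :=
  fun x => q * (φ x - α * ψ x) - t * u x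

/-- `T_α(q) = inf {t | P_Z(q(φ-αψ) - tu) ≤ 0}` for the system restricted to `Z`. -/
def TspecOn (f : X → X) (Z : Set X) (φ ψ u : X → ℝ) (α q : ℝ) : EReal :=
  sInf ((fun t : ℝ => (t : EReal)) '' {t : ℝ | pressure f Z (potential φ ψ u α q t) ≤ 0})

/-- The predicted spectrum `S(α) = inf_q T_α(q)` for the system restricted to `Z`. -/
def SspecOn (f : X → X) (Z : Set X) (φ ψ u : X → ℝ) (α : ℝ) : EReal :=
  ⨅ q : ℝ, TspecOn f Z φ ψ u α q

/-- `T_α(q) = inf {t | P(q(φ-αψ) - tu) ≤ 0}`. -/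
def Tspec (f : X → X) (φ ψ u : X → ℝ) (α q : ℝ) : EReal := TspecOn f univ φ ψ u α q

/-- The thermodynamically predicted spectrum `S(α) = inf_q T_α(q)`. -/
def Sspec (f : X → X) (φ ψ u : X → ℝ) (α : ℝ) : EReal := SspecOn f univ φ ψ u α

/-- `T_0(q) = inf{t | P(qφ - tu) ≤ 0}` (the non-mixed case `u = ψ`). -/
def T0fun (f : X → X) (φ u : X → ℝ) (q : ℝ) : EReal :=
  sInf ((fun t : ℝ => (t : EReal)) ''
    {t : ℝ | pressure f univ (fun x => q * φ x - t * u x) ≤ 0})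

/-- `Q = {q | T_0(q) < ∞}`. -/
def Qset (f : X → X) (φ u : X → ℝ) : Set ℝ := {q | T0fun f φ u q < ⊤}

/-- `Ĩ = ⋃_{q ∈ int Q} J(q)`: `α ∈ Ĩ` iff `α` is the slope of a subtangent line to the
convex function `T_0` at some `q` in the interior of `Q`. -/
def Itilde (f : X → X) (φ u : X → ℝ) : Set ℝ :=
  {α | ∃ q ∈ interior (Qset f φ u), ∀ q' : ℝ,
    T0fun f φ u q + ((α * (q' - q) : ℝ) : EReal) ≤ T0fun f φ u q'}

/-- The approximate level set `G_n(U)`. -/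
def Gset (f : X → X) (φ : X → ℝ) (n : ℕ) (U : Set ℝ) : Set X :=
  {x | birk f φ n x / n ∈ U}

/-- `Λ_n^δ(U)`: the minimal cardinality of a set `E` with `B(E,n,δ) ⊇ G_n(U)`. -/
def Lam (f : X → X) (φ : X → ℝ) (n : ℕ) (δ : ℝ) (U : Set ℝ) : ℕ :=
  sInf {m : ℕ | ∃ E : Finset X, E.card = m ∧ Gset f φ n U ⊆ ⋃ x ∈ E, bowenBall f x n δ}

/-- `(1/n) log m` as an extended real, with value `-∞` when `m = 0`. -/
def elogn (m n : ℕ) : EReal :=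
  if m = 0 then (⊥ : EReal) else ((Real.log m / n : ℝ) : EReal)

/-- The lower coarse spectrum. -/
def lFspec (f : X → X) (φ : X → ℝ) (α : ℝ) : EReal :=
  ⨅ (U : Set ℝ) (_ : U ∈ 𝓝 α), ⨆ (δ : ℝ) (_ : 0 < δ),
    Filter.liminf (fun n : ℕ => elogn (Lam f φ n δ U) n) atTop

/-- The upper coarse spectrum. -/
def uFspec (f : X → X) (φ : X → ℝ) (α : ℝ) : EReal :=
  ⨅ (U : Set ℝ) (_ : U ∈ 𝓝 α), ⨆ (δ : ℝ) (_ : 0 < δ),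
    Filter.limsup (fun n : ℕ => elogn (Lam f φ n δ U) n) atTop

/-- Right derivative of a convex function, as the infimum of difference quotients. -/
def Dplus (g : ℝ → ℝ) (q : ℝ) : ℝ :=
  sInf {m : ℝ | ∃ ε : ℝ, 0 < ε ∧ m = (g (q + ε) - g q) / ε}

/-- Left derivative of a convex function, as the supremum of difference quotients. -/
def Dminus (g : ℝ → ℝ) (q : ℝ) : ℝ :=
  sSup {m : ℝ | ∃ ε : ℝ, 0 < ε ∧ m = (g q - g (q - ε)) / ε}

section Measures

variable [MeasurableSpace X]

/-- The set `M_f(X)` of `f`-invariant Borel probability measures. -/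
def invProb (f : X → X) : Set (Measure X) :=
  {μ | IsProbabilityMeasure μ ∧ MeasurePreserving f μ μ}

/-- The set `M_f^e(X)` of ergodic `f`-invariant Borel probability measures. -/
def ergProb (f : X → X) : Set (Measure X) :=
  {μ | IsProbabilityMeasure μ ∧ Ergodic f μ}

/-- A finite measurable partition of `X`. -/
def IsFinPartition {m : ℕ} (P : Fin m → Set X) : Prop :=
  (∀ i, MeasurableSet (P i)) ∧ (∀ i j, i ≠ j → Disjoint (P i) (P j)) ∧ (⋃ i, P i) = univ

/-- The entropy `H_μ(P) = ∑_i -μ(P_i) log μ(P_i)` of a finite partition. -/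
def partEnt (μ : Measure X) {ι : Type*} [Fintype ι] (P : ι → Set X) : ℝ :=
  ∑ i, -((μ (P i)).toReal * Real.log (μ (P i)).toReal)

/-- The dynamical refinement `⋁_{k<n} f^{-k} P` of a partition. -/
def orbitJoin (f : X → X) {m : ℕ} (P : Fin m → Set X) (n : ℕ) :
    (Fin n → Fin m) → Set X :=
  fun w => ⋂ k : Fin n, f^[(k : ℕ)] ⁻¹' P (w k)

/-- The Kolmogorov–Sinai entropy `h_μ(f)`. -/
def kolSinai (f : X → X) (μ : Measure X) : ℝ :=
  ⨆ (m : ℕ) (P : Fin m → Set X) (_ : IsFinPartition P),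
    ⨅ n : ℕ, partEnt μ (orbitJoin f P (n + 1)) / (n + 1)

/-- The `u`-dimension of a measure: `dim_u μ = inf {dim_u Z | μ(Z) = 1}`. -/
def dimuMeas (f : X → X) (u : X → ℝ) (μ : Measure X) : EReal :=
  sInf {d : EReal | ∃ Z : Set X, μ Z = 1 ∧ d = dimu f u Z}

/-- `μ` is a weak Gibbs measure for `φ` with pressure `Pφ`. -/
def WeakGibbs (f : X → X) (μ : Measure X) (φ : X → ℝ) (Pφ : ℝ) : Prop :=
  ∀ x : X,
    Tendsto (fun δ : ℝ => Filter.liminf (fun n : ℕ =>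
        (((-Real.log ((μ (bowenBall f x n δ)).toReal) + birk f φ n x) / n : ℝ) : EReal)) atTop)
      (𝓝[>] (0 : ℝ)) (𝓝 ((Pφ : EReal))) ∧
    Tendsto (fun δ : ℝ => Filter.limsup (fun n : ℕ =>
        (((-Real.log ((μ (bowenBall f x n δ)).toReal) + birk f φ n x) / n : ℝ) : EReal)) atTop)
      (𝓝[>] (0 : ℝ)) (𝓝 ((Pφ : EReal)))

/-- The level set `K_α^{d_μ}` of points with pointwise dimension `α`. -/
def KdimSet (μ : Measure X) (α : ℝ) : Set X :=
  {x | Tendsto (fun r : ℝ => Real.log ((μ (Metric.ball x r)).toReal) / Real.log r)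
      (𝓝[>] (0 : ℝ)) (𝓝 α)}

end Measures


/-- The multifractal formalism chain of equalities for the entropy spectrum of Birkhoff
averages at `α`: `h_top(K_α^φ) = lF(α) = uF(α) = inf_q (T_0(q) - qα)
= sup{h_μ(f) | ∫φ dμ = α} = sup{h_μ(f) | μ ergodic, μ(K_α^φ) = 1}`. -/
def BirkFormalism {X : Type*} [MetricSpace X] [MeasurableSpace X]
    (f : X → X) (φ : X → ℝ) (T0 : ℝ → ℝ) (α : ℝ) : Prop :=
  pressure f (Kbirk f φ α) (fun _ => 0) = lFspec f φ α ∧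
  lFspec f φ α = uFspec f φ α ∧
  uFspec f φ α = (⨅ q : ℝ, ((T0 q - q * α : ℝ) : EReal)) ∧
  (⨅ q : ℝ, ((T0 q - q * α : ℝ) : EReal))
    = sSup {d : EReal | ∃ μ : Measure X, μ ∈ invProb f ∧ (∫ x, φ x ∂μ) = α ∧
        d = ((kolSinai f μ : ℝ) : EReal)} ∧
  (⨅ q : ℝ, ((T0 q - q * α : ℝ) : EReal))
    = sSup {d : EReal | ∃ μ : Measure X, IsProbabilityMeasure μ ∧ Ergodic f μ ∧
        μ (Kbirk f φ α) = 1 ∧ d = ((kolSinai f μ : ℝ) : EReal)}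

set_option linter.unusedSectionVars false

/-! ### Entropy of finite labellings -/

section LabelEntropy

/-- Gibbs' inequality: the entropy of `p` is at most its cross entropy relative to `q`. -/
lemma gibbs_le {ι : Type*} [Fintype ι] (p q : ι → ℝ) (hp : ∀ i, 0 ≤ p i) (hq : ∀ i, 0 ≤ q i)
    (hsum : ∑ i, q i ≤ ∑ i, p i) (h : ∀ i, p i ≠ 0 → 0 < q i) :
    ∑ i, Real.negMulLog (p i) ≤ ∑ i, p i * (-Real.log (q i)) := by
  have key : ∀ i, Real.negMulLog (p i) - p i * (-Real.log (q i)) ≤ q i - p i := by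
    intro i
    rcases eq_or_ne (p i) 0 with h0 | h0
    · simp [h0, hq i]
    · have hpi : 0 < p i := lt_of_le_of_ne (hp i) (Ne.symm h0)
      have hqi := h i h0
      have h1 := Real.log_le_sub_one_of_pos (div_pos hqi hpi)
      rw [Real.log_div hqi.ne' hpi.ne'] at h1
      have h2 := mul_le_mul_of_nonneg_left h1 hpi.le
      have h3 : p i * (q i / p i - 1) = q i - p i := by field_simp
      rw [h3] at h2
      unfold Real.negMulLog
      linarith
  have := Finset.sum_le_sum (fun i (_ : i ∈ Finset.univ) => key i)
  rw [Finset.sum_sub_distrib, Finset.sum_sub_distrib] at this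
  linarith

variable [MeasurableSpace X]

/-- The entropy of the finite partition of `X` into the level sets of a labelling `g`. -/
def Hlab (σ : Measure X) {S : Type*} [Fintype S] (g : X → S) : ℝ :=
  ∑ s, Real.negMulLog (σ.real (g ⁻¹' {s}))

/-- The itinerary of `x` over the time window `[k, k + n)` with respect to the labelling `l`. -/
def itin (f : X → X) {S : Type*} (l : X → S) (k n : ℕ) : X → (Fin n → S) :=
  fun x i => l (f^[k + i] x)

lemma Hlab_nonneg (σ : Measure X) [IsProbabilityMeasure σ] {S : Type*} [Fintype S] (g : X → S) :
    0 ≤ Hlab σ g :=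
  Finset.sum_nonneg fun _ _ => Real.negMulLog_nonneg measureReal_nonneg measureReal_le_one

lemma Hlab_le_card (σ : Measure X) [IsProbabilityMeasure σ] {S : Type*} [Fintype S] (g : X → S) :
    Hlab σ g ≤ Fintype.card S := by
  unfold Hlab
  calc _ ≤ ∑ _s : S, (1 : ℝ) := Finset.sum_le_sum fun s _ => by
          have h0 : (0 : ℝ) ≤ σ.real (g ⁻¹' {s}) := measureReal_nonneg
          linarith [Real.negMulLog_le_one_sub_self h0]
    _ = _ := by simp

lemma Hlab_equiv (σ : Measure X) {S T : Type*} [Fintype S] [Fintype T] (e : S ≃ T) (g : X → S) :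
    Hlab σ (fun x => e (g x)) = Hlab σ g := by
  unfold Hlab
  rw [← e.sum_comp]
  refine Finset.sum_congr rfl fun s _ => ?_
  congr 2
  ext x
  simp

lemma sum_measureReal_fiber (σ : Measure X) [IsProbabilityMeasure σ] {S : Type*} [Fintype S]
    (g : X → S) (hg : ∀ s, MeasurableSet (g ⁻¹' {s})) (A : Set X) (hA : MeasurableSet A) :
    ∑ s, σ.real (A ∩ g ⁻¹' {s}) = σ.real A := by
  rw [← measureReal_biUnion_finset]
  · congr 1
    ext x
    simp
  · intro s _ t _ hst
    refine Set.disjoint_left.2 ?_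
    rintro x ⟨_, hx⟩ ⟨_, hy⟩
    exact hst (by rw [← hx, ← hy])
  · exact fun s _ => hA.inter (hg s)

/-- Subadditivity of entropy under joins. -/
lemma Hlab_prod_le (σ : Measure X) [IsProbabilityMeasure σ] {S T : Type*} [Fintype S] [Fintype T]
    (g : X → S) (h : X → T) (hg : ∀ s, MeasurableSet (g ⁻¹' {s}))
    (hh : ∀ s, MeasurableSet (h ⁻¹' {s})) :
    Hlab σ (fun x => (g x, h x)) ≤ Hlab σ g + Hlab σ h := by
  have hpre : ∀ st : S × T, (fun x => (g x, h x)) ⁻¹' {st} = g ⁻¹' {st.1} ∩ h ⁻¹' {st.2} := by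
    intro st
    ext x
    simp [Prod.ext_iff]
  set p : S × T → ℝ := fun st => σ.real (g ⁻¹' {st.1} ∩ h ⁻¹' {st.2}) with hp
  have hsg : ∀ s, ∑ t, p (s, t) = σ.real (g ⁻¹' {s}) := fun s =>
    sum_measureReal_fiber σ h hh _ (hg s)
  have hsh : ∀ t, ∑ s, p (s, t) = σ.real (h ⁻¹' {t}) := fun t => by
    rw [← sum_measureReal_fiber σ g hg _ (hh t)]
    exact Finset.sum_congr rfl fun s _ => by simp only [hp]; rw [Set.inter_comm]
  have hg1 : ∑ s, σ.real (g ⁻¹' {s}) = 1 := by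
    have := sum_measureReal_fiber σ g hg univ MeasurableSet.univ
    simpa using this
  have hh1 : ∑ s, σ.real (h ⁻¹' {s}) = 1 := by
    have := sum_measureReal_fiber σ h hh univ MeasurableSet.univ
    simpa using this
  have e1 : Hlab σ (fun x => (g x, h x)) = ∑ st, Real.negMulLog (p st) := by
    unfold Hlab
    exact Finset.sum_congr rfl fun st _ => by rw [hpre]
  rw [e1]
  refine (gibbs_le p (fun st => σ.real (g ⁻¹' {st.1}) * σ.real (h ⁻¹' {st.2}))
    (fun _ => measureReal_nonneg) (fun _ => mul_nonneg measureReal_nonneg measureReal_nonneg)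
    ?_ ?_).trans (le_of_eq ?_)
  · rw [Fintype.sum_prod_type, Fintype.sum_prod_type]
    simp only [← Finset.mul_sum, hh1, hsg, mul_one, le_refl]
  · intro st hst
    have hpos : 0 < p st := lt_of_le_of_ne measureReal_nonneg (Ne.symm hst)
    exact mul_pos (hpos.trans_le (measureReal_mono Set.inter_subset_left))
      (hpos.trans_le (measureReal_mono Set.inter_subset_right))
  · have hterm : ∀ st : S × T, p st * (-Real.log (σ.real (g ⁻¹' {st.1}) * σ.real (h ⁻¹' {st.2})))
        = p st * (-Real.log (σ.real (g ⁻¹' {st.1})))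
          + p st * (-Real.log (σ.real (h ⁻¹' {st.2}))) := by
      intro st
      rcases eq_or_ne (p st) 0 with h0 | h0
      · simp [h0]
      · have hpos : 0 < p st := lt_of_le_of_ne measureReal_nonneg (Ne.symm h0)
        rw [Real.log_mul (hpos.trans_le (measureReal_mono Set.inter_subset_left)).ne'
          (hpos.trans_le (measureReal_mono Set.inter_subset_right)).ne']
        ring
    simp only [hterm, Finset.sum_add_distrib]
    congr 1
    · rw [Fintype.sum_prod_type]
      simp only [← Finset.sum_mul, hsg]
      exact Finset.sum_congr rfl fun s _ => by unfold Real.negMulLog; ring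
    · rw [Fintype.sum_prod_type_right]
      simp only [← Finset.sum_mul, hsh]
      exact Finset.sum_congr rfl fun s _ => by unfold Real.negMulLog; ring

lemma itin_preimage (f : X → X) {S : Type*} (l : X → S) (k n : ℕ) (w : Fin n → S) :
    itin f l k n ⁻¹' {w} = ⋂ i : Fin n, f^[k + i] ⁻¹' (l ⁻¹' {w i}) := by
  ext x
  simp [itin, funext_iff]

lemma measurableSet_itin (f : X → X) (hf : Measurable f) {S : Type*} (l : X → S)
    (hl : ∀ s, MeasurableSet (l ⁻¹' {s})) (k n : ℕ) (w : Fin n → S) :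
    MeasurableSet (itin f l k n ⁻¹' {w}) := by
  rw [itin_preimage]
  exact MeasurableSet.iInter fun i => (hf.iterate _) (hl _)

lemma Hitin_add (σ : Measure X) [IsProbabilityMeasure σ] (f : X → X) (hf : Measurable f)
    {S : Type*} [Fintype S] (l : X → S) (hl : ∀ s, MeasurableSet (l ⁻¹' {s})) (k n n' : ℕ) :
    Hlab σ (itin f l k (n + n')) ≤ Hlab σ (itin f l k n) + Hlab σ (itin f l (k + n) n') := by
  refine le_trans (le_of_eq ?_) (Hlab_prod_le σ _ _ (measurableSet_itin f hf l hl k n)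
    (measurableSet_itin f hf l hl (k + n) n'))
  rw [← Hlab_equiv σ (Fin.appendEquiv n n')]
  congr 1
  ext x i
  refine Fin.addCases (fun i => ?_) (fun i => ?_) i
  · simp [itin, Fin.appendEquiv]
  · simp [itin, Fin.appendEquiv, add_assoc]

lemma Hitin_zero (σ : Measure X) [IsProbabilityMeasure σ] (f : X → X)
    {S : Type*} [Fintype S] (l : X → S) (k : ℕ) : Hlab σ (itin f l k 0) = 0 := by
  unfold Hlab
  refine Finset.sum_eq_zero fun s _ => ?_
  have : itin f l k 0 ⁻¹' {s} = univ := by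
    ext x
    simp [eq_iff_true_of_subsingleton]
  simp [this]

lemma Hitin_le (σ : Measure X) [IsProbabilityMeasure σ] (f : X → X) (hf : Measurable f)
    {S : Type*} [Fintype S] (l : X → S) (hl : ∀ s, MeasurableSet (l ⁻¹' {s})) (k n : ℕ) :
    Hlab σ (itin f l k n) ≤ n * Fintype.card S := by
  induction n with
  | zero => simp [Hitin_zero]
  | succ n ih =>
    have h1 := Hitin_add σ f hf l hl k n 1
    have h2 := Hlab_le_card σ (itin f l (k + n) 1)
    have h3 : (Fintype.card (Fin 1 → S) : ℝ) = Fintype.card S := by simp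
    push_cast
    linarith

/-- Cutting a window of length `n` into blocks of length `q`, in all `q` possible phases, for an
abstract subadditive function of windows. -/
lemma block_bound (a : ℕ → ℕ → ℝ) (M : ℝ) (hM : 0 ≤ M) (h0 : ∀ k n, 0 ≤ a k n)
    (hadd : ∀ k n n', a k (n + n') ≤ a k n + a (k + n) n') (hle : ∀ k n, a k n ≤ n * M)
    (q n : ℕ) :
    q * a 0 n ≤ 2 * q ^ 2 * M + ∑ k ∈ Finset.range n, a k q := by
  have hsumnn : ∀ m, 0 ≤ ∑ k ∈ Finset.range m, a k q := fun m =>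
    Finset.sum_nonneg fun k _ => h0 k q
  rcases lt_or_ge n q with hnq | hqn
  · have h1 : a 0 n ≤ q * M :=
      (hle 0 n).trans (mul_le_mul_of_nonneg_right (by exact_mod_cast hnq.le) hM)
    have h2 : (q : ℝ) * a 0 n ≤ q * (q * M) := mul_le_mul_of_nonneg_left h1 (by positivity)
    have h3 := hsumnn n
    have h4 : (0 : ℝ) ≤ q * (q * M) := by positivity
    nlinarith
  · obtain ⟨N, rfl⟩ := Nat.exists_eq_add_of_le' hqn
    -- `b k` is the value on the window from `k` to the end, `B k` the sum of `q` of them.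
    set b : ℕ → ℝ := fun k => a k (N + q - k) with hb
    set B : ℕ → ℝ := fun k => ∑ j ∈ Finset.range q, b (k + j) with hB
    have hstep : ∀ k, k + q ≤ N + q → b k ≤ a k q + b (k + q) := by
      intro k hk
      have := hadd k q (N + q - (k + q))
      rw [show q + (N + q - (k + q)) = N + q - k by omega] at this
      exact this
    have hBstep : ∀ k, k < N → B k ≤ a k q + B (k + 1) := by
      intro k hk
      have e1 : B k + b (k + q) = b k + B (k + 1) := by
        have h1 := Finset.sum_range_succ (fun j => b (k + j)) q
        have h2 := Finset.sum_range_succ' (fun j => b (k + j)) q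
        have h3 : ∑ j ∈ Finset.range q, b (k + (j + 1)) = B (k + 1) :=
          Finset.sum_congr rfl fun j _ => by congr 1; omega
        simp only [hB] at *
        simp only [add_zero] at h2
        linarith
      linarith [hstep k (by omega)]
    have hB0 : ∀ m, m ≤ N → B 0 ≤ ∑ k ∈ Finset.range m, a k q + B m := by
      intro m
      induction m with
      | zero => intro _; simp
      | succ m ih =>
        intro hm
        rw [Finset.sum_range_succ]
        linarith [ih (by omega), hBstep m (by omega)]
    have hBN : B N ≤ q * (q * M) := by
      calc B N ≤ ∑ _j ∈ Finset.range q, (q : ℝ) * M := Finset.sum_le_sum fun j hj => by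
            refine (hle _ _).trans (mul_le_mul_of_nonneg_right ?_ hM)
            exact_mod_cast (by omega : N + q - (N + j) ≤ q)
        _ = _ := by simp
    have hphase : ∀ j ∈ Finset.range q, a 0 (N + q) ≤ q * M + b (0 + j) := by
      intro j hj
      have hjq := Finset.mem_range.1 hj
      have h1 := hadd 0 j (N + q - j)
      rw [show j + (N + q - j) = N + q by omega] at h1
      have h2 : a 0 j ≤ q * M :=
        (hle 0 j).trans (mul_le_mul_of_nonneg_right (by exact_mod_cast hjq.le) hM)
      simp only [hb, zero_add] at h1 ⊢
      linarith
    have h5 := Finset.sum_le_sum hphase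
    rw [Finset.sum_add_distrib] at h5
    simp only [Finset.sum_const, Finset.card_range, nsmul_eq_mul] at h5
    have h6 : ∑ k ∈ Finset.range N, a k q ≤ ∑ k ∈ Finset.range (N + q), a k q :=
      Finset.sum_le_sum_of_subset_of_nonneg (Finset.range_subset_range.2 (by omega))
        fun k _ _ => h0 k q
    have h7 := hB0 N le_rfl
    simp only [hB] at h7 hBN
    nlinarith

/-- Misiurewicz's estimate: the entropy of a window of length `n` is controlled by the entropy of
windows of length `q` for the time-averaged measure `τ`. -/
lemma Hitin_average (σ τ : Measure X) [IsProbabilityMeasure σ] (f : X → X) (hf : Measurable f)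
    {S : Type*} [Fintype S] (l : X → S) (hl : ∀ s, MeasurableSet (l ⁻¹' {s})) (q n : ℕ)
    (hn : 0 < n)
    (hτ : ∀ A, MeasurableSet A → τ.real A = ∑ k ∈ Finset.range n, (1 / n : ℝ) * σ.real (f^[k] ⁻¹' A)) :
    q * Hlab σ (itin f l 0 n) ≤ 2 * q ^ 2 * Fintype.card S + n * Hlab τ (itin f l 0 q) := by
  have h1 := block_bound (fun k n => Hlab σ (itin f l k n)) (Fintype.card S) (by positivity)
    (fun k n => Hlab_nonneg σ _) (fun k n n' => Hitin_add σ f hf l hl k n n')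
    (fun k n => Hitin_le σ f hf l hl k n) q n
  refine h1.trans (add_le_add_right ?_ _)
  have hn' : (0 : ℝ) < n := by exact_mod_cast hn
  unfold Hlab
  rw [Finset.sum_comm, Finset.mul_sum]
  refine Finset.sum_le_sum fun w _ => ?_
  have hpre : ∀ k, itin f l k q ⁻¹' {w} = f^[k] ⁻¹' (itin f l 0 q ⁻¹' {w}) := by
    intro k
    ext x
    simp only [itin_preimage, Set.mem_iInter, Set.mem_preimage, zero_add]
    refine forall_congr' fun i => ?_
    rw [← Function.iterate_add_apply, Nat.add_comm]
  have hA := hτ _ (measurableSet_itin f hf l hl 0 q w)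
  simp only [← hpre] at hA
  rw [hA]
  have hJ := Real.concaveOn_negMulLog.le_map_sum (t := Finset.range n)
    (w := fun _ => (1 / n : ℝ)) (p := fun k => σ.real (itin f l k q ⁻¹' {w}))
    (fun _ _ => by positivity) (by simp [hn'.ne']) (fun _ _ => measureReal_nonneg)
  simp only [smul_eq_mul] at hJ
  rw [← Finset.mul_sum] at hJ
  calc _ = (n : ℝ) * (1 / n * ∑ k ∈ Finset.range n,
          Real.negMulLog (σ.real (itin f l k q ⁻¹' {w}))) := by field_simp
    _ ≤ _ := mul_le_mul_of_nonneg_left hJ hn'.le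

lemma partEnt_eq_Hlab (μ : Measure X) (f : X → X) {m : ℕ} (P : Fin m → Set X) (l : X → Fin m)
    (hP : ∀ j, P j = l ⁻¹' {j}) (n : ℕ) :
    partEnt μ (orbitJoin f P n) = Hlab μ (itin f l 0 n) := by
  unfold partEnt Hlab orbitJoin
  refine Finset.sum_congr rfl fun w _ => ?_
  rw [itin_preimage]
  simp only [zero_add, hP, Real.negMulLog, Measure.real]
  ring

lemma exists_label {m : ℕ} (P : Fin m → Set X) (hP : IsFinPartition P) :
    ∃ l : X → Fin m, (∀ j, P j = l ⁻¹' {j}) ∧ ∀ s, MeasurableSet (l ⁻¹' {s}) := by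
  obtain ⟨hm, hd, hU⟩ := hP
  have hx : ∀ x, ∃ j, x ∈ P j := fun x => by
    have : x ∈ ⋃ i, P i := hU ▸ mem_univ x
    simpa using this
  choose l hl using hx
  have hPl : ∀ j, P j = l ⁻¹' {j} := by
    intro j
    ext x
    refine ⟨fun h => ?_, fun h => ?_⟩
    · by_contra hne
      exact Set.disjoint_left.1 (hd _ _ hne) (hl x) h
    · have : l x = j := h
      exact this ▸ hl x
  exact ⟨l, hPl, fun s => hPl s ▸ hm s⟩

/-- An upper bound, uniform over labellings, bounds the Kolmogorov–Sinai entropy. -/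
lemma kolSinai_le (f : X → X) (μ : Measure X) (c : ℝ) (hc : 0 ≤ c)
    (h : ∀ (m : ℕ) (l : X → Fin m), (∀ s, MeasurableSet (l ⁻¹' {s})) →
      ∀ ε > 0, ∃ n : ℕ, Hlab μ (itin f l 0 (n + 1)) / (n + 1) ≤ c + ε)
    (hμ : IsProbabilityMeasure μ) :
    kolSinai f μ ≤ c := by
  unfold kolSinai
  refine Real.iSup_le (fun m => Real.iSup_le (fun P => Real.iSup_le (fun hP => ?_) hc) hc) hc
  obtain ⟨l, hl, hlm⟩ := exists_label P hP
  refine le_of_forall_pos_le_add fun ε hε => ?_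
  obtain ⟨n, hn⟩ := h m l hlm ε hε
  refine (ciInf_le ⟨0, ?_⟩ n).trans ?_
  · rintro _ ⟨k, rfl⟩
    simp only [partEnt_eq_Hlab μ f P l hl]
    exact div_nonneg (Hlab_nonneg _ _) (by positivity)
  · simp only [partEnt_eq_Hlab μ f P l hl]
    exact hn

/-- A lower bound for one labelling bounds the Kolmogorov–Sinai entropy from below. The bound `C`
guards against the junk value of the supremum. -/
lemma le_kolSinai (f : X → X) (μ : Measure X) (C c : ℝ)
    (hC : ∀ (m : ℕ) (l : X → Fin m), (∀ s, MeasurableSet (l ⁻¹' {s})) →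
      ∀ ε > 0, ∃ n : ℕ, Hlab μ (itin f l 0 (n + 1)) / (n + 1) ≤ C + ε)
    (hμ : IsProbabilityMeasure μ) (m : ℕ) (l : X → Fin m)
    (hl : ∀ s, MeasurableSet (l ⁻¹' {s}))
    (h : ∀ n : ℕ, c ≤ Hlab μ (itin f l 0 (n + 1)) / (n + 1)) :
    c ≤ kolSinai f μ := by
  have hinf : ∀ (m : ℕ) (P : Fin m → Set X) (_ : IsFinPartition P),
      ⨅ n : ℕ, partEnt μ (orbitJoin f P (n + 1)) / (n + 1) ≤ max C 0 := by
    intro m P hP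
    obtain ⟨l, hl, hlm⟩ := exists_label P hP
    refine le_of_forall_pos_le_add fun ε hε => ?_
    obtain ⟨n, hn⟩ := hC m l hlm ε hε
    refine (ciInf_le ⟨0, ?_⟩ n).trans ?_
    · rintro _ ⟨k, rfl⟩
      simp only [partEnt_eq_Hlab μ f P l hl]
      exact div_nonneg (Hlab_nonneg _ _) (by positivity)
    · simp only [partEnt_eq_Hlab μ f P l hl]
      linarith [le_max_left C 0]
  have h0 : (0 : ℝ) ≤ max C 0 := le_max_right _ _
  have hP : IsFinPartition fun j => l ⁻¹' {j} := by
    refine ⟨hl, fun i j hij => Set.disjoint_left.2 fun x hx hy => hij ?_, ?_⟩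
    · rw [← show l x = i from hx, ← show l x = j from hy]
    · ext x; simp
  unfold kolSinai
  refine le_ciSup_of_le ⟨max C 0, ?_⟩ m (le_ciSup_of_le ⟨max C 0, ?_⟩ (fun j => l ⁻¹' {j})
    (le_ciSup_of_le ⟨max C 0, ?_⟩ hP ?_))
  · rintro _ ⟨m, rfl⟩
    exact Real.iSup_le (fun P => Real.iSup_le (fun hP => hinf m P hP) h0) h0
  · rintro _ ⟨P, rfl⟩
    exact Real.iSup_le (fun hP => hinf m P hP) h0
  · rintro _ ⟨hP, rfl⟩
    exact hinf m _ hP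
  · refine le_ciInf fun n => ?_
    rw [partEnt_eq_Hlab μ f _ l (fun _ => rfl)]
    exact h n

end LabelEntropy

/-! ### Measures built from separated sets -/

section Misiurewicz

/-- `(n, δ)`-separated sets: distinct points do not lie in each other's Bowen balls. -/
def IsSep (f : X → X) (n : ℕ) (δ : ℝ) (E : Set X) : Prop :=
  ∀ x ∈ E, ∀ y ∈ E, x ≠ y → y ∉ bowenBall f x n δ

lemma birk_continuous {f : X → X} (hf : Continuous f) {φ : X → ℝ} (hφ : Continuous φ) (n : ℕ) :
    Continuous (birk f φ n) := by
  unfold birk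
  exact continuous_finsetSum _ fun k _ => hφ.comp (hf.iterate k)

variable [MeasurableSpace X]

lemma nullFrontier_biInter (μ : Measure X) {ι : Type*} (s : Finset ι) (A : ι → Set X)
    (h : ∀ i ∈ s, μ (frontier (A i)) = 0) : μ (frontier (⋂ i ∈ s, A i)) = 0 := by
  classical
  induction s using Finset.induction_on with
  | empty => simp
  | insert i s hi ih =>
    rw [Finset.set_biInter_insert]
    refine measure_mono_null (frontier_inter_subset _ _) (measure_union_null ?_ ?_)
    · exact measure_mono_null inter_subset_left (h i (Finset.mem_insert_self _ _))
    · exact measure_mono_null inter_subset_right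
        (ih fun j hj => h j (Finset.mem_insert_of_mem hj))

/-- Finite partitions of small diameter with null boundaries. -/
lemma exists_label_nullFrontier [CompactSpace X] [BorelSpace X] (μ : Measure X)
    [IsProbabilityMeasure μ] (δ : ℝ) (hδ : 0 < δ) :
    ∃ (m : ℕ) (l : X → Fin m), (∀ s, MeasurableSet (l ⁻¹' {s})) ∧
      (∀ s, μ (frontier (l ⁻¹' {s})) = 0) ∧ ∀ x y, l x = l y → dist x y < δ := by
  classical
  choose r hr hr0 using fun x : X => exists_null_frontier_thickening μ {x} (half_pos hδ)
  obtain ⟨t, ht⟩ := isCompact_univ.elim_finite_subcover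
    (fun x => Metric.ball x (r x)) (fun x => Metric.isOpen_ball)
    (fun x _ => mem_iUnion.2 ⟨x, Metric.mem_ball_self (hr x).1⟩)
  set e := t.equivFin
  set B : Fin t.card → Set X := fun j => Metric.thickening (r (e.symm j)) {((e.symm j : t) : X)}
    with hB
  have hcov : ∀ x, ∃ j, x ∈ B j := by
    intro x
    obtain ⟨y, hy⟩ := mem_iUnion.1 (ht (mem_univ x))
    obtain ⟨hyt, hxy⟩ := mem_iUnion.1 hy
    refine ⟨e ⟨y, hyt⟩, ?_⟩
    simp only [hB, Equiv.symm_apply_apply, Metric.thickening_singleton]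
    exact hxy
  have hmin : ∀ x, ∃ j, x ∈ B j ∧ ∀ i < j, x ∉ B i := by
    intro x
    obtain ⟨j, hj, hj'⟩ := wellFounded_lt.has_min {j | x ∈ B j} (hcov x)
    exact ⟨j, hj, fun i hi hxi => hj' i hxi hi⟩
  choose l hl hl' using hmin
  have hfib : ∀ j, l ⁻¹' {j} = ⋂ i ∈ (Finset.univ : Finset (Fin t.card)),
      (if i = j then B j else if i < j then (B i)ᶜ else univ) := by
    intro j
    ext x
    simp only [mem_preimage, mem_singleton_iff, Finset.mem_univ, iInter_true, mem_iInter]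
    refine ⟨?_, fun h => ?_⟩
    · rintro rfl i
      split_ifs with h1 h2
      · exact hl x
      · exact hl' x i h2
      · trivial
    · have hj : x ∈ B j := by simpa using h j
      rcases lt_trichotomy (l x) j with h1 | h1 | h1
      · have := h (l x)
        rw [if_neg h1.ne, if_pos h1] at this
        exact absurd (hl x) this
      · exact h1
      · exact absurd hj (hl' x j h1)
  refine ⟨t.card, l, fun s => ?_, fun s => ?_, fun x y hxy => ?_⟩
  · rw [hfib]
    refine Finset.measurableSet_biInter _ fun i _ => ?_
    split_ifs
    · exact Metric.isOpen_thickening.measurableSet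
    · exact Metric.isOpen_thickening.measurableSet.compl
    · exact MeasurableSet.univ
  · rw [hfib]
    refine nullFrontier_biInter μ _ _ fun i _ => ?_
    split_ifs
    · exact hr0 _
    · rw [frontier_compl]
      exact hr0 _
    · simp
  · have h1 := hl x
    have h2 := hl y
    rw [← hxy] at h2
    simp only [hB, Metric.thickening_singleton, Metric.mem_ball] at h1 h2
    have h3 := (hr (e.symm (l x))).2
    linarith [dist_triangle_right x y (e.symm (l x) : X)]

/-- A discrete measure `σ` and the average `τ` of its first `N` images under `f`. -/
lemma exists_discrete [BorelSpace X] (f : X → X) (hf : Continuous f) (E : Finset X)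
    (p : X → ℝ) (hp : ∀ x, 0 ≤ p x) (hp1 : ∑ x ∈ E, p x = 1) (N : ℕ) (hN : 0 < N) :
    ∃ σ τ : Measure X, IsProbabilityMeasure σ ∧ IsProbabilityMeasure τ ∧
      (∀ A, MeasurableSet A → σ.real A = ∑ x ∈ E, p x * A.indicator 1 x) ∧
      (∀ A, MeasurableSet A →
        τ.real A = ∑ k ∈ Finset.range N, (1 / N : ℝ) * σ.real (f^[k] ⁻¹' A)) ∧
      ∀ g : X → ℝ, Continuous g → ∫ x, g x ∂τ = (1 / N) * ∑ x ∈ E, p x * birk f g N x := by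
  have hN' : (0 : ℝ) < N := by exact_mod_cast hN
  set σ : Measure X := ∑ x ∈ E, ENNReal.ofReal (p x) • Measure.dirac x with hσ
  have hσA : ∀ A, MeasurableSet A → σ A = ∑ x ∈ E, ENNReal.ofReal (p x) * A.indicator 1 x := by
    intro A hA
    simp [hσ, Measure.finsetSum_apply, Measure.dirac_apply' _ hA]
  have hσ1 : IsProbabilityMeasure σ := ⟨by
    rw [hσA _ MeasurableSet.univ]
    simp only [indicator_univ, Pi.one_apply, mul_one]
    rw [← ENNReal.ofReal_sum_of_nonneg fun x _ => hp x, hp1, ENNReal.ofReal_one]⟩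
  set τ : Measure X := ∑ k ∈ Finset.range N, ENNReal.ofReal (1 / N) • σ.map f^[k] with hτ
  have hτA : ∀ A, MeasurableSet A →
      τ A = ∑ k ∈ Finset.range N, ENNReal.ofReal (1 / N) * σ (f^[k] ⁻¹' A) := by
    intro A hA
    simp [hτ, Measure.finsetSum_apply, Measure.map_apply (hf.iterate _).measurable hA]
  have hτ1 : IsProbabilityMeasure τ := ⟨by
    rw [hτA _ MeasurableSet.univ]
    simp only [preimage_univ, measure_univ, mul_one, Finset.sum_const, Finset.card_range,
      nsmul_eq_mul]
    rw [← ENNReal.ofReal_natCast, ← ENNReal.ofReal_mul hN'.le]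
    simp [hN'.ne']⟩
  refine ⟨σ, τ, hσ1, hτ1, fun A hA => ?_, fun A hA => ?_, fun g hg => ?_⟩
  · rw [Measure.real, hσA A hA, ENNReal.toReal_sum]
    · refine Finset.sum_congr rfl fun x _ => ?_
      by_cases hx : x ∈ A <;> simp [hx, hp x]
    · intro x _
      by_cases hx : x ∈ A <;> simp [hx]
  · rw [Measure.real, hτA A hA, ENNReal.toReal_sum]
    · refine Finset.sum_congr rfl fun x _ => ?_
      rw [ENNReal.toReal_mul, ENNReal.toReal_ofReal (by positivity)]
      rfl
    · intro x _
      exact ENNReal.mul_ne_top ENNReal.ofReal_ne_top (measure_ne_top _ _)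
  · have hgm := hg.measurable.stronglyMeasurable
    have hmean : ∀ k, ∀ x ∈ E,
        Integrable (fun y => g (f^[k] y)) (ENNReal.ofReal (p x) • Measure.dirac x) := by
      intro k x _
      refine Integrable.smul_measure ?_ ENNReal.ofReal_ne_top
      exact integrable_dirac' (hg.comp (hf.iterate k)).measurable.stronglyMeasurable (by simp)
    have hσint : ∀ k, ∫ y, g (f^[k] y) ∂σ = ∑ x ∈ E, p x * g (f^[k] x) := by
      intro k
      rw [hσ, integral_finsetSum_measure (hmean k)]
      refine Finset.sum_congr rfl fun x _ => ?_
      rw [integral_smul_measure,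
        integral_dirac' (fun y => g (f^[k] y)) _
          (hg.comp (hf.iterate k)).measurable.stronglyMeasurable,
        ENNReal.toReal_ofReal (hp x), smul_eq_mul]
    have hσI : ∀ k, Integrable (fun y => g (f^[k] y)) σ := fun k => by
      rw [hσ]
      exact integrable_finsetSum_measure.2 (hmean k)
    rw [hτ, integral_finsetSum_measure]
    · simp only [integral_smul_measure, smul_eq_mul]
      rw [Finset.mul_sum]
      simp only [birk, Finset.mul_sum]
      rw [Finset.sum_comm]
      refine Finset.sum_congr rfl fun k _ => ?_
      rw [integral_map (hf.iterate k).measurable.aemeasurable hgm.aestronglyMeasurable, hσint,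
        ENNReal.toReal_ofReal (by positivity), Finset.mul_sum]
    · intro k _
      refine Integrable.smul_measure ?_ ENNReal.ofReal_ne_top
      exact (integrable_map_measure hgm.aestronglyMeasurable
        (hf.iterate k).measurable.aemeasurable).2 (hσI k)

/-- A labelling that is injective on the support of the Gibbs weights `exp (S x) / Z` has entropy
`log Z - ∑ p S`. -/
lemma Hlab_discrete (σ : Measure X) {S : Type*} [Fintype S] (g : X → S)
    (hg : ∀ s, MeasurableSet (g ⁻¹' {s})) (E : Finset X) (w : X → ℝ) (Z : ℝ)
    (hZ : Z = ∑ x ∈ E, Real.exp (w x)) (hZ0 : 0 < Z)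
    (hσ : ∀ A, MeasurableSet A → σ.real A = ∑ x ∈ E, Real.exp (w x) / Z * A.indicator 1 x)
    (hinj : ∀ x ∈ E, ∀ y ∈ E, g x = g y → x = y) :
    Real.log Z = Hlab σ g + ∑ x ∈ E, Real.exp (w x) / Z * w x := by
  classical
  have h1 : Hlab σ g = ∑ x ∈ E, Real.negMulLog (Real.exp (w x) / Z) := by
    unfold Hlab
    rw [← Finset.sum_subset (Finset.subset_univ (E.image g)), Finset.sum_image hinj]
    · refine Finset.sum_congr rfl fun x hx => ?_
      rw [hσ _ (hg _), Finset.sum_eq_single x]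
      · simp
      · intro y hy hyx
        have : g y ≠ g x := fun h => hyx (hinj y hy x hx h)
        simp [this]
      · exact fun h => absurd hx h
    · intro s _ hs
      rw [hσ _ (hg _), Finset.sum_eq_zero, Real.negMulLog_zero]
      intro x hx
      have : g x ≠ s := fun h => hs (Finset.mem_image.2 ⟨x, hx, h⟩)
      simp [this]
  have h2 : ∑ x ∈ E, Real.exp (w x) / Z = 1 := by
    rw [← Finset.sum_div, ← hZ, div_self hZ0.ne']
  rw [h1, ← Finset.sum_add_distrib]
  calc Real.log Z = ∑ x ∈ E, Real.exp (w x) / Z * Real.log Z := by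
        rw [← Finset.sum_mul, h2, one_mul]
    _ = _ := Finset.sum_congr rfl fun x _ => by
        rw [Real.negMulLog, Real.log_div (Real.exp_pos _).ne' hZ0.ne', Real.log_exp]
        ring

lemma continuous_integral_pm [CompactSpace X] [BorelSpace X] {g : X → ℝ} (hg : Continuous g) :
    Continuous fun μ : ProbabilityMeasure X => ∫ x, g x ∂(μ : Measure X) :=
  ProbabilityMeasure.continuous_integral_continuousMap (⟨g, hg⟩ : C(X, ℝ))

lemma measurePreserving_of_integral [CompactSpace X] [BorelSpace X] {f : X → X}
    (hf : Continuous f) (μ : Measure X) [IsProbabilityMeasure μ]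
    (h : ∀ g : X → ℝ, Continuous g → ∫ x, g (f x) ∂μ = ∫ x, g x ∂μ) :
    MeasurePreserving f μ μ := by
  refine ⟨hf.measurable, ?_⟩
  have := Measure.isProbabilityMeasure_map (μ := μ) hf.measurable.aemeasurable
  refine ext_of_forall_integral_eq_of_IsFiniteMeasure fun g => ?_
  rw [integral_map hf.measurable.aemeasurable g.continuous.measurable.aestronglyMeasurable]
  exact h g g.continuous

lemma birk_comp_sub (f : X → X) (g : X → ℝ) (n : ℕ) (x : X) :
    birk f (fun y => g (f y)) n x - birk f g n x = g (f^[n] x) - g x := by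
  induction n with
  | zero => simp [birk]
  | succ n ih =>
    unfold birk at *
    rw [Finset.sum_range_succ, Finset.sum_range_succ, Function.iterate_succ_apply']
    linarith

/-- The hypothesis that the entropies of `μ` along all labellings are bounded. -/
def EntBdd (f : X → X) (μ : Measure X) : Prop :=
  ∃ C : ℝ, ∀ (m : ℕ) (l : X → Fin m), (∀ s, MeasurableSet (l ⁻¹' {s})) →
      ∀ ε > 0, ∃ n : ℕ, Hlab μ (itin f l 0 (n + 1)) / (n + 1) ≤ C + ε

/-- Misiurewicz's construction: exponential growth of weighted separated sets produces an
invariant measure with at least that free energy, which inherits upper bounds on Birkhoff averages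
that hold on the separated sets. -/
lemma misiurewicz [CompactSpace X] [BorelSpace X] (f : X → X) (hf : Continuous f)
    (hbdd : ∀ μ : Measure X, IsProbabilityMeasure μ → MeasurePreserving f μ μ → EntBdd f μ)
    (δ : ℝ) (hδ : 0 < δ) (N : ℕ → ℕ) (hN0 : ∀ k, 0 < N k) (hN : Tendsto N atTop atTop)
    (E : ℕ → Finset X) (hE : ∀ k, (E k).Nonempty) (hsep : ∀ k, IsSep f (N k) δ (E k))
    (ψ : X → ℝ) (hψ : Continuous ψ) (c : ℝ)
    (hc : ∀ k, N k * c ≤ Real.log (∑ x ∈ E k, Real.exp (birk f ψ (N k) x))) :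
    ∃ μ : ProbabilityMeasure X, MeasurePreserving f (μ : Measure X) (μ : Measure X) ∧
      c ≤ kolSinai f μ + ∫ x, ψ x ∂(μ : Measure X) ∧
      ∀ g : X → ℝ, Continuous g → ∀ a : ℝ, (∀ k, ∀ x ∈ E k, birk f g (N k) x ≤ N k * a) →
        ∫ x, g x ∂(μ : Measure X) ≤ a := by
  set Z : ℕ → ℝ := fun k => ∑ x ∈ E k, Real.exp (birk f ψ (N k) x) with hZ
  have hZ0 : ∀ k, 0 < Z k := fun k => Finset.sum_pos (fun x _ => Real.exp_pos _) (hE k)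
  set p : ℕ → X → ℝ := fun k x => Real.exp (birk f ψ (N k) x) / Z k with hp
  have hp0 : ∀ k x, 0 ≤ p k x := fun k x => div_nonneg (Real.exp_pos _).le (hZ0 k).le
  have hp1 : ∀ k, ∑ x ∈ E k, p k x = 1 := fun k => by
    simp only [hp]
    rw [← Finset.sum_div, div_self (hZ0 k).ne']
  choose σ τ hσP hτP hσA hτA hτint using fun k =>
    exists_discrete f hf (E k) (p k) (hp0 k) (hp1 k) (N k) (hN0 k)
  set τ' : ℕ → ProbabilityMeasure X := fun k => ⟨τ k, hτP k⟩ with hτ'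
  set U : Ultrafilter ℕ := Filter.hyperfilter ℕ
  have hU : (U : Filter ℕ) ≤ atTop := Nat.hyperfilter_le_atTop
  obtain ⟨μ, -, hμ⟩ := isCompact_univ.ultrafilter_le_nhds (U.map τ') (by simp)
  have hμ' : Tendsto τ' U (𝓝 μ) := hμ
  have hmean : ∀ g : X → ℝ, Continuous g →
      Tendsto (fun k => ∫ x, g x ∂(τ k)) U (𝓝 (∫ x, g x ∂(μ : Measure X))) := fun g hg =>
    ((continuous_integral_pm hg).tendsto μ).comp hμ'
  have hNr : Tendsto (fun k => (N k : ℝ)) U atTop :=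
    (tendsto_natCast_atTop_atTop.comp hN).mono_left hU
  have hN0' : ∀ k, (0 : ℝ) < N k := fun k => by exact_mod_cast hN0 k
  have hinv : MeasurePreserving f (μ : Measure X) (μ : Measure X) := by
    refine measurePreserving_of_integral hf _ fun g hg => ?_
    obtain ⟨K, hK⟩ := isCompact_univ.exists_bound_of_continuousOn hg.continuousOn
    refine tendsto_nhds_unique (hmean _ (hg.comp hf)) ?_
    have h1 : Tendsto (fun k => ∫ x, g (f x) ∂(τ k) - ∫ x, g x ∂(τ k)) U (𝓝 0) := by
      have h2 : Tendsto (fun k => 2 * K / (N k : ℝ)) U (𝓝 0) := hNr.const_div_atTop _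
      refine squeeze_zero_norm (fun k => ?_) h2
      rw [hτint k (fun y => g (f y)) (hg.comp hf), hτint k _ hg, ← mul_sub,
        ← Finset.sum_sub_distrib]
      have h3 : ∀ x ∈ E k, ‖p k x * birk f (fun y => g (f y)) (N k) x - p k x * birk f g (N k) x‖
          ≤ p k x * (2 * K) := by
        intro x _
        have h4 : birk f (fun y => g (f y)) (N k) x - birk f g (N k) x = g (f^[N k] x) - g x :=
          birk_comp_sub f g (N k) x
        rw [← mul_sub, h4, norm_mul, Real.norm_of_nonneg (hp0 k x)]
        refine mul_le_mul_of_nonneg_left ?_ (hp0 k x)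
        calc _ ≤ ‖g (f^[N k] x)‖ + ‖g x‖ := norm_sub_le _ _
          _ ≤ 2 * K := by linarith [hK (f^[N k] x) (mem_univ _), hK x (mem_univ _)]
      have h5 := norm_sum_le_of_le _ h3
      rw [← Finset.sum_mul, hp1, one_mul] at h5
      rw [norm_mul, Real.norm_of_nonneg (by positivity)]
      calc _ ≤ 1 / (N k : ℝ) * (2 * K) := mul_le_mul_of_nonneg_left h5 (by positivity)
        _ = _ := by ring
    have h6 := h1.add (hmean g hg)
    simpa using h6
  refine ⟨μ, hinv, ?_, ?_⟩
  · obtain ⟨m, l, hlm, hlf, hld⟩ := exists_label_nullFrontier (μ : Measure X) δ hδ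
    obtain ⟨C, hC⟩ := hbdd μ inferInstance hinv
    suffices hq : ∀ n : ℕ, c - ∫ x, ψ x ∂(μ : Measure X) ≤
        Hlab (μ : Measure X) (itin f l 0 (n + 1)) / (n + 1) by
      linarith [le_kolSinai f μ C _ hC inferInstance m l hlm hq]
    intro n
    set q := n + 1 with hqdef
    have hfr : ∀ w, (μ : Measure X) (frontier (itin f l 0 q ⁻¹' {w})) = 0 := by
      intro w
      have e : itin f l 0 q ⁻¹' {w}
          = ⋂ i ∈ (Finset.univ : Finset (Fin q)), f^[0 + i] ⁻¹' (l ⁻¹' {w i}) := by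
        rw [itin_preimage]; simp
      rw [e]
      refine nullFrontier_biInter _ _ _ fun i _ => ?_
      refine measure_mono_null ((hf.iterate _).frontier_preimage_subset _) ?_
      rw [(hinv.iterate _).measure_preimage isClosed_frontier.measurableSet.nullMeasurableSet]
      exact hlf _
    have hH : Tendsto (fun k => Hlab (τ k) (itin f l 0 q)) U
        (𝓝 (Hlab (μ : Measure X) (itin f l 0 q))) := by
      unfold Hlab
      refine tendsto_finsetSum _ fun w _ => ?_
      refine (Real.continuous_negMulLog.tendsto _).comp ?_
      have h1 := ProbabilityMeasure.tendsto_measure_of_null_frontier_of_tendsto' hμ' (hfr w)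
      exact (ENNReal.tendsto_toReal (measure_ne_top _ _)).comp h1
    have hk : ∀ k, q * c ≤ 2 * q ^ 2 * m / N k + Hlab (τ k) (itin f l 0 q)
        + q * ∫ x, ψ x ∂(τ k) := by
      intro k
      have hinj : ∀ x ∈ E k, ∀ y ∈ E k, itin f l 0 (N k) x = itin f l 0 (N k) y → x = y := by
        intro x hx y hy hxy
        by_contra hne
        refine hsep k x hx y hy hne fun j hj => hld _ _ ?_
        simpa [itin] using congrFun hxy ⟨j, hj⟩
      have h1 := Hlab_discrete (σ k) (itin f l 0 (N k))
        (measurableSet_itin f hf.measurable l hlm 0 (N k)) (E k) (birk f ψ (N k)) (Z k) rfl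
        (hZ0 k) (hσA k) hinj
      have h2 := Hitin_average (σ k) (τ k) f hf.measurable l hlm q (N k) (hN0 k) (hτA k)
      rw [Fintype.card_fin] at h2
      have h3 := hτint k ψ hψ
      have h4 : ∑ x ∈ E k, p k x * birk f ψ (N k) x = N k * ∫ x, ψ x ∂(τ k) := by
        rw [h3]
        field_simp [(hN0' k).ne']
      have h5 : (N k : ℝ) * c ≤ Hlab (σ k) (itin f l 0 (N k)) + N k * ∫ x, ψ x ∂(τ k) := by
        rw [← h4]
        exact (hc k).trans h1.le
      have h6 : (N k : ℝ) * (q * c) ≤ N k * (2 * q ^ 2 * m / N k + Hlab (τ k) (itin f l 0 q)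
          + q * ∫ x, ψ x ∂(τ k)) := by
        have h7 : (N k : ℝ) * (2 * q ^ 2 * m / N k) = 2 * q ^ 2 * m := by
          field_simp [(hN0' k).ne']
        have h8 := mul_le_mul_of_nonneg_left h5 (Nat.cast_nonneg (α := ℝ) q)
        nlinarith
      exact le_of_mul_le_mul_left h6 (hN0' k)
    have hlim : Tendsto (fun k => 2 * q ^ 2 * m / N k + Hlab (τ k) (itin f l 0 q)
        + q * ∫ x, ψ x ∂(τ k)) U
        (𝓝 (0 + Hlab (μ : Measure X) (itin f l 0 q) + q * ∫ x, ψ x ∂(μ : Measure X))) :=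
      ((hNr.const_div_atTop _).add hH).add ((hmean ψ hψ).const_mul _)
    have h9 := ge_of_tendsto' hlim hk
    have hq0 : (0 : ℝ) < n + 1 := by positivity
    rw [le_div_iff₀ hq0]
    have hqc : (q : ℝ) = n + 1 := by simp [hqdef]
    rw [hqc] at h9
    linarith
  · intro g hg a ha
    refine le_of_tendsto' (hmean g hg) fun k => ?_
    rw [hτint k g hg]
    calc _ ≤ (1 / (N k : ℝ)) * ∑ x ∈ E k, p k x * (N k * a) :=
          mul_le_mul_of_nonneg_left (Finset.sum_le_sum fun x hx =>
            mul_le_mul_of_nonneg_left (ha k x hx) (hp0 k x)) (by positivity)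
      _ = a := by
          rw [← Finset.sum_mul, hp1, one_mul]
          field_simp [(hN0' k).ne']

end Misiurewicz

/-! ### Bowen covers as codes -/

section Coding

/-- The sum of `F` over all words of length `n`. -/
def sumW {m : ℕ} : ℕ → (List (Fin m) → ℝ) → ℝ
  | 0, F => F []
  | n + 1, F => ∑ j, sumW n fun w => F (j :: w)

/-- The word of length `n` read along the orbit of `y`. -/
def word {m : ℕ} (f : X → X) (l : X → Fin m) : ℕ → X → List (Fin m)
  | 0, _ => []
  | n + 1, y => l y :: word f l n (f y)

/-- The weight of a word whose first `a` letters are emitted along the orbit of `x` with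
probabilities `e`, the rest being weighted by `R`. -/
def jump {m : ℕ} (f : X → X) (e : X → Fin m → ℝ) : ℕ → X → (List (Fin m) → ℝ) →
    List (Fin m) → ℝ
  | 0, _, R, w => R w
  | _ + 1, _, _, [] => 0
  | a + 1, x, R, j :: w => e x j * jump f e a (f x) R w

/-- The weight of a word that starts with a uniformly chosen letter. -/
def skip {m : ℕ} (R : List (Fin m) → ℝ) : List (Fin m) → ℝ
  | [] => 0
  | _ :: w => 1 / (2 * m) * R w

/-- The weight of the empty word. -/
def emptyWt {m : ℕ} : List (Fin m) → ℝ
  | [] => 1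
  | _ :: _ => 0

/-- The sub-probability weight on words of a random concatenation of at most `N` pieces: a piece
either follows the orbit of the centre of a ball in `F`, chosen with weight `ω`, or is a single
uniform letter. -/
def codeQ {m : ℕ} (f : X → X) (e : X → Fin m → ℝ) (F : Finset (X × ℕ)) (ω : X × ℕ → ℝ) :
    ℕ → List (Fin m) → ℝ
  | 0 => emptyWt
  | N + 1 => fun w => emptyWt w + ∑ p ∈ F, ω p * jump f e p.2 p.1 (codeQ f e F ω N) w
      + skip (codeQ f e F ω N) w

lemma sumW_eq {m : ℕ} (n : ℕ) (F : List (Fin m) → ℝ) :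
    sumW n F = ∑ w : Fin n → Fin m, F (List.ofFn w) := by
  induction n generalizing F with
  | zero => simp [sumW]
  | succ n ih =>
    rw [sumW, ← (Fin.consEquiv fun _ => Fin m).sum_comp, Fintype.sum_prod_type]
    refine Finset.sum_congr rfl fun j _ => ?_
    rw [ih]
    refine Finset.sum_congr rfl fun w _ => ?_
    simp [Fin.consEquiv, List.ofFn_succ]

lemma word_eq {m : ℕ} (f : X → X) (l : X → Fin m) (n : ℕ) (y : X) :
    word f l n y = List.ofFn (itin f l 0 n y) := by
  induction n generalizing y with
  | zero => simp [word]
  | succ n ih =>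
    rw [word, ih, List.ofFn_succ]
    congr 2

lemma sumW_add {m : ℕ} (n : ℕ) (F G : List (Fin m) → ℝ) :
    sumW n (fun w => F w + G w) = sumW n F + sumW n G := by
  simp [sumW_eq, Finset.sum_add_distrib]

lemma sumW_mul {m : ℕ} (n : ℕ) (c : ℝ) (F : List (Fin m) → ℝ) :
    sumW n (fun w => c * F w) = c * sumW n F := by
  simp [sumW_eq, Finset.mul_sum]

lemma sumW_sum {m : ℕ} (n : ℕ) {ι : Type*} (s : Finset ι) (F : ι → List (Fin m) → ℝ) :
    sumW n (fun w => ∑ i ∈ s, F i w) = ∑ i ∈ s, sumW n (F i) := by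
  simp only [sumW_eq]
  exact Finset.sum_comm

lemma jump_nonneg {m : ℕ} (f : X → X) (e : X → Fin m → ℝ) (he : ∀ x j, 0 ≤ e x j)
    (R : List (Fin m) → ℝ) (hR : ∀ w, 0 ≤ R w) (a : ℕ) (x : X) (w : List (Fin m)) :
    0 ≤ jump f e a x R w := by
  induction a generalizing x w with
  | zero => exact hR w
  | succ a ih =>
    cases w with
    | nil => simp [jump]
    | cons j w => exact mul_nonneg (he _ _) (ih _ _)

lemma sumW_jump {m : ℕ} (f : X → X) (e : X → Fin m → ℝ) (he : ∀ x j, 0 ≤ e x j)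
    (he1 : ∀ x, ∑ j, e x j ≤ 1) (R : List (Fin m) → ℝ) (hR : ∀ n, sumW n R ≤ 1)
    (a n : ℕ) (x : X) : sumW n (jump f e a x R) ≤ 1 := by
  induction a generalizing x n with
  | zero => exact hR n
  | succ a ih =>
    cases n with
    | zero => simp [sumW, jump]
    | succ n =>
      simp only [sumW, jump, sumW_mul]
      calc _ ≤ ∑ j, e x j * 1 :=
            Finset.sum_le_sum fun j _ => mul_le_mul_of_nonneg_left (ih _ _) (he _ _)
        _ ≤ 1 := by simpa using he1 x

lemma jump_word {m : ℕ} (f : X → X) (e : X → Fin m → ℝ) (l : X → Fin m)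
    (R : List (Fin m) → ℝ) (a n : ℕ) (x y : X) :
    jump f e a x R (word f l (a + n) y)
      = (∏ i ∈ Finset.range a, e (f^[i] x) (l (f^[i] y))) * R (word f l n (f^[a] y)) := by
  induction a generalizing x y with
  | zero => simp [jump]
  | succ a ih =>
    rw [show a + 1 + n = (a + n) + 1 by ring, word, jump, ih, Finset.prod_range_succ']
    simp only [Function.iterate_succ_apply, Function.iterate_zero, id]
    ring

lemma codeQ_nonneg {m : ℕ} (f : X → X) (e : X → Fin m → ℝ) (F : Finset (X × ℕ))
    (ω : X × ℕ → ℝ) (he : ∀ x j, 0 ≤ e x j) (hω : ∀ p, 0 ≤ ω p) (N : ℕ) (w : List (Fin m)) :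
    0 ≤ codeQ f e F ω N w := by
  have h0 : ∀ w : List (Fin m), 0 ≤ emptyWt w := by rintro (_ | _) <;> simp [emptyWt]
  induction N generalizing w with
  | zero => exact h0 w
  | succ N ih =>
    refine add_nonneg (add_nonneg (h0 w) (Finset.sum_nonneg fun p _ =>
      mul_nonneg (hω p) (jump_nonneg f e he _ ih _ _ _))) ?_
    cases w with
    | nil => simp [skip]
    | cons j w => exact mul_nonneg (by positivity) (ih w)

lemma sumW_codeQ {m : ℕ} (hm : 0 < m) (f : X → X) (e : X → Fin m → ℝ) (F : Finset (X × ℕ))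
    (ω : X × ℕ → ℝ) (he : ∀ x j, 0 ≤ e x j) (he1 : ∀ x, ∑ j, e x j ≤ 1) (hω : ∀ p, 0 ≤ ω p)
    (hF : ∀ p ∈ F, 1 ≤ p.2) (hω1 : ∑ p ∈ F, ω p ≤ 1 / 2) (N n : ℕ) :
    sumW n (codeQ f e F ω N) ≤ 1 := by
  have hm' : (0 : ℝ) < m := by exact_mod_cast hm
  have h0 : ∀ n, sumW n (emptyWt : List (Fin m) → ℝ) ≤ 1 := by
    rintro (_ | n) <;> simp [sumW, emptyWt, sumW_eq]
  induction N generalizing n with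
  | zero => exact h0 n
  | succ N ih =>
    cases n with
    | zero =>
      simp only [sumW, codeQ, emptyWt, skip, add_zero]
      rw [Finset.sum_eq_zero]
      · simp
      · intro p hp
        obtain ⟨a, ha⟩ := Nat.exists_eq_add_of_le' (hF p hp)
        simp [ha, jump]
    | succ n =>
      simp only [codeQ]
      rw [sumW_add, sumW_add, sumW_sum]
      simp only [sumW_mul]
      have h1 : sumW (n + 1) (emptyWt : List (Fin m) → ℝ) = 0 := by simp [sumW, emptyWt, sumW_eq]
      have h2 : ∑ p ∈ F, ω p * sumW (n + 1) (jump f e p.2 p.1 (codeQ f e F ω N)) ≤ 1 / 2 := by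
        refine le_trans (Finset.sum_le_sum fun p _ => ?_) hω1
        exact mul_le_of_le_one_right (hω p) (sumW_jump f e he he1 _ ih _ _ _)
      have h3 : sumW (n + 1) (skip (codeQ f e F ω N)) ≤ 1 / 2 := by
        simp only [sumW, skip, sumW_mul]
        rw [Finset.sum_const, Finset.card_univ, Fintype.card_fin, nsmul_eq_mul]
        have h4 : (m : ℝ) * (1 / (2 * m) * sumW n (codeQ f e F ω N))
            = 1 / 2 * sumW n (codeQ f e F ω N) := by field_simp
        rw [h4]
        linarith [ih n]
      linarith

/-- Words read along orbits carry a weight that decays at most like `exp (-S_n g)`. -/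
lemma codeQ_word {m : ℕ} (hm : 0 < m) (f : X → X) (e : X → Fin m → ℝ) (F : Finset (X × ℕ))
    (ω : X × ℕ → ℝ) (he : ∀ x j, 0 ≤ e x j) (hω : ∀ p, 0 ≤ ω p)
    (hF : ∀ p ∈ F, 1 ≤ p.2) (l : X → Fin m) (g : X → ℝ) (G C : ℝ) (L : ℕ)
    (hL : ∀ p ∈ F, p.2 ≤ L) (hg : ∀ y, -G ≤ g y) (hC : Real.log (2 * m) + G ≤ C) (hC0 : 0 ≤ C)
    (hV : ∀ y, (∃ p ∈ F, Real.exp (-birk f g p.2 y)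
        ≤ ω p * ∏ i ∈ Finset.range p.2, e (f^[i] p.1) (l (f^[i] y)))
        ∨ Real.log (2 * m) ≤ g y) (N n : ℕ) (hnN : n ≤ N) (y : X) :
    Real.exp (-(L * C) - birk f g n y) ≤ codeQ f e F ω N (word f l n y) := by
  have hm' : (0 : ℝ) < 2 * m := by
    have : (0 : ℝ) < m := by exact_mod_cast hm
    positivity
  have hnn := codeQ_nonneg f e F ω he hω
  have hskip : ∀ N w j, 1 / (2 * m) * codeQ f e F ω N w ≤ codeQ f e F ω (N + 1) (j :: w) := by
    intro N w j
    have : 0 ≤ ∑ p ∈ F, ω p * jump f e p.2 p.1 (codeQ f e F ω N) (j :: w) :=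
      Finset.sum_nonneg fun p _ => mul_nonneg (hω p) (jump_nonneg f e he _ (hnn N) _ _ _)
    simp only [codeQ, skip, emptyWt]
    linarith
  have hnil : ∀ N, 1 ≤ codeQ f e F ω N [] := by
    rintro (_ | N)
    · simp [codeQ, emptyWt]
    · have : 0 ≤ ∑ p ∈ F, ω p * jump f e p.2 p.1 (codeQ f e F ω N) [] :=
        Finset.sum_nonneg fun p _ => mul_nonneg (hω p) (jump_nonneg f e he _ (hnn N) _ _ _)
      simp only [codeQ, skip, emptyWt]
      linarith
  have hm2 : 1 / (2 * m : ℝ) = Real.exp (-Real.log (2 * m)) := by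
    rw [Real.exp_neg, Real.exp_log hm', one_div]
  have hshort : ∀ n N : ℕ, n ≤ N → ∀ y,
      Real.exp (-(n * Real.log (2 * m))) ≤ codeQ f e F ω N (word f l n y) := by
    intro n
    induction n with
    | zero => intro N _ y; simpa [word] using hnil N
    | succ n ih =>
      intro N hN y
      obtain ⟨N, rfl⟩ := Nat.exists_eq_add_of_le' (show 1 ≤ N by omega)
      refine le_trans ?_ (hskip N _ _)
      rw [hm2]
      refine le_trans (le_of_eq ?_) (mul_le_mul_of_nonneg_left (ih N (by omega) (f y))
        (Real.exp_pos _).le)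
      rw [← Real.exp_add]
      congr 1
      push_cast
      ring
  have hglow : ∀ n y, -(n * G) ≤ birk f g n y := by
    intro n y
    have : ∑ _k ∈ Finset.range n, (-G) ≤ birk f g n y := Finset.sum_le_sum fun k _ => hg _
    simpa using this
  induction N generalizing n y with
  | zero =>
    obtain rfl : n = 0 := by omega
    simp only [codeQ, word, emptyWt, birk]
    rw [Real.exp_le_one_iff]
    have : 0 ≤ (L : ℝ) * C := by positivity
    simp only [Finset.range_zero, Finset.sum_empty]
    linarith
  | succ N ih =>
    rcases Nat.eq_zero_or_pos n with rfl | hn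
    · refine le_trans ?_ (hnil _)
      rw [Real.exp_le_one_iff]
      have : 0 ≤ (L : ℝ) * C := by positivity
      simp only [birk, Finset.range_zero, Finset.sum_empty]
      linarith
    have hsplit : ∀ a b y, birk f g (a + b) y = birk f g a y + birk f g b (f^[a] y) := by
      intro a b y
      unfold birk
      rw [Finset.sum_range_add]
      simp only [← Function.iterate_add_apply]
      congr 1
      exact Finset.sum_congr rfl fun k _ => by rw [add_comm]
    rcases hV y with ⟨p, hp, hpy⟩ | hy
    · rcases le_or_gt p.2 n with hpn | hpn
      · obtain ⟨b, rfl⟩ := Nat.exists_eq_add_of_le hpn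
        have hb : b ≤ N := by have := hF p hp; omega
        have h1 : ω p * jump f e p.2 p.1 (codeQ f e F ω N) (word f l (p.2 + b) y)
            ≤ codeQ f e F ω (N + 1) (word f l (p.2 + b) y) := by
          have h2 := Finset.single_le_sum (f := fun r : X × ℕ =>
            ω r * jump f e r.2 r.1 (codeQ f e F ω N) (word f l (p.2 + b) y))
            (fun r _ => mul_nonneg (hω r) (jump_nonneg f e he _ (hnn N) _ _ _)) hp
          have h3 : 0 ≤ skip (codeQ f e F ω N) (word f l (p.2 + b) y) := by
            rcases word f l (p.2 + b) y with _ | ⟨j, w⟩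
            · simp [skip]
            · exact mul_nonneg (by positivity) (hnn _ _)
          have h4 : ∀ w : List (Fin m), 0 ≤ emptyWt w := by rintro (_ | _) <;> simp [emptyWt]
          have h5 := h4 (word f l (p.2 + b) y)
          have h6 : codeQ f e F ω (N + 1) (word f l (p.2 + b) y)
            = emptyWt (word f l (p.2 + b) y) + ∑ p' ∈ F, ω p' * jump f e p'.2 p'.1
              (codeQ f e F ω N) (word f l (p.2 + b) y)
              + skip (codeQ f e F ω N) (word f l (p.2 + b) y) := rfl
          rw [h6]
          linarith
        refine le_trans ?_ h1
        rw [jump_word, ← mul_assoc, hsplit]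
        refine le_trans (le_of_eq ?_) (mul_le_mul hpy (ih b hb (f^[p.2] y)) (Real.exp_pos _).le
          ((Real.exp_pos _).le.trans hpy))
        rw [← Real.exp_add]
        congr 1
        ring
      · refine le_trans ?_ (hshort n (N + 1) hnN y)
        rw [Real.exp_le_exp]
        have h1 := hglow n y
        have h2 : (n : ℝ) ≤ L := by exact_mod_cast hpn.le.trans (hL p hp)
        have h3 : (n : ℝ) * C ≤ L * C := mul_le_mul_of_nonneg_right h2 hC0
        have h4 : (n : ℝ) * (Real.log (2 * m) + G) ≤ n * C :=
          mul_le_mul_of_nonneg_left hC (Nat.cast_nonneg n)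
        linarith
    · obtain ⟨b, rfl⟩ := Nat.exists_eq_add_of_le hn
      have h1 := ih b (by omega) (f y)
      rw [show 1 + b = b + 1 by ring, word]
      refine le_trans ?_ (hskip N _ _)
      rw [hm2]
      refine le_trans ?_ (mul_le_mul_of_nonneg_left h1 (Real.exp_pos _).le)
      rw [← Real.exp_add, Real.exp_le_exp, add_comm b 1, hsplit]
      have h2 : birk f g 1 y = g y := by simp [birk]
      simp only [Function.iterate_one]
      linarith

end Coding

/-! ### Entropy is bounded by pressure -/

section CodingBound

variable [MeasurableSpace X]

lemma isOpen_bowenBall {f : X → X} (hf : Continuous f) (x : X) (n : ℕ) (δ : ℝ) :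
    IsOpen (bowenBall f x n δ) := by
  have : bowenBall f x n δ = ⋂ k ∈ Finset.range n, {y | dist (f^[k] x) (f^[k] y) < δ} := by
    ext y; simp [bowenBall]
  rw [this]
  exact isOpen_biInter_finset fun k _ =>
    isOpen_lt (continuous_const.dist (hf.iterate k)) continuous_const

lemma exists_cover_of_mP {f : X → X} {Z : Set X} {s : ℝ} {ψ : X → ℝ} {δ : ℝ}
    (h : mP f Z s ψ δ = 0) (N : ℕ) {ε : ℝ≥0∞} (hε : 0 < ε) :
    ∃ E, IsBowenCover f Z N δ E ∧
      coverSum E (fun p => -(p.2 : ℝ) * s + birk f ψ p.2 p.1) < ε := by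
  have h1 : (⨅ (E : Set (X × ℕ)) (_ : IsBowenCover f Z N δ E),
    coverSum E fun p => -(p.2 : ℝ) * s + birk f ψ p.2 p.1) < ε :=
    lt_of_le_of_lt ((le_iSup (fun N : ℕ => ⨅ (E : Set (X × ℕ)) (_ : IsBowenCover f Z N δ E),
    coverSum E fun p => -(p.2 : ℝ) * s + birk f ψ p.2 p.1) N).trans h.le) hε
  simpa only [iInf_lt_iff, exists_prop] using h1

lemma integrable_birk {f : X → X} {μ : Measure X} (hμ : MeasurePreserving f μ μ) {g : X → ℝ}
    (hg : Integrable g μ) (n : ℕ) :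
    Integrable (birk f g n) μ ∧ ∫ x, birk f g n x ∂μ = n * ∫ x, g x ∂μ := by
  have h1 : ∀ k, Integrable (fun x => g (f^[k] x)) μ := fun k =>
    (hμ.iterate k).integrable_comp_of_integrable hg
  have h2 : ∀ k, ∫ x, g (f^[k] x) ∂μ = ∫ x, g x ∂μ := fun k => by
    have h3 := (hμ.iterate k).map_eq
    have h4 : AEStronglyMeasurable g (μ.map f^[k]) := by rw [h3]; exact hg.aestronglyMeasurable
    rw [← integral_map (hμ.iterate k).measurable.aemeasurable h4, h3]
  refine ⟨integrable_finsetSum _ fun k _ => h1 k, ?_⟩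
  unfold birk
  rw [integral_finsetSum _ fun k _ => h1 k]
  simp [h2]

/-- A sub-probability weight on labels, bounded below by `exp (-u)`, bounds the entropy by `∫ u`. -/
lemma Hlab_le_integral (μ : Measure X) [IsProbabilityMeasure μ] {S : Type*} [Fintype S]
    (h : X → S) (hh : ∀ s, MeasurableSet (h ⁻¹' {s})) (q : S → ℝ) (hq : ∀ s, 0 ≤ q s)
    (hq1 : ∑ s, q s ≤ 1) (u : X → ℝ) (hu : Integrable u μ)
    (hqu : ∀ y, Real.exp (-u y) ≤ q (h y)) : Hlab μ h ≤ ∫ y, u y ∂μ := by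
  have hp1 : ∑ s, μ.real (h ⁻¹' {s}) = 1 := by
    have := sum_measureReal_fiber μ h hh univ MeasurableSet.univ
    simpa using this
  refine (gibbs_le _ q (fun s => measureReal_nonneg) hq (by rw [hp1]; exact hq1) ?_).trans ?_
  · intro s hs
    obtain ⟨y, hy⟩ : (h ⁻¹' {s}).Nonempty := by
      rw [nonempty_iff_ne_empty]
      rintro h0
      simp [h0] at hs
    have hys : h y = s := hy
    exact hys ▸ (Real.exp_pos _).trans_le (hqu y)
  · have hU : (⋃ s, h ⁻¹' {s}) = univ := by ext; simp
    rw [← setIntegral_univ, ← hU, integral_iUnion_fintype hh]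
    · refine Finset.sum_le_sum fun s _ => ?_
      rw [← smul_eq_mul, ← setIntegral_const]
      refine setIntegral_mono_on (integrable_const _).integrableOn hu.integrableOn (hh s) ?_
      intro y hy
      have hys : h y = s := hy
      have h1 := Real.log_le_log (Real.exp_pos _) (hqu y)
      rw [Real.log_exp, hys] at h1
      linarith
    · intro i j hij
      exact Disjoint.preimage _ (by simpa using hij)
    · exact fun s => hu.integrableOn

/-- Up to small measure, the label of a point can be read off from any nearby point. -/
lemma exists_coding_symbols [CompactSpace X] [BorelSpace X] (μ : Measure X)
    [IsProbabilityMeasure μ] {m : ℕ} (l : X → Fin m) (hl : ∀ s, MeasurableSet (l ⁻¹' {s}))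
    (η : ℝ) (hη : 0 < η) :
    ∃ good : Set X, MeasurableSet good ∧ μ.real goodᶜ ≤ η ∧
      ∃ (δ : ℝ) (γ : X → Fin m), 0 < δ ∧ ∀ z y, dist z y < δ → y ∈ good → γ z = l y := by
  classical
  rcases Nat.eq_zero_or_pos m with rfl | hm
  · refine ⟨univ, MeasurableSet.univ, by simpa using hη.le, 1, l, one_pos, fun z => (l z).elim0⟩
  have hm' : (0 : ℝ) < m := by exact_mod_cast hm
  have hε : ENNReal.ofReal (η / m) ≠ 0 := by
    simpa using div_pos hη hm'
  choose K hKl hKc hKμ using fun j =>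
    (hl j).exists_isClosed_sdiff_lt (μ := μ) (measure_ne_top _ _) hε
  have hdis : ∀ᶠ δ in 𝓝[>] (0 : ℝ), ∀ i j, i ≠ j →
      Disjoint (Metric.thickening δ (K i)) (Metric.thickening δ (K j)) := by
    refine eventually_all.2 fun i => eventually_all.2 fun j => ?_
    by_cases hij : i = j
    · simp [hij]
    have hd : Disjoint (K i) (K j) := by
      refine Set.disjoint_left.2 fun x hx hy => hij ?_
      rw [← show l x = i from hKl i hx, ← show l x = j from hKl j hy]
    obtain ⟨δ, hδ, hd'⟩ := hd.exists_thickenings (hKc i).isCompact (hKc j)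
    filter_upwards [Ioo_mem_nhdsGT hδ] with δ' hδ' _
    exact hd'.mono (Metric.thickening_mono hδ'.2.le _) (Metric.thickening_mono hδ'.2.le _)
  obtain ⟨δ, hδ, hδ0⟩ := (hdis.and self_mem_nhdsWithin).exists
  refine ⟨⋃ j, K j, MeasurableSet.iUnion fun j => (hKc j).measurableSet, ?_, δ,
    fun z => if h : ∃ j, z ∈ Metric.thickening δ (K j) then h.choose else l z, hδ0, ?_⟩
  · have h1 : (⋃ j, K j)ᶜ ⊆ ⋃ j, (l ⁻¹' {j} \ K j) := by
      intro x hx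
      refine mem_iUnion.2 ⟨l x, rfl, fun h => hx (mem_iUnion.2 ⟨_, h⟩)⟩
    calc μ.real (⋃ j, K j)ᶜ ≤ μ.real (⋃ j, (l ⁻¹' {j} \ K j)) := measureReal_mono h1
      _ ≤ ∑ j, μ.real (l ⁻¹' {j} \ K j) := measureReal_iUnion_fintype_le _
      _ ≤ ∑ _j : Fin m, η / m := Finset.sum_le_sum fun j _ =>
          ENNReal.toReal_le_of_le_ofReal (div_pos hη hm').le (hKμ j).le
      _ = η := by
          rw [Finset.sum_const, Finset.card_univ, Fintype.card_fin, nsmul_eq_mul]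
          field_simp
  · intro z y hzy hy
    obtain ⟨j, hj⟩ := mem_iUnion.1 hy
    have hz : z ∈ Metric.thickening δ (K j) := Metric.mem_thickening_iff.2 ⟨y, hj, hzy⟩
    have hex : ∃ j, z ∈ Metric.thickening δ (K j) := ⟨j, hz⟩
    simp only [dif_pos hex]
    rw [show l y = j from hKl j hj]
    by_contra hne
    exact Set.disjoint_left.1 (hδ _ _ hne) hex.choose_spec hz

/-- A measure-one set with Bowen covers of small weight at all scales bounds the entropy of every
labelling: the centres of the covering balls serve as a code for the itineraries. -/
lemma coding_bound [CompactSpace X] [BorelSpace X] (f : X → X) (hf : Continuous f)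
    (μ : Measure X) [IsProbabilityMeasure μ] (hμ : MeasurePreserving f μ μ) (Z : Set X)
    (hZ : μ Z = 1) (ψ : X → ℝ) (hψ : Continuous ψ) (s : ℝ)
    (h : ∀ δ > 0, ∃ s' ≤ s, mP f Z s' ψ δ = 0) (m : ℕ) (l : X → Fin m)
    (hl : ∀ s, MeasurableSet (l ⁻¹' {s})) (ε : ℝ) (hε : 0 < ε) :
    ∃ n : ℕ, Hlab μ (itin f l 0 (n + 1)) / (n + 1) ≤ s - ∫ x, ψ x ∂μ + ε := by
  classical
  have hX : Nonempty X := by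
    by_contra hX
    rw [not_nonempty_iff] at hX
    have := hZ
    simp [Set.eq_empty_of_isEmpty Z] at this
  obtain ⟨x0⟩ := hX
  have hm : 0 < m := (l x0).pos
  have hm' : (1 : ℝ) ≤ m := by exact_mod_cast hm
  have hlog : 0 ≤ Real.log (2 * m) := Real.log_nonneg (by linarith)
  obtain ⟨K, hK⟩ := isCompact_univ.exists_bound_of_continuousOn hψ.continuousOn
  have hK0 : 0 ≤ K := (norm_nonneg _).trans (hK x0 (mem_univ _))
  have hψi : Integrable ψ μ :=
    Integrable.of_bound hψ.measurable.aestronglyMeasurable K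
      (ae_of_all _ fun x => hK x (mem_univ x))
  set η' := 1 - Real.exp (-(ε / 8)) with hη'
  have hη1 : Real.exp (-(ε / 8)) < 1 := by rw [Real.exp_lt_one_iff]; linarith
  have hη0 : 0 < η' := by linarith
  have hη1' : η' < 1 := by have := Real.exp_pos (-(ε / 8)); linarith
  set a := Real.log (m / η') with ha
  have ha0 : 0 ≤ a := Real.log_nonneg ((one_le_div hη0).2 (by linarith))
  obtain ⟨good, hgood, hgoodμ, δ₁, γ, hδ₁, hγ⟩ :=
    exists_coding_symbols μ l hl (ε / (8 * (a + 1))) (by positivity)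
  obtain ⟨δ₂, hδ₂, hδ₂'⟩ := Metric.uniformContinuous_iff.1
    (CompactSpace.uniformContinuous_of_continuous hψ) (ε / 8) (by positivity)
  set δ := min δ₁ δ₂ with hδ
  obtain ⟨s', hs', hmP⟩ := h δ (lt_min hδ₁ hδ₂)
  obtain ⟨E, ⟨hEc, hE1, hEZ⟩, hEs⟩ := exists_cover_of_mP hmP 1
    (show (0 : ℝ≥0∞) < ENNReal.ofReal (1 / 2) by simp)
  set G := |s'| + K with hG
  have hG0 : 0 ≤ G := by positivity
  set C := Real.log (2 * m) + G with hC
  have hC0 : 0 ≤ C := by positivity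
  set e : X → Fin m → ℝ := fun z j => (1 - η') * (if j = γ z then 1 else 0) + η' / m with he
  have he0 : ∀ z j, 0 ≤ e z j := fun z j => by
    have : 0 ≤ 1 - η' := by linarith
    simp only [he]; split_ifs <;> positivity
  have he1 : ∀ z, ∑ j, e z j ≤ 1 := fun z => by
    simp only [he]
    rw [Finset.sum_add_distrib, ← Finset.mul_sum]
    simp only [Finset.sum_ite_eq', Finset.mem_univ, if_true, Finset.sum_const, Finset.card_univ,
      Fintype.card_fin, nsmul_eq_mul]
    have : (m : ℝ) * (η' / m) = η' := by field_simp
    linarith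
  set ω : X × ℕ → ℝ := fun p => Real.exp (-(p.2 : ℝ) * s' + birk f ψ p.2 p.1) with hω
  obtain ⟨F, hF1, hFs, hFV⟩ : ∃ F : Finset (X × ℕ), (∀ p ∈ F, 1 ≤ p.2) ∧
      ∑ p ∈ F, ω p ≤ 1 / 2 ∧
      μ.real (⋃ p ∈ F, bowenBall f p.1 p.2 δ)ᶜ ≤ ε / (8 * (C + 1)) := by
    have := hEc.to_subtype
    set B : Finset E → Set X := fun F => ⋃ p ∈ F, bowenBall f (p : X × ℕ).1 (p : X × ℕ).2 δ
      with hB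
    have hBd : Directed (· ⊆ ·) B := by
      refine Monotone.directed_le fun F F' hFF => ?_
      exact biUnion_subset_biUnion_left hFF
    have hBo : ∀ F, IsOpen (B F) := fun F =>
      isOpen_biUnion fun p _ => isOpen_bowenBall hf _ _ _
    have hBU : Z ⊆ ⋃ F, B F := by
      intro z hz
      obtain ⟨p, hp, hzp⟩ := mem_iUnion₂.1 (hEZ hz)
      exact mem_iUnion.2 ⟨{⟨p, hp⟩}, by simpa [hB] using ⟨hp, hzp⟩⟩
    have h1 : (1 : ℝ≥0∞) ≤ ⨆ F, μ (B F) := by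
      rw [← hBd.measure_iUnion, ← hZ]
      exact measure_mono hBU
    have hpos : 0 < ε / (8 * (C + 1)) := by positivity
    have h2 : (1 : ℝ≥0∞) - ENNReal.ofReal (ε / (8 * (C + 1))) < ⨆ F, μ (B F) :=
      lt_of_lt_of_le (ENNReal.sub_lt_self ENNReal.one_ne_top one_ne_zero (by simpa using hpos)) h1
    obtain ⟨F, hF⟩ := lt_iSup_iff.1 h2
    refine ⟨F.map (Function.Embedding.subtype _), ?_, ?_, ?_⟩
    · intro p hp
      obtain ⟨p', -, rfl⟩ := Finset.mem_map.1 hp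
      exact (hE1 _ p'.2).2
    · rw [Finset.sum_map]
      have h3 : ∑ p ∈ F, ENNReal.ofReal (ω p) ≤ ENNReal.ofReal (1 / 2) :=
        (ENNReal.sum_le_tsum F).trans hEs.le
      rw [← ENNReal.ofReal_sum_of_nonneg fun p _ => (Real.exp_pos _).le] at h3
      exact (ENNReal.ofReal_le_ofReal_iff (by norm_num)).1 h3
    · have h4 : (⋃ p ∈ F.map (Function.Embedding.subtype _), bowenBall f p.1 p.2 δ) = B F := by
        ext y
        simp [hB]
      rw [h4, measureReal_def, prob_compl_eq_one_sub (hBo F).measurableSet]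
      refine ENNReal.toReal_le_of_le_ofReal hpos.le ?_
      exact tsub_le_iff_tsub_le.1 hF.le
  set V := ⋃ p ∈ F, bowenBall f p.1 p.2 δ with hV
  have hVm : MeasurableSet V :=
    (isOpen_biUnion fun p _ => isOpen_bowenBall hf _ _ _).measurableSet
  set g : X → ℝ := fun y => (s' + ε / 8 + ε / 8) - ψ y + goodᶜ.indicator (fun _ => a) y
    + Vᶜ.indicator (fun _ => C) y with hg
  have hgi : Integrable g μ :=
    (((integrable_const _).sub hψi).add ((integrable_const _).indicator hgood.compl)).add
      ((integrable_const _).indicator hVm.compl)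
  have hgint : ∫ y, g y ∂μ = (s' + ε / 8 + ε / 8) - ∫ y, ψ y ∂μ + μ.real goodᶜ * a
      + μ.real Vᶜ * C := by
    simp only [hg]
    rw [integral_add, integral_add, integral_sub (integrable_const _) hψi,
      integral_indicator_const _ hgood.compl, integral_indicator_const _ hVm.compl]
    · simp
    · exact (integrable_const _).sub hψi
    · exact (integrable_const _).indicator hgood.compl
    · exact ((integrable_const _).sub hψi).add ((integrable_const _).indicator hgood.compl)
    · exact (integrable_const _).indicator hVm.compl
  have hind0 : ∀ y, 0 ≤ goodᶜ.indicator (fun _ => a) y := fun y =>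
    indicator_nonneg (fun _ _ => ha0) y
  have hind1 : ∀ y, 0 ≤ Vᶜ.indicator (fun _ => C) y := fun y =>
    indicator_nonneg (fun _ _ => hC0) y
  have hψK : ∀ y, ψ y ≤ K := fun y => (le_abs_self _).trans (hK y (mem_univ y))
  have hgG : ∀ y, -G ≤ g y := fun y => by
    simp only [hg]
    linarith [hind0 y, hind1 y, hψK y, neg_abs_le s']
  have hterm : ∀ z y, dist z y < δ → Real.exp (-g y) ≤ Real.exp (-s' + ψ z) * e z (l y) := by
    intro z y hzy
    have h1 : ψ y - ε / 8 ≤ ψ z := by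
      have := hδ₂' (hzy.trans_le (min_le_right _ _))
      rw [Real.dist_eq] at this
      linarith [neg_abs_le (ψ z - ψ y)]
    have h2 : Real.exp (-(ε / 8) - goodᶜ.indicator (fun _ => a) y) ≤ e z (l y) := by
      by_cases hy : y ∈ good
      · have h3 := hγ z y (hzy.trans_le (min_le_left _ _)) hy
        have h4 : 0 ≤ η' / m := by positivity
        simp only [he, h3, if_true, mem_compl_iff, hy, not_true, not_false_iff,
          indicator_of_notMem, sub_zero, mul_one]
        linarith
      · have h4 : 0 ≤ (1 - η') * (if l y = γ z then 1 else 0) := by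
          have : 0 ≤ 1 - η' := by linarith
          split_ifs <;> simp [this]
        rw [indicator_of_mem (by simpa using hy)]
        have h5 : Real.exp (-a) = η' / m := by
          rw [Real.exp_neg, Real.exp_log (by positivity), inv_div]
        calc Real.exp (-(ε / 8) - a) ≤ Real.exp (-a) := Real.exp_le_exp.2 (by linarith)
          _ ≤ _ := by rw [h5]; simp only [he]; linarith
    calc Real.exp (-g y) ≤ Real.exp (-s' + ψ z)
          * Real.exp (-(ε / 8) - goodᶜ.indicator (fun _ => a) y) := by
          rw [← Real.exp_add, Real.exp_le_exp]
          simp only [hg]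
          linarith [hind1 y]
      _ ≤ _ := mul_le_mul_of_nonneg_left h2 (Real.exp_pos _).le
  have hcode := codeQ_word hm f e F ω he0 (fun p => (Real.exp_pos _).le) hF1 l g G C
    (F.sup Prod.snd) (fun p hp => Finset.le_sup (f := Prod.snd) hp) hgG le_rfl hC0 (by
      intro y
      by_cases hy : y ∈ V
      · left
        obtain ⟨p, hp, hyp⟩ := mem_iUnion₂.1 hy
        refine ⟨p, hp, ?_⟩
        have h1 : ω p = ∏ i ∈ Finset.range p.2, Real.exp (-s' + ψ (f^[i] p.1)) := by
          rw [← Real.exp_sum, Finset.sum_add_distrib]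
          simp [hω, birk]
        rw [h1, ← Finset.prod_mul_distrib, birk, ← Finset.sum_neg_distrib, Real.exp_sum]
        exact Finset.prod_le_prod (fun i _ => (Real.exp_pos _).le) fun i hi =>
          hterm _ _ (hyp i (Finset.mem_range.1 hi))
      · right
        simp only [hg]
        rw [indicator_of_mem (show y ∈ Vᶜ from hy)]
        linarith [hind0 y, hψK y, neg_abs_le s'])
  set LC : ℝ := ((F.sup Prod.snd : ℕ) : ℝ) * C with hLC
  have hH : ∀ n, Hlab μ (itin f l 0 n) ≤ LC + n * ∫ y, g y ∂μ := by
    intro n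
    obtain ⟨hb1, hb2⟩ := integrable_birk hμ hgi n
    refine (Hlab_le_integral μ _ (measurableSet_itin f hf.measurable l hl 0 n)
      (fun w => codeQ f e F ω n (List.ofFn w))
      (fun w => codeQ_nonneg f e F ω he0 (fun p => (Real.exp_pos _).le) _ _) ?_
      (fun y => LC + birk f g n y) ((integrable_const _).add hb1) ?_).trans (le_of_eq ?_)
    · have := sumW_codeQ hm f e F ω he0 he1 (fun p => (Real.exp_pos _).le) hF1 hFs n n
      rwa [sumW_eq] at this
    · intro y
      have := hcode n n le_rfl y
      rw [word_eq] at this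
      rw [neg_add]
      exact this
    · rw [integral_add (integrable_const _) hb1, hb2]
      simp
  obtain ⟨n, hn⟩ := exists_nat_gt (LC / (ε / 2))
  refine ⟨n, ?_⟩
  have hn0 : (0 : ℝ) < n + 1 := by positivity
  rw [div_le_iff₀ hn0]
  refine (hH (n + 1)).trans ?_
  have h1 : LC ≤ (n + 1) * (ε / 2) := by
    rw [div_lt_iff₀ (by positivity)] at hn
    nlinarith
  have h2 : μ.real goodᶜ * a ≤ ε / 8 := by
    calc _ ≤ ε / (8 * (a + 1)) * (a + 1) :=
          mul_le_mul hgoodμ (by linarith) ha0 (by positivity)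
      _ = ε / 8 := by field_simp
  have h3 : μ.real Vᶜ * C ≤ ε / 8 := by
    calc _ ≤ ε / (8 * (C + 1)) * (C + 1) :=
          mul_le_mul hFV (by linarith) hC0 (by positivity)
      _ = ε / 8 := by field_simp
  have h4 : ∫ y, g y ∂μ ≤ s - ∫ x, ψ x ∂μ + ε / 2 := by linarith
  have h5 := mul_le_mul_of_nonneg_left h4 hn0.le
  push_cast
  linarith

end CodingBound

/-! ### The variational principle -/

section Variational

lemma exists_mP_of_pressure_lt {f : X → X} {Z : Set X} {ψ : X → ℝ} {s : ℝ}
    (h : pressure f Z ψ < s) (δ : ℝ) (hδ : 0 < δ) : ∃ s' ≤ s, mP f Z s' ψ δ = 0 := by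
  have h1 : pressureAt f Z ψ δ < s :=
    lt_of_le_of_lt (le_iSup₂ (f := fun (δ : ℝ) (_ : 0 < δ) => pressureAt f Z ψ δ) δ hδ) h
  obtain ⟨_, ⟨s', hs', rfl⟩, hlt⟩ := sInf_lt_iff.1 h1
  exact ⟨s', EReal.coe_le_coe_iff.1 hlt.le, hs'⟩

lemma mP_eq_zero_of_covers {f : X → X} {Z : Set X} {ψ : X → ℝ} {s δ : ℝ}
    (h : ∀ ε > (0 : ℝ), ∀ N, ∃ E, IsBowenCover f Z N δ E ∧
      coverSum E (fun p => -(p.2 : ℝ) * s + birk f ψ p.2 p.1) ≤ ENNReal.ofReal ε) :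
    mP f Z s ψ δ = 0 := by
  refine le_antisymm (iSup_le fun N => ?_) bot_le
  refine ENNReal.le_of_forall_pos_le_add fun ε hε _ => ?_
  obtain ⟨E, hE, hEs⟩ := h ε hε N
  refine (iInf₂_le E hE).trans ?_
  simpa using hEs

/-- Cover sums over a finite set of centres, all of the same order. -/
lemma coverSum_finset (E : Finset X) (n : ℕ) (w : X × ℕ → ℝ) :
    coverSum ((fun x => (x, n)) '' (E : Set X)) w
      = ENNReal.ofReal (∑ x ∈ E, Real.exp (w (x, n))) := by
  classical
  have h1 : ((fun x => (x, n)) '' (E : Set X)) = ((E.image fun x => (x, n)) : Finset (X × ℕ)) := by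
    simp
  unfold coverSum
  rw [h1, ENNReal.ofReal_sum_of_nonneg fun x _ => (Real.exp_pos _).le]
  rw [Finset.tsum_subtype' (E.image fun x => (x, n)) fun p => ENNReal.ofReal (Real.exp (w p)),
    Finset.sum_image]
  intro x _ y _ hxy
  exact (Prod.mk.inj hxy).1

/-- Maximal separated sets: every set has a finite separated subset whose Bowen balls cover it. -/
lemma exists_maximal_sep [CompactSpace X] {f : X → X} (hf : Continuous f) (A : Set X) (n : ℕ)
    (δ : ℝ) (hδ : 0 < δ) :
    ∃ E : Finset X, (E : Set X) ⊆ A ∧ IsSep f n δ E ∧ A ⊆ ⋃ x ∈ E, bowenBall f x n δ := by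
  classical
  have hopen : ∀ x, IsOpen (bowenBall f x n (δ / 2)) := by
    intro x
    have : bowenBall f x n (δ / 2)
        = ⋂ k ∈ Finset.range n, {y | dist (f^[k] x) (f^[k] y) < δ / 2} := by
      ext y; simp [bowenBall]
    rw [this]
    exact isOpen_biInter_finset fun k _ =>
      isOpen_lt (continuous_const.dist (hf.iterate k)) continuous_const
  obtain ⟨t, ht⟩ := isCompact_univ.elim_finite_subcover (fun x => bowenBall f x n (δ / 2)) hopen
    (fun x _ => mem_iUnion.2 ⟨x, fun k _ => by simpa using half_pos hδ⟩)
  have hz : ∀ x, ∃ z ∈ t, x ∈ bowenBall f z n (δ / 2) := fun x => by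
    simpa using ht (mem_univ x)
  choose z hzt hz using hz
  set P : ℕ → Prop := fun k => ∃ E : Finset X, (E : Set X) ⊆ A ∧ IsSep f n δ E ∧ E.card = k
  have hbound : ∀ k, P k → k ≤ t.card := by
    rintro k ⟨E, -, hE, rfl⟩
    refine Finset.card_le_card_of_injOn z (fun x _ => hzt x) fun x hx y hy hxy => ?_
    by_contra hne
    refine hE x hx y hy hne fun k hk => ?_
    have h1 := hz x k hk
    have h2 := hz y k hk
    rw [← hxy] at h2
    linarith [dist_triangle_left (f^[k] x) (f^[k] y) (f^[k] (z x))]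
  have hP0 : P 0 := ⟨∅, by simp, by simp [IsSep], rfl⟩
  obtain ⟨E, hEA, hE, hcard⟩ := Nat.findGreatest_spec (Nat.zero_le t.card) hP0
  refine ⟨E, hEA, hE, fun y hy => ?_⟩
  by_contra hcon
  have hcon' : ∀ x ∈ E, y ∉ bowenBall f x n δ := fun x hx h => hcon (mem_iUnion₂.2 ⟨x, hx, h⟩)
  have hyE : y ∉ E := fun h => hcon' y h fun k _ => by simpa using hδ
  have hP : P (E.card + 1) := by
    refine ⟨insert y E, ?_, ?_, Finset.card_insert_of_notMem hyE⟩
    · rw [Finset.coe_insert]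
      exact insert_subset hy hEA
    · intro a ha b hb hab
      rw [Finset.coe_insert] at ha hb
      rcases ha with rfl | ha <;> rcases hb with rfl | hb
      · exact absurd rfl hab
      · exact fun h => hcon' b hb fun k hk => by rw [dist_comm]; exact h k hk
      · exact hcon' a ha
      · exact hE a ha b hb hab
  have := Nat.le_findGreatest (hbound _ hP) hP
  omega

variable [MeasurableSpace X]

lemma Hlab_trivial_nonneg {c : ℝ} {f : X → X} (μ : Measure X) [IsProbabilityMeasure μ]
    (h : ∀ (m : ℕ) (l : X → Fin m), (∀ s, MeasurableSet (l ⁻¹' {s})) →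
      ∀ ε > 0, ∃ n : ℕ, Hlab μ (itin f l 0 (n + 1)) / (n + 1) ≤ c + ε) : 0 ≤ c := by
  refine le_of_forall_pos_le_add fun ε hε => ?_
  obtain ⟨n, hn⟩ := h 1 (fun _ => 0) (fun s => by
    have : (fun _ : X => (0 : Fin 1)) ⁻¹' {s} = univ := by ext; simp [eq_iff_true_of_subsingleton]
    rw [this]; exact MeasurableSet.univ) ε hε
  exact (div_nonneg (Hlab_nonneg _ _) (by positivity)).trans hn

lemma entBdd_of_finiteHtop [CompactSpace X] [BorelSpace X] {f : X → X} (hf : Continuous f)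
    (hfin : FiniteHtop f) (μ : Measure X) (hμP : IsProbabilityMeasure μ)
    (hμ : MeasurePreserving f μ μ) : EntBdd f μ := by
  obtain ⟨s, hs⟩ := EReal.lt_iff_exists_real_btwn.1 (lt_top_iff_ne_top.2 hfin)
  refine ⟨s, fun m l hl ε hε => ?_⟩
  have := coding_bound f hf μ hμ univ measure_univ (fun _ => 0) continuous_const s
    (exists_mP_of_pressure_lt hs.1) m l hl ε hε
  simpa using this

/-- Entropy plus energy is at most the pressure of any set of full measure. -/
lemma free_energy_le [CompactSpace X] [BorelSpace X] {f : X → X} (hf : Continuous f)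
    (μ : Measure X) [IsProbabilityMeasure μ] (hμ : MeasurePreserving f μ μ) (Z : Set X)
    (hZ : μ Z = 1) (ψ : X → ℝ) (hψ : Continuous ψ) :
    ((kolSinai f μ + ∫ x, ψ x ∂μ : ℝ) : EReal) ≤ pressure f Z ψ := by
  refine le_of_forall_gt fun c hc => ?_
  obtain ⟨s, hs, hsc⟩ := EReal.lt_iff_exists_real_btwn.1 hc
  refine lt_of_le_of_lt ?_ hsc
  have h1 := coding_bound f hf μ hμ Z hZ ψ hψ s (exists_mP_of_pressure_lt hs)
  have h2 := kolSinai_le f μ (s - ∫ x, ψ x ∂μ) (Hlab_trivial_nonneg μ h1) h1 inferInstance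
  exact_mod_cast (by linarith : kolSinai f μ + ∫ x, ψ x ∂μ ≤ s)

lemma sep_growth [CompactSpace X] {f : X → X} (hf : Continuous f)
    {A : Set X} {ψ : X → ℝ} {δ : ℝ} (hδ : 0 < δ) {c : ℝ}
    (hc : (c : EReal) < pressureAt f A ψ δ) :
    ∃ᶠ n : ℕ in atTop, ∃ E : Finset X, (E : Set X) ⊆ A ∧ IsSep f n δ E ∧
      Real.exp (n * c) ≤ ∑ x ∈ E, Real.exp (birk f ψ n x) := by
  by_contra hcon
  rw [not_frequently, eventually_atTop] at hcon
  obtain ⟨n0, hn0⟩ := hcon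
  obtain ⟨s, hs1, hs2⟩ := EReal.lt_iff_exists_real_btwn.1 hc
  have hcs : c < s := by exact_mod_cast hs1
  refine absurd hs2 (not_lt.2 (sInf_le ⟨s, ?_, rfl⟩))
  refine mP_eq_zero_of_covers fun ε hε N => ?_
  have hlim : Tendsto (fun n : ℕ => Real.exp (-((n : ℝ) * (s - c)))) atTop (𝓝 0) :=
    Real.tendsto_exp_neg_atTop_nhds_zero.comp
      (tendsto_natCast_atTop_atTop.atTop_mul_const (sub_pos.2 hcs))
  obtain ⟨n, hnε, hn0', hnN⟩ := ((hlim.eventually_lt_const hε).and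
    ((eventually_ge_atTop n0).and (eventually_ge_atTop N))).exists
  obtain ⟨E, hEA, hE, hcov⟩ := exists_maximal_sep hf A n δ hδ
  have hlt : ∑ x ∈ E, Real.exp (birk f ψ n x) < Real.exp (n * c) := by
    by_contra h
    exact hn0 n hn0' ⟨E, hEA, hE, not_lt.1 h⟩
  refine ⟨(fun x => (x, n)) '' (E : Set X), ⟨(E.finite_toSet.image _).countable, ?_, ?_⟩, ?_⟩
  · rintro _ ⟨x, hx, rfl⟩
    exact ⟨hEA hx, hnN⟩
  · intro y hy
    obtain ⟨x, hx, hxy⟩ := mem_iUnion₂.1 (hcov hy)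
    exact mem_iUnion₂.2 ⟨(x, n), ⟨x, hx, rfl⟩, hxy⟩
  · rw [coverSum_finset]
    refine ENNReal.ofReal_le_ofReal (le_trans ?_ hnε.le)
    simp only [Real.exp_add]
    rw [← Finset.mul_sum]
    calc _ ≤ Real.exp (-(n : ℝ) * s) * Real.exp (n * c) :=
          mul_le_mul_of_nonneg_left hlt.le (Real.exp_pos _).le
      _ = _ := by rw [← Real.exp_add]; congr 1; ring

lemma measure_eq_one_of_infDist [BorelSpace X] [CompactSpace X] {Y : Set X} (hY : IsClosed Y)
    (hne : Y.Nonempty) (μ : Measure X) [IsProbabilityMeasure μ]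
    (h : ∫ x, Metric.infDist x Y ∂μ ≤ 0) : μ Y = 1 := by
  have hc : Continuous fun x => Metric.infDist x Y := Metric.continuous_infDist_pt Y
  obtain ⟨K, hK⟩ := isCompact_univ.exists_bound_of_continuousOn hc.continuousOn
  have hi : Integrable (fun x => Metric.infDist x Y) μ :=
    Integrable.of_bound hc.measurable.aestronglyMeasurable K
      (ae_of_all _ fun x => hK x (mem_univ x))
  have h0 : ∫ x, Metric.infDist x Y ∂μ = 0 :=
    le_antisymm h (integral_nonneg fun x => Metric.infDist_nonneg)
  have h1 := (integral_eq_zero_iff_of_nonneg (fun x => Metric.infDist_nonneg) hi).1 h0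
  rw [← prob_compl_eq_zero_iff hY.measurableSet]
  refine measure_mono_null (fun x hx => ?_) h1
  exact fun h2 => hx ((hY.mem_iff_infDist_zero hne).2 h2)

lemma birk_eq_zero {f : X → X} {Y : Set X} (hfY : MapsTo f Y Y) {g : X → ℝ}
    (hg : ∀ x ∈ Y, g x = 0) (n : ℕ) (x : X) (hx : x ∈ Y) : birk f g n x = 0 :=
  Finset.sum_eq_zero fun k _ => hg _ (hfY.iterate k hx)

lemma exists_free_energy_gt [CompactSpace X] [BorelSpace X] {f : X → X} (hf : Continuous f)
    (hfin : FiniteHtop f) {Y : Set X} (hfY : MapsTo f Y Y)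
    {ψ : X → ℝ} (hψ : Continuous ψ) {c : ℝ} (hc : (c : EReal) < pressure f Y ψ) :
    ∃ μ : ProbabilityMeasure X, MeasurePreserving f (μ : Measure X) (μ : Measure X) ∧
      c ≤ kolSinai f μ + ∫ x, ψ x ∂(μ : Measure X) ∧
      ∫ x, Metric.infDist x Y ∂(μ : Measure X) ≤ 0 := by
  obtain ⟨δ, hδ'⟩ := lt_iSup_iff.1 hc
  obtain ⟨hδ, hδ'⟩ := lt_iSup_iff.1 hδ'
  obtain ⟨N, hNmono, hN⟩ := extraction_of_frequently_atTop
    ((sep_growth hf hδ hδ').and_eventually (eventually_gt_atTop 0))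
  choose h hN0 using hN
  choose E hEY hE hEc using h
  obtain ⟨μ, hμ, hμc, hμg⟩ := misiurewicz f hf (entBdd_of_finiteHtop hf hfin) δ hδ N hN0
    hNmono.tendsto_atTop E (fun k => by
      by_contra h0
      rw [Finset.not_nonempty_iff_eq_empty] at h0
      have := hEc k
      rw [h0, Finset.sum_empty] at this
      exact absurd this (not_le.2 (Real.exp_pos _))) hE ψ hψ c (fun k => by
      have := Real.log_le_log (Real.exp_pos _) (hEc k)
      rwa [Real.log_exp] at this)
  refine ⟨μ, hμ, hμc, hμg _ (Metric.continuous_infDist_pt Y) 0 fun k x hx => ?_⟩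
  rw [birk_eq_zero hfY (fun x hx => Metric.infDist_zero_of_mem hx) _ _ (hEY k hx), mul_zero]

/-- Weak* limits of invariant measures, with upper semicontinuity of the entropy. -/
lemma exists_limit_measure [CompactSpace X] [BorelSpace X] {f : X → X} (hf : Continuous f)
    (husc : UpperSemicontinuousOn
      (fun μ : ProbabilityMeasure X => kolSinai f (μ : Measure X))
      {μ : ProbabilityMeasure X | MeasurePreserving f (μ : Measure X) (μ : Measure X)})
    (ν : ℕ → ProbabilityMeasure X)
    (hν : ∀ k, MeasurePreserving f (ν k : Measure X) (ν k : Measure X)) :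
    ∃ (U : Ultrafilter ℕ) (μ : ProbabilityMeasure X), (U : Filter ℕ) ≤ atTop ∧
      MeasurePreserving f (μ : Measure X) (μ : Measure X) ∧
      (∀ g : X → ℝ, Continuous g →
        Tendsto (fun k => ∫ x, g x ∂(ν k : Measure X)) U (𝓝 (∫ x, g x ∂(μ : Measure X)))) ∧
      ∀ (a : ℕ → ℝ) (A : ℝ), Tendsto a U (𝓝 A) → (∀ k, a k ≤ kolSinai f (ν k)) →
        A ≤ kolSinai f μ := by
  set U : Ultrafilter ℕ := Filter.hyperfilter ℕ
  obtain ⟨μ, -, hμ⟩ := isCompact_univ.ultrafilter_le_nhds (U.map ν) (by simp)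
  have hμ' : Tendsto ν U (𝓝 μ) := hμ
  have hmean : ∀ g : X → ℝ, Continuous g →
      Tendsto (fun k => ∫ x, g x ∂(ν k : Measure X)) U (𝓝 (∫ x, g x ∂(μ : Measure X))) :=
    fun g hg => ((continuous_integral_pm hg).tendsto μ).comp hμ'
  have hinv : MeasurePreserving f (μ : Measure X) (μ : Measure X) := by
    refine measurePreserving_of_integral hf _ fun g hg => ?_
    refine tendsto_nhds_unique (hmean _ (hg.comp hf)) ((hmean g hg).congr fun k => ?_)
    have h3 := (hν k).map_eq
    have h4 : AEStronglyMeasurable g ((ν k : Measure X).map f) :=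
      hg.measurable.aestronglyMeasurable
    change _ = ∫ x, g (f x) ∂(ν k : Measure X)
    rw [← integral_map hf.measurable.aemeasurable h4, h3]
  refine ⟨U, μ, Nat.hyperfilter_le_atTop, hinv, hmean, fun a A ha hle => ?_⟩
  refine le_of_forall_pos_le_add fun ε hε => ?_
  have h1 := husc μ hinv (kolSinai f μ + ε) (by linarith)
  have h2 : Tendsto ν U (𝓝[{μ : ProbabilityMeasure X |
      MeasurePreserving f (μ : Measure X) (μ : Measure X)}] μ) :=
    tendsto_nhdsWithin_iff.2 ⟨hμ', Eventually.of_forall hν⟩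
  exact le_of_tendsto ha ((h2.eventually h1).mono fun k hk => (hle k).trans hk.le)

/-- Existence of equilibrium states on a compact forward invariant set. -/
lemma exists_equilibrium [CompactSpace X] [BorelSpace X] {f : X → X} (hf : Continuous f)
    (hfin : FiniteHtop f) (husc : UpperSemicontinuousOn
      (fun μ : ProbabilityMeasure X => kolSinai f (μ : Measure X))
      {μ : ProbabilityMeasure X | MeasurePreserving f (μ : Measure X) (μ : Measure X)})
    {Y : Set X} (hY : IsClosed Y) (hne : Y.Nonempty) (hfY : MapsTo f Y Y)
    {ψ : X → ℝ} (hψ : Continuous ψ) {P : ℝ} (hP : (P : EReal) = pressure f Y ψ) :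
    ∃ μ : ProbabilityMeasure X, MeasurePreserving f (μ : Measure X) (μ : Measure X) ∧
      (μ : Measure X) Y = 1 ∧ P = kolSinai f μ + ∫ x, ψ x ∂(μ : Measure X) := by
  have h1 : ∀ k : ℕ, ((P - 1 / (k + 1 : ℝ) : ℝ) : EReal) < pressure f Y ψ := fun k => by
    rw [← hP, EReal.coe_lt_coe_iff]
    have : (0 : ℝ) < 1 / (k + 1) := by positivity
    linarith
  choose ν hν hνc hνY using fun k => exists_free_energy_gt hf hfin hfY hψ (h1 k)
  obtain ⟨U, μ, hU, hμ, hμi, hμu⟩ := exists_limit_measure hf husc ν hν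
  have hY1 : (μ : Measure X) Y = 1 := measure_eq_one_of_infDist hY hne _
    (le_of_tendsto' (hμi _ (Metric.continuous_infDist_pt Y)) hνY)
  refine ⟨μ, hμ, hY1, le_antisymm ?_ ?_⟩
  · have h2 : Tendsto (fun k : ℕ => P - 1 / (k + 1 : ℝ) - ∫ x, ψ x ∂(ν k : Measure X)) U
        (𝓝 (P - 0 - ∫ x, ψ x ∂(μ : Measure X))) :=
      ((tendsto_const_nhds).sub (tendsto_one_div_add_atTop_nhds_zero_nat.mono_left hU)).sub
        (hμi ψ hψ)
    have := hμu _ _ h2 fun k => by linarith [hνc k]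
    linarith
  · have := free_energy_le hf (μ : Measure X) hμ Y hY1 ψ hψ
    rw [← hP] at this
    exact_mod_cast this

lemma nonempty_of_pressure {f : X → X} {Y : Set X} {ψ : X → ℝ} {P : ℝ}
    (hP : (P : EReal) = pressure f Y ψ) : Y.Nonempty := by
  by_contra hne
  rw [not_nonempty_iff_eq_empty] at hne
  subst hne
  have h1 : ∀ s δ, mP f ∅ s ψ δ = 0 := fun s δ => mP_eq_zero_of_covers fun ε _ N =>
    ⟨∅, ⟨countable_empty, by simp, by simp⟩, by simp [coverSum]⟩
  have h2 : pressure f ∅ ψ ≤ ((P - 1 : ℝ) : EReal) :=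
    iSup₂_le fun δ _ => sInf_le ⟨P - 1, h1 _ _, rfl⟩
  rw [← hP, EReal.coe_le_coe_iff] at h2
  linarith

end Variational

/-! ### Convexity of the entropy and ergodic states -/

section Ergodic

variable [MeasurableSpace X]

lemma Hitin_shift {f : X → X} (μ : Measure X) (hμ : MeasurePreserving f μ μ)
    {S : Type*} [Fintype S] (l : X → S) (hl : ∀ s, MeasurableSet (l ⁻¹' {s})) (k n : ℕ) :
    Hlab μ (itin f l k n) = Hlab μ (itin f l 0 n) := by
  unfold Hlab
  refine Finset.sum_congr rfl fun w _ => ?_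
  have h1 : itin f l k n ⁻¹' {w} = f^[k] ⁻¹' (itin f l 0 n ⁻¹' {w}) := by
    ext x
    simp only [mem_preimage, mem_singleton_iff, itin, funext_iff, zero_add]
    simp only [← Function.iterate_add_apply, add_comm]
  rw [h1, measureReal_def, (hμ.iterate k).measure_preimage
    (measurableSet_itin f hμ.measurable l hl 0 n w).nullMeasurableSet]
  rfl

lemma exists_ent_limit {f : X → X} (μ : Measure X) [IsProbabilityMeasure μ]
    (hμ : MeasurePreserving f μ μ) (hbdd : EntBdd f μ) {m : ℕ} (l : X → Fin m)
    (hl : ∀ s, MeasurableSet (l ⁻¹' {s})) :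
    ∃ L ≤ kolSinai f μ,
      Tendsto (fun n : ℕ => Hlab μ (itin f l 0 (n + 1)) / (n + 1 : ℝ)) atTop (𝓝 L) := by
  have hsub : Subadditive fun n => Hlab μ (itin f l 0 n) := fun a b => by
    have := Hitin_add μ f hμ.measurable l hl 0 a b
    rwa [Hitin_shift μ hμ l hl (0 + a)] at this
  have hb : BddBelow (range fun n : ℕ => Hlab μ (itin f l 0 n) / n) := ⟨0, by
    rintro _ ⟨n, rfl⟩
    exact div_nonneg (Hlab_nonneg _ _) (by positivity)⟩
  have ht := (tendsto_add_atTop_iff_nat 1).2 (hsub.tendsto_lim hb)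
  obtain ⟨C, hC⟩ := hbdd
  refine ⟨hsub.lim, le_kolSinai f μ C _ hC inferInstance m l hl fun n => ?_, ?_⟩
  · have := hsub.lim_le_div hb (Nat.succ_ne_zero n)
    simpa using this
  · simpa using ht

lemma kolSinai_nonneg {f : X → X} (μ : Measure X) [IsProbabilityMeasure μ]
    (hbdd : EntBdd f μ) : 0 ≤ kolSinai f μ := by
  obtain ⟨C, hC⟩ := hbdd
  refine le_kolSinai f μ C _ hC inferInstance 1 (fun _ => 0) (fun s => ?_) fun n =>
    div_nonneg (Hlab_nonneg _ _) (by positivity)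
  have : (fun _ : X => (0 : Fin 1)) ⁻¹' {s} = univ := by ext; simp [eq_iff_true_of_subsingleton]
  rw [this]; exact MeasurableSet.univ

/-- `μ` is the mixture `t ν₁ + (1 - t) ν₂`. -/
def IsMix (μ ν₁ ν₂ : Measure X) (t : ℝ) : Prop :=
  ∀ A, MeasurableSet A → μ.real A = t * ν₁.real A + (1 - t) * ν₂.real A

lemma negMulLog_mix_le {a b t : ℝ} (ha : 0 ≤ a) (hb : 0 ≤ b) (ht : 0 < t) (ht1 : t < 1) :
    Real.negMulLog (t * a + (1 - t) * b) ≤ t * Real.negMulLog a + (1 - t) * Real.negMulLog b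
      + (a + b) := by
  have key : ∀ {a c : ℝ} {t : ℝ}, 0 ≤ a → 0 < t → t * a ≤ c →
      t * a * (-Real.log c) ≤ t * Real.negMulLog a + a := by
    intro a c t ha ht hc
    rcases ha.eq_or_lt with rfl | ha
    · simp
    have h1 : Real.log (t * a) ≤ Real.log c := Real.log_le_log (by positivity) hc
    have h2 : t * a * (-Real.log c) ≤ Real.negMulLog (t * a) := by
      rw [Real.negMulLog]
      have : 0 ≤ t * a := by positivity
      nlinarith
    rw [Real.negMulLog_mul] at h2
    have h3 := Real.negMulLog_le_one_sub_self ht.le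
    nlinarith
  have hta : 0 ≤ t * a := by positivity
  have htb : 0 ≤ (1 - t) * b := mul_nonneg (by linarith) hb
  have h1 := key (c := t * a + (1 - t) * b) ha ht (by linarith)
  have h2 := key (c := t * a + (1 - t) * b) (t := 1 - t) hb (by linarith) (by linarith)
  rw [Real.negMulLog]
  linarith

lemma kolSinai_mix_le {f : X → X} (μ ν₁ ν₂ : Measure X) [IsProbabilityMeasure μ]
    [IsProbabilityMeasure ν₁] [IsProbabilityMeasure ν₂]
    (hν₁ : MeasurePreserving f ν₁ ν₁) (hν₂ : MeasurePreserving f ν₂ ν₂)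
    (hb₁ : EntBdd f ν₁) (hb₂ : EntBdd f ν₂) {t : ℝ} (ht : 0 < t) (ht1 : t < 1)
    (hmix : IsMix μ ν₁ ν₂ t) :
    kolSinai f μ ≤ t * kolSinai f ν₁ + (1 - t) * kolSinai f ν₂ := by
  refine kolSinai_le f μ _ ?_ (fun m l hl ε hε => ?_) inferInstance
  · exact add_nonneg (mul_nonneg ht.le (kolSinai_nonneg _ hb₁))
      (mul_nonneg (by linarith) (kolSinai_nonneg _ hb₂))
  obtain ⟨L₁, hL₁, hl₁⟩ := exists_ent_limit ν₁ hν₁ hb₁ l hl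
  obtain ⟨L₂, hL₂, hl₂⟩ := exists_ent_limit ν₂ hν₂ hb₂ l hl
  have hlim : Tendsto (fun n : ℕ => t * (Hlab ν₁ (itin f l 0 (n + 1)) / (n + 1 : ℝ))
      + (1 - t) * (Hlab ν₂ (itin f l 0 (n + 1)) / (n + 1 : ℝ)) + 2 * (1 / (n + 1 : ℝ))) atTop
      (𝓝 (t * L₁ + (1 - t) * L₂ + 2 * 0)) :=
    ((hl₁.const_mul _).add (hl₂.const_mul _)).add
      (tendsto_one_div_add_atTop_nhds_zero_nat.const_mul _)
  have hlt : t * L₁ + (1 - t) * L₂ + 2 * 0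
      < t * kolSinai f ν₁ + (1 - t) * kolSinai f ν₂ + ε := by
    have h1 := mul_le_mul_of_nonneg_left hL₁ ht.le
    have h2 := mul_le_mul_of_nonneg_left hL₂ (by linarith : 0 ≤ 1 - t)
    linarith
  obtain ⟨n, hn⟩ := (hlim.eventually_lt_const hlt).exists
  refine ⟨n, le_trans ?_ hn.le⟩
  have hn0 : (0 : ℝ) < n + 1 := by positivity
  set S := Fin (n + 1) → Fin m
  have hme := measurableSet_itin f hν₁.measurable l hl 0 (n + 1)
  have hsum : ∀ ν : Measure X, IsProbabilityMeasure ν →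
      ∑ s : S, ν.real (itin f l 0 (n + 1) ⁻¹' {s}) = 1 := fun ν _ => by
    have := sum_measureReal_fiber ν _ hme univ MeasurableSet.univ
    simpa using this
  have hH : Hlab μ (itin f l 0 (n + 1)) ≤ t * Hlab ν₁ (itin f l 0 (n + 1))
      + (1 - t) * Hlab ν₂ (itin f l 0 (n + 1)) + 2 := by
    unfold Hlab
    calc _ ≤ ∑ s : S, (t * Real.negMulLog (ν₁.real (itin f l 0 (n + 1) ⁻¹' {s}))
          + (1 - t) * Real.negMulLog (ν₂.real (itin f l 0 (n + 1) ⁻¹' {s}))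
          + (ν₁.real (itin f l 0 (n + 1) ⁻¹' {s}) + ν₂.real (itin f l 0 (n + 1) ⁻¹' {s}))) :=
        Finset.sum_le_sum fun s _ => by
          rw [hmix _ (hme s)]
          exact negMulLog_mix_le measureReal_nonneg measureReal_nonneg ht ht1
      _ = _ := by
        rw [Finset.sum_add_distrib, Finset.sum_add_distrib, Finset.sum_add_distrib,
          hsum ν₁ inferInstance, hsum ν₂ inferInstance, ← Finset.mul_sum, ← Finset.mul_sum]
        ring
  calc _ ≤ (t * Hlab ν₁ (itin f l 0 (n + 1))
      + (1 - t) * Hlab ν₂ (itin f l 0 (n + 1)) + 2) / (n + 1) :=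
        div_le_div_of_nonneg_right hH hn0.le
    _ = _ := by ring

lemma integrable_cont [CompactSpace X] [BorelSpace X] {g : X → ℝ} (hg : Continuous g)
    (μ : Measure X) [IsFiniteMeasure μ] : Integrable g μ := by
  obtain ⟨K, hK⟩ := isCompact_univ.exists_bound_of_continuousOn hg.continuousOn
  exact Integrable.of_bound hg.measurable.aestronglyMeasurable K
      (ae_of_all _ fun x => hK x (mem_univ x))

lemma integral_mix [CompactSpace X] [BorelSpace X] {μ ν₁ ν₂ : Measure X} [IsProbabilityMeasure μ]
    [IsProbabilityMeasure ν₁] [IsProbabilityMeasure ν₂] {t : ℝ} (ht : 0 < t) (ht1 : t < 1)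
    (hmix : IsMix μ ν₁ ν₂ t) {g : X → ℝ} (hg : Continuous g) :
    ∫ x, g x ∂μ = t * ∫ x, g x ∂ν₁ + (1 - t) * ∫ x, g x ∂ν₂ := by
  have h1 : μ = ENNReal.ofReal t • ν₁ + ENNReal.ofReal (1 - t) • ν₂ := by
    ext A hA
    have h2 := hmix A hA
    have ht' : 0 ≤ 1 - t := by linarith
    rw [← ENNReal.ofReal_toReal (measure_ne_top μ A), ← measureReal_def, h2,
      ENNReal.ofReal_add (by positivity) (by positivity), ENNReal.ofReal_mul ht.le,
      ENNReal.ofReal_mul ht']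
    simp [measureReal_def]
  rw [h1, integral_add_measure, integral_smul_measure, integral_smul_measure,
    ENNReal.toReal_ofReal ht.le, ENNReal.toReal_ofReal (by linarith)]
  · rfl
  · exact (integrable_cont hg ν₁).smul_measure ENNReal.ofReal_ne_top
  · exact (integrable_cont hg ν₂).smul_measure ENNReal.ofReal_ne_top

lemma cond_real {A : Set X} (hA : MeasurableSet A) (μ : Measure X) (B : Set X) :
    (ProbabilityTheory.cond μ A).real B = (μ.real A)⁻¹ * μ.real (A ∩ B) := by
  rw [measureReal_def, ProbabilityTheory.cond_apply hA, ENNReal.toReal_mul, ENNReal.toReal_inv]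
  rfl

/-- A nonempty closed face of the set of invariant measures contains an ergodic measure: a
maximizer of a strictly convex continuous functional is extreme. -/
lemma exists_ergodic_of_face [CompactSpace X] [BorelSpace X] {f : X → X}
    (S : Set (ProbabilityMeasure X)) (hS : IsClosed S) (hne : S.Nonempty)
    (hinv : ∀ μ ∈ S, MeasurePreserving f (μ : Measure X) (μ : Measure X))
    (hface : ∀ μ ∈ S, ∀ (ν₁ ν₂ : ProbabilityMeasure X) (t : ℝ), 0 < t → t < 1 →
      MeasurePreserving f (ν₁ : Measure X) (ν₁ : Measure X) →
      MeasurePreserving f (ν₂ : Measure X) (ν₂ : Measure X) →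
      IsMix (μ : Measure X) ν₁ ν₂ t → ν₁ ∈ S ∧ ν₂ ∈ S) :
    ∃ μ ∈ S, Ergodic f (μ : Measure X) := by
  set D : ℕ → C(X, ℝ) := TopologicalSpace.denseSeq C(X, ℝ) with hD
  have hDd : DenseRange D := TopologicalSpace.denseRange_denseSeq _
  set I : ℕ → ProbabilityMeasure X → ℝ := fun k μ => (∫ x, D k x ∂(μ : Measure X)) / (1 + ‖D k‖)
    with hI
  have hIc : ∀ k, Continuous (I k) := fun k => (continuous_integral_pm (D k).continuous).div_const _
  have hI1 : ∀ k μ, |I k μ| ≤ 1 := by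
    intro k μ
    have h1 : ‖∫ x, D k x ∂(μ : Measure X)‖ ≤ ‖D k‖ * (μ : Measure X).real univ :=
      norm_integral_le_of_norm_le_const (ae_of_all _ fun x => (D k).norm_coe_le_norm x)
    simp only [probReal_univ, mul_one, Real.norm_eq_abs] at h1
    have h2 : 0 < 1 + ‖D k‖ := by positivity
    rw [hI, abs_div, abs_of_pos h2, div_le_one h2]
    linarith
  have hI2 : ∀ k μ, (I k μ) ^ 2 ≤ 1 := fun k μ => by
    rw [← sq_abs]; exact pow_le_one₀ (abs_nonneg _) (hI1 k μ)
  set w : ℕ → ℝ := fun k => (1 / 2) ^ k with hw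
  have hws : Summable w := summable_geometric_two
  have hw0 : ∀ k, 0 < w k := fun k => by positivity
  have hsq : ∀ c : ℕ → ℝ, (∃ K, ∀ k, (c k) ^ 2 ≤ K) → Summable fun k => w k * (c k) ^ 2 := by
    rintro c ⟨K, hc⟩
    refine Summable.of_nonneg_of_le (fun k => mul_nonneg (hw0 k).le (sq_nonneg _))
      (fun k => mul_le_mul_of_nonneg_left (hc k) (hw0 k).le) (hws.mul_right K)
  set F : ProbabilityMeasure X → ℝ := fun μ => ∑' k, w k * (I k μ) ^ 2 with hF
  have hFc : Continuous F := by
    refine continuous_tsum (fun k => continuous_const.mul ((hIc k).pow 2)) hws fun k μ => ?_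
    rw [Real.norm_of_nonneg (mul_nonneg (hw0 k).le (sq_nonneg _))]
    exact mul_le_of_le_one_right (hw0 k).le (hI2 k μ)
  obtain ⟨μ, hμS, hμmax⟩ := hS.isCompact.exists_isMaxOn hne hFc.continuousOn
  have hμ := hinv μ hμS
  refine ⟨μ, hμS, hμ, ⟨fun {A} hA hfA => ?_⟩⟩
  by_contra hcon
  rw [eventuallyConst_set', not_or] at hcon
  have hA0 : (μ : Measure X) A ≠ 0 := fun h => hcon.1 (ae_eq_empty.2 h)
  have hA1 : (μ : Measure X) Aᶜ ≠ 0 := fun h => hcon.2 (ae_eq_univ.2 h)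
  have hcond : ∀ B : Set X, MeasurableSet B → f ⁻¹' B = B → (μ : Measure X) B ≠ 0 →
      MeasurePreserving f (ProbabilityTheory.cond (μ : Measure X) B)
        (ProbabilityTheory.cond (μ : Measure X) B) := by
    intro B hB hfB hB0
    have h1 := hμ.restrict_preimage hB
    rw [hfB] at h1
    exact h1.smul_measure _
  have hfA' : f ⁻¹' Aᶜ = Aᶜ := by rw [preimage_compl, hfA]
  set ν₁ : ProbabilityMeasure X := ⟨ProbabilityTheory.cond (μ : Measure X) A,
    ProbabilityTheory.cond_isProbabilityMeasure hA0⟩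
  set ν₂ : ProbabilityMeasure X := ⟨ProbabilityTheory.cond (μ : Measure X) Aᶜ,
    ProbabilityTheory.cond_isProbabilityMeasure hA1⟩
  set t := (μ : Measure X).real A with ht
  have hcompl : (μ : Measure X).real Aᶜ = 1 - t := probReal_compl_eq_one_sub hA
  have ht0 : 0 < t := ENNReal.toReal_pos hA0 (measure_ne_top _ _)
  have ht1 : t < 1 := by
    have : 0 < (μ : Measure X).real Aᶜ := ENNReal.toReal_pos hA1 (measure_ne_top _ _)
    linarith
  have hmix : IsMix (μ : Measure X) ν₁ ν₂ t := by
    intro B hB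
    have h1 : (ν₁ : Measure X).real B = t⁻¹ * (μ : Measure X).real (A ∩ B) :=
      cond_real hA _ _
    have h2 : (ν₂ : Measure X).real B = (1 - t)⁻¹ * (μ : Measure X).real (Aᶜ ∩ B) := by
      rw [← hcompl]
      exact cond_real hA.compl _ _
    rw [h1, h2, mul_inv_cancel_left₀ ht0.ne', mul_inv_cancel_left₀ (by linarith)]
    rw [inter_comm A, inter_comm Aᶜ, ← sdiff_eq, measureReal_inter_add_sdiff hA]
  obtain ⟨hν₁, hν₂⟩ := hface μ hμS ν₁ ν₂ t ht0 ht1 (hcond A hA hfA hA0) (hcond _ hA.compl hfA' hA1)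
    hmix
  have hImix : ∀ k, I k μ = t * I k ν₁ + (1 - t) * I k ν₂ := fun k => by
    simp only [hI]
    rw [integral_mix ht0 ht1 hmix (D k).continuous]
    ring
  have hs1 := hsq (fun k => I k ν₁) ⟨1, fun k => hI2 k _⟩
  have hs2 := hsq (fun k => I k ν₂) ⟨1, fun k => hI2 k _⟩
  have hs3 := hsq (fun k => I k ν₁ - I k ν₂) ⟨4, fun k => by
    have h1 := abs_le.1 (hI1 k ν₁)
    have h2 := abs_le.1 (hI1 k ν₂)
    nlinarith⟩
  have hFmix : F μ = t * F ν₁ + (1 - t) * F ν₂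
      - t * (1 - t) * ∑' k, w k * (I k ν₁ - I k ν₂) ^ 2 := by
    simp only [hF]
    rw [← tsum_mul_left, ← tsum_mul_left, ← tsum_mul_left,
      ← (hs1.mul_left t).tsum_add (hs2.mul_left (1 - t)),
      ← ((hs1.mul_left t).add (hs2.mul_left (1 - t))).tsum_sub (hs3.mul_left _)]
    refine tsum_congr fun k => ?_
    rw [hImix k]
    ring
  have h1 : F ν₁ ≤ F μ := hμmax hν₁
  have h2 : F ν₂ ≤ F μ := hμmax hν₂
  have h3 : t * (1 - t) * ∑' k, w k * (I k ν₁ - I k ν₂) ^ 2 ≤ 0 := by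
    have h4 := mul_le_mul_of_nonneg_left h1 ht0.le
    have h5 := mul_le_mul_of_nonneg_left h2 (by linarith : 0 ≤ 1 - t)
    linarith
  have h4 : ∑' k, w k * (I k ν₁ - I k ν₂) ^ 2 ≤ 0 :=
    nonpos_of_mul_nonpos_right h3 (mul_pos ht0 (by linarith))
  have h5 : ∀ k, ∫ x, D k x ∂(ν₁ : Measure X) = ∫ x, D k x ∂(ν₂ : Measure X) := by
    intro k
    have h6 := hs3.le_tsum k fun j _ => mul_nonneg (hw0 j).le (sq_nonneg _)
    have h7 : (I k ν₁ - I k ν₂) ^ 2 ≤ 0 := nonpos_of_mul_nonpos_right (h6.trans h4) (hw0 k)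
    have h8 : I k ν₁ = I k ν₂ := by nlinarith
    have h9 : (1 + ‖D k‖) ≠ 0 := by positivity
    simpa [hI, div_left_inj' h9] using h8
  have hlip : ∀ ν : ProbabilityMeasure X,
      Continuous fun g : C(X, ℝ) => ∫ x, g x ∂(ν : Measure X) := by
    intro ν
    have : LipschitzWith 1 fun g : C(X, ℝ) => ∫ x, g x ∂(ν : Measure X) := by
      refine LipschitzWith.of_dist_le_mul fun g g' => ?_
      rw [dist_eq_norm, ← integral_sub (integrable_cont g.continuous _)
        (integrable_cont g'.continuous _)]
      have := norm_integral_le_of_norm_le_const (μ := (ν : Measure X))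
        (f := fun x => g x - g' x) (C := dist g g')
        (ae_of_all _ fun x => by rw [← dist_eq_norm]; exact ContinuousMap.dist_apply_le_dist x)
      simpa using this
    exact this.continuous
  have h6 : (fun g : C(X, ℝ) => ∫ x, g x ∂(ν₁ : Measure X))
      = fun g : C(X, ℝ) => ∫ x, g x ∂(ν₂ : Measure X) :=
    hDd.equalizer (hlip ν₁) (hlip ν₂) (funext h5)
  have h7 : (ν₁ : Measure X) = ν₂ :=
    ext_of_forall_integral_eq_of_IsFiniteMeasure fun g => congrFun h6 g.toContinuousMap
  have h8 : (ν₁ : Measure X).real A = 1 := by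
    have : (ν₁ : Measure X).real A = t⁻¹ * (μ : Measure X).real (A ∩ A) :=
      cond_real hA _ _
    rw [this, inter_self, inv_mul_cancel₀ ht0.ne']
  have h9 : (ν₂ : Measure X).real A = 0 := by
    have : (ν₂ : Measure X).real A = _ := cond_real hA.compl _ A
    rw [this]
    simp
  rw [h7, h9] at h8
  exact zero_ne_one h8

end Ergodic

/-! ### Birkhoff averages of ergodic measures -/

section Birkhoff

lemma birk_zero (f : X → X) (φ : X → ℝ) (x : X) : birk f φ 0 x = 0 := by simp [birk]

lemma birk_succ (f : X → X) (φ : X → ℝ) (n : ℕ) (x : X) :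
    birk f φ (n + 1) x = φ x + birk f φ n (f x) := by
  unfold birk
  rw [Finset.sum_range_succ', add_comm]
  rfl

lemma birk_affine (f : X → X) (φ : X → ℝ) (q c : ℝ) (n : ℕ) (x : X) :
    birk f (fun y => q * φ y + c) n x = q * birk f φ n x + n * c := by
  unfold birk
  rw [Finset.sum_add_distrib, Finset.mul_sum]
  simp

/-- The maximal function `max_{k ≤ n} S_k φ`, defined by its recursion. -/
def maxBirk (f : X → X) (φ : X → ℝ) : ℕ → X → ℝ
  | 0, _ => 0
  | n + 1, x => max 0 (φ x + maxBirk f φ n (f x))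

lemma maxBirk_nonneg (f : X → X) (φ : X → ℝ) (n : ℕ) (x : X) : 0 ≤ maxBirk f φ n x := by
  cases n with
  | zero => exact le_rfl
  | succ n => exact le_max_left _ _

lemma maxBirk_le_succ (f : X → X) (φ : X → ℝ) (n : ℕ) (x : X) :
    maxBirk f φ n x ≤ maxBirk f φ (n + 1) x := by
  induction n generalizing x with
  | zero => exact maxBirk_nonneg _ _ _ _
  | succ n ih =>
    have h1 := ih (f x)
    change max 0 (φ x + maxBirk f φ n (f x)) ≤ max 0 (φ x + maxBirk f φ (n + 1) (f x))
    gcongr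

lemma birk_le_maxBirk (f : X → X) (φ : X → ℝ) (n : ℕ) (x : X) :
    birk f φ n x ≤ maxBirk f φ n x := by
  induction n generalizing x with
  | zero => rw [birk_zero]; exact le_rfl
  | succ n ih =>
    rw [birk_succ]
    exact (add_le_add_right (ih (f x)) _).trans (le_max_right _ _)

lemma maxBirk_continuous {f : X → X} (hf : Continuous f) {φ : X → ℝ} (hφ : Continuous φ) (n : ℕ) :
    Continuous (maxBirk f φ n) := by
  induction n with
  | zero => exact continuous_const
  | succ n ih => exact continuous_const.max (hφ.add (ih.comp hf))

variable [MeasurableSpace X]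

/-- If the Birkhoff sums are almost surely unbounded above, then the mean is nonnegative. -/
lemma integral_nonneg_of_unbounded [CompactSpace X] [BorelSpace X] {f : X → X} (hf : Continuous f)
    {μ : Measure X} [IsProbabilityMeasure μ] (hμ : MeasurePreserving f μ μ) {φ : X → ℝ}
    (hφ : Continuous φ) (h : ∀ᵐ x ∂μ, ∀ C, ∃ n, C < birk f φ n (f x)) : 0 ≤ ∫ x, φ x ∂μ := by
  obtain ⟨K, hK⟩ := isCompact_univ.exists_bound_of_continuousOn hφ.continuousOn
  have hd : ∀ n x, maxBirk f φ (n + 1) x - maxBirk f φ n (f x)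
      = max (-maxBirk f φ n (f x)) (φ x) := by
    intro n x
    change max 0 (φ x + maxBirk f φ n (f x)) - maxBirk f φ n (f x) = _
    rw [max_sub_sub_right 0 (φ x + maxBirk f φ n (f x)) (maxBirk f φ n (f x)) |>.symm]
    congr 1 <;> ring
  have hlim : Tendsto (fun n => ∫ x, (maxBirk f φ (n + 1) x - maxBirk f φ n (f x)) ∂μ) atTop
      (𝓝 (∫ x, φ x ∂μ)) := by
    refine tendsto_integral_of_dominated_convergence (fun _ => K) (fun n => ?_)
      (integrable_const K) (fun n => ae_of_all _ fun x => ?_) ?_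
    · exact ((maxBirk_continuous hf hφ (n + 1)).sub
        ((maxBirk_continuous hf hφ n).comp hf)).measurable.aestronglyMeasurable
    · have h1 := abs_le.1 (hK x (mem_univ x))
      have h2 := maxBirk_nonneg f φ n (f x)
      rw [hd, Real.norm_eq_abs, abs_le]
      exact ⟨h1.1.trans (le_max_right _ _), max_le (by linarith) h1.2⟩
    · filter_upwards [h] with x hx
      obtain ⟨n, hn⟩ := hx (-φ x)
      refine tendsto_const_nhds.congr' ?_
      filter_upwards [eventually_ge_atTop n] with m hm
      have h1 : maxBirk f φ n (f x) ≤ maxBirk f φ m (f x) :=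
        monotone_nat_of_le_succ (fun k => maxBirk_le_succ f φ k (f x)) hm
      have h2 := birk_le_maxBirk f φ n (f x)
      rw [hd, max_eq_right (by linarith)]
  refine ge_of_tendsto' hlim fun n => ?_
  have hi := integrable_cont (maxBirk_continuous hf hφ n) μ
  rw [integral_sub (integrable_cont (maxBirk_continuous hf hφ (n + 1)) μ)
    (integrable_cont (g := fun x => maxBirk f φ n (f x)) ((maxBirk_continuous hf hφ n).comp hf) μ)]
  have h2 : ∫ x, maxBirk f φ n (f x) ∂μ = ∫ x, maxBirk f φ n x ∂μ := by
    have h4 : AEStronglyMeasurable (maxBirk f φ n) (μ.map f) := by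
      rw [hμ.map_eq]; exact hi.aestronglyMeasurable
    rw [← integral_map hf.measurable.aemeasurable h4, hμ.map_eq]
  have h3 := integral_mono hi (integrable_cont (maxBirk_continuous hf hφ (n + 1)) μ)
    (fun x => maxBirk_le_succ f φ n x)
  linarith

lemma ae_bddAbove_of_integral_neg [CompactSpace X] [BorelSpace X] {f : X → X} (hf : Continuous f)
    {μ : Measure X} [IsProbabilityMeasure μ] (hμ : Ergodic f μ) {φ : X → ℝ}
    (hφ : Continuous φ) (hneg : ∫ x, φ x ∂μ < 0) : ∀ᵐ x ∂μ, ∃ C, ∀ n, birk f φ n x ≤ C := by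
  set A : Set X := {x | ∀ C, ∃ n, C < birk f φ n x} with hA
  have hA' : A = ⋂ C : ℕ, ⋃ n : ℕ, {x | (C : ℝ) < birk f φ n x} := by
    ext x
    simp only [hA, mem_ofPred_eq, mem_iInter, mem_iUnion]
    refine ⟨fun h C => h C, fun h C => ?_⟩
    obtain ⟨k, hk⟩ := exists_nat_ge C
    obtain ⟨n, hn⟩ := h k
    exact ⟨n, hk.trans_lt hn⟩
  have hAm : MeasurableSet A := by
    rw [hA']
    exact MeasurableSet.iInter fun C => MeasurableSet.iUnion fun n =>
      (isOpen_lt continuous_const (birk_continuous hf hφ n)).measurableSet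
  have hinv : f ⁻¹' A = A := by
    ext x
    refine ⟨fun h C => ?_, fun h C => ?_⟩
    · obtain ⟨n, hn⟩ := h (C - φ x)
      exact ⟨n + 1, by rw [birk_succ]; linarith⟩
    · obtain ⟨n, hn⟩ := h (max 0 (C + φ x))
      obtain ⟨h1, h2⟩ := max_lt_iff.1 hn
      cases n with
      | zero => rw [birk_zero] at h1; exact absurd h1 (lt_irrefl _)
      | succ n => rw [birk_succ] at h2; exact ⟨n, by linarith⟩
  rcases hμ.toPreErgodic.ae_mem_or_ae_notMem hAm hinv with h | h
  · refine absurd hneg (not_lt.2 (integral_nonneg_of_unbounded hf hμ.toMeasurePreserving hφ ?_))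
    filter_upwards [h] with x hx
    rw [← hinv] at hx
    exact hx
  · filter_upwards [h] with x hx
    simpa [hA] using hx

lemma ae_eventually_birk_lt [CompactSpace X] [BorelSpace X] {f : X → X} (hf : Continuous f)
    {μ : Measure X} [IsProbabilityMeasure μ] (hμ : Ergodic f μ) {φ : X → ℝ}
    (hφ : Continuous φ) {c : ℝ} (hc : ∫ x, φ x ∂μ < c) :
    ∀ᵐ x ∂μ, ∀ᶠ n : ℕ in atTop, birk f φ n x / n < c := by
  obtain ⟨c', hc1, hc2⟩ := exists_between hc
  have h1 : ∫ x, (1 * φ x + -c') ∂μ < 0 := by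
    simp only [one_mul]
    rw [integral_add (integrable_cont hφ μ) (integrable_const _)]
    simp; linarith
  filter_upwards [ae_bddAbove_of_integral_neg hf hμ (φ := fun x => 1 * φ x + -c')
    (by fun_prop) h1] with x ⟨C, hC⟩
  have h2 : ∀ᶠ n : ℕ in atTop, C < n * (c - c') :=
    (tendsto_natCast_atTop_atTop.atTop_mul_const (sub_pos.2 hc2)).eventually_gt_atTop C
  filter_upwards [h2, eventually_gt_atTop 0] with n hn hn0
  have h3 := hC n
  rw [birk_affine] at h3
  rw [div_lt_iff₀ (by exact_mod_cast hn0)]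
  linarith

/-- Birkhoff's ergodic theorem for continuous observables. -/
lemma kbirk_measure_one [CompactSpace X] [BorelSpace X] {f : X → X} (hf : Continuous f)
    {μ : Measure X} [IsProbabilityMeasure μ] (hμ : Ergodic f μ) {φ : X → ℝ}
    (hφ : Continuous φ) {α : ℝ} (hα : ∫ x, φ x ∂μ = α) : μ (Kbirk f φ α) = 1 := by
  have h1 : ∀ᵐ x ∂μ, ∀ k : ℕ, ∀ᶠ n : ℕ in atTop, birk f φ n x / n < α + 1 / (k + 1) := by
    refine ae_all_iff.2 fun k => ae_eventually_birk_lt hf hμ hφ ?_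
    have : (0 : ℝ) < 1 / (k + 1) := by positivity
    linarith
  have h2 : ∀ᵐ x ∂μ, ∀ k : ℕ, ∀ᶠ n : ℕ in atTop,
      birk f (fun y => -φ y) n x / n < -α + 1 / (k + 1) := by
    refine ae_all_iff.2 fun k => ae_eventually_birk_lt hf hμ (φ := fun y => -φ y) hφ.neg ?_
    have : (0 : ℝ) < 1 / (k + 1) := by positivity
    rw [integral_neg]
    linarith
  have h3 : μ (Kbirk f φ α)ᶜ = 0 := by
    refine mem_ae_iff.1 ?_
    filter_upwards [h1, h2] with x hx1 hx2
    refine tendsto_order.2 ⟨fun b hb => ?_, fun b hb => ?_⟩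
    · obtain ⟨k, hk⟩ := exists_nat_one_div_lt (sub_pos.2 hb)
      filter_upwards [hx2 k] with n hn
      have : birk f (fun y => -φ y) n x = -birk f φ n x := by simp [birk]
      rw [this, neg_div] at hn
      linarith
    · obtain ⟨k, hk⟩ := exists_nat_one_div_lt (sub_pos.2 hb)
      filter_upwards [hx1 k] with n hn
      linarith
  refine le_antisymm prob_le_one ?_
  calc 1 = μ univ := measure_univ.symm
    _ ≤ μ (Kbirk f φ α) + μ (Kbirk f φ α)ᶜ := measure_univ_le_add_compl _
    _ = _ := by rw [h3, add_zero]

end Birkhoff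

/-! ### Ergodic equilibrium states -/

section Equilibrium

variable [MeasurableSpace X]

lemma integral_comp_eq [BorelSpace X] {f : X → X} {μ : Measure X} (hμ : MeasurePreserving f μ μ)
    {g : X → ℝ} (hg : Continuous g) : ∫ x, g (f x) ∂μ = ∫ x, g x ∂μ := by
  have h4 : AEStronglyMeasurable g (μ.map f) := by
    rw [hμ.map_eq]
    exact hg.measurable.aestronglyMeasurable
  rw [← integral_map hμ.measurable.aemeasurable h4, hμ.map_eq]

/-- The equilibrium states on `Y` (free energy at least `P`) with prescribed mean of `φ`. -/
def eqStates (f : X → X) (Y : Set X) (ψ φ : X → ℝ) (P α : ℝ) : Set (ProbabilityMeasure X) :=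
  {μ | MeasurePreserving f (μ : Measure X) (μ : Measure X) ∧
    ∫ x, Metric.infDist x Y ∂(μ : Measure X) ≤ 0 ∧
    P ≤ kolSinai f μ + ∫ x, ψ x ∂(μ : Measure X) ∧ ∫ x, φ x ∂(μ : Measure X) = α}

lemma isClosed_eqStates [CompactSpace X] [BorelSpace X] {f : X → X} (hf : Continuous f)
    (husc : UpperSemicontinuousOn
      (fun μ : ProbabilityMeasure X => kolSinai f (μ : Measure X))
      {μ : ProbabilityMeasure X | MeasurePreserving f (μ : Measure X) (μ : Measure X)})
    (Y : Set X) {ψ φ : X → ℝ} (hψ : Continuous ψ) (hφ : Continuous φ) (P α : ℝ) :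
    IsClosed (eqStates f Y ψ φ P α) := by
  refine isClosed_iff_ultrafilter.2 fun μ U hU hS => ?_
  have hmean : ∀ g : X → ℝ, Continuous g →
      Tendsto (fun ν : ProbabilityMeasure X => ∫ x, g x ∂(ν : Measure X)) U
        (𝓝 (∫ x, g x ∂(μ : Measure X))) :=
    fun g hg => ((continuous_integral_pm hg).tendsto μ).mono_left hU
  have hinv : MeasurePreserving f (μ : Measure X) (μ : Measure X) := by
    refine measurePreserving_of_integral hf _ fun g hg => ?_
    refine tendsto_nhds_unique (hmean _ (hg.comp hf)) ((hmean g hg).congr' ?_)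
    filter_upwards [hS] with ν hν
    exact (integral_comp_eq hν.1 hg).symm
  refine ⟨hinv, le_of_tendsto (hmean _ (Metric.continuous_infDist_pt Y)) ?_, ?_,
    tendsto_nhds_unique ((hmean φ hφ).congr' ?_) tendsto_const_nhds⟩
  · filter_upwards [hS] with ν hν using hν.2.1
  · refine le_of_forall_pos_le_add fun ε hε => ?_
    have h1 := husc μ hinv (kolSinai f μ + ε) (by linarith)
    have h2 : (U : Filter (ProbabilityMeasure X)) ≤ 𝓝[{μ : ProbabilityMeasure X |
        MeasurePreserving f (μ : Measure X) (μ : Measure X)}] μ :=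
      le_inf hU (le_principal_iff.2 (mem_of_superset hS fun ν hν => hν.1))
    have h3 : P - (kolSinai f μ + ε) ≤ ∫ x, ψ x ∂(μ : Measure X) := by
      refine ge_of_tendsto (hmean ψ hψ) ?_
      filter_upwards [hS, h2 h1] with ν hν hν1
      have := hν.2.2.1
      have hν2 : kolSinai f ν < kolSinai f μ + ε := hν1
      linarith
    linarith
  · filter_upwards [hS] with ν hν using hν.2.2.2

lemma le_of_mix {t a b A B : ℝ} (ht : 0 < t) (ht1 : t < 1) (ha : a ≤ A) (hb : b ≤ B)
    (h : t * A + (1 - t) * B ≤ t * a + (1 - t) * b) : A ≤ a ∧ B ≤ b := by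
  constructor <;> nlinarith [mul_le_mul_of_nonneg_left ha ht.le,
    mul_le_mul_of_nonneg_left hb (by linarith : 0 ≤ 1 - t)]

/-- If `α` is an extreme value of the mean of `φ` over the equilibrium states, and is attained, then
it is attained by an ergodic one: those equilibrium states form a closed face. -/
lemma exists_ergodic_equilibrium [CompactSpace X] [BorelSpace X] {f : X → X} (hf : Continuous f)
    (hfin : FiniteHtop f) (husc : UpperSemicontinuousOn
      (fun μ : ProbabilityMeasure X => kolSinai f (μ : Measure X))
      {μ : ProbabilityMeasure X | MeasurePreserving f (μ : Measure X) (μ : Measure X)})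
    {Y : Set X} (hY : IsClosed Y) (hYn : Y.Nonempty)
    {ψ φ : X → ℝ} (hψ : Continuous ψ) (hφ : Continuous φ)
    {P α : ℝ} (hP : (P : EReal) = pressure f Y ψ) (hne : (eqStates f Y ψ φ P α).Nonempty)
    (hext : (∀ β, (eqStates f Y ψ φ P β).Nonempty → β ≤ α) ∨
      (∀ β, (eqStates f Y ψ φ P β).Nonempty → α ≤ β)) :
    ∃ μ ∈ eqStates f Y ψ φ P α, Ergodic f (μ : Measure X) := by
  refine exists_ergodic_of_face _ (isClosed_eqStates hf husc Y hψ hφ P α) hne (fun μ hμ => hμ.1) ?_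
  rintro μ ⟨hμ, hμY, hμP, hμα⟩ ν₁ ν₂ t ht ht1 hν₁ hν₂ hmix
  have hd := integral_mix ht ht1 hmix (Metric.continuous_infDist_pt Y)
  have hd₁ : 0 ≤ ∫ x, Metric.infDist x Y ∂(ν₁ : Measure X) :=
    integral_nonneg fun x => Metric.infDist_nonneg
  have hd₂ : 0 ≤ ∫ x, Metric.infDist x Y ∂(ν₂ : Measure X) :=
    integral_nonneg fun x => Metric.infDist_nonneg
  have ht1' : 0 < 1 - t := by linarith
  obtain ⟨hY₁, hY₂⟩ : ∫ x, Metric.infDist x Y ∂(ν₁ : Measure X) ≤ 0 ∧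
      ∫ x, Metric.infDist x Y ∂(ν₂ : Measure X) ≤ 0 :=
    le_of_mix ht ht1 hd₁ hd₂ (by linarith)
  have hfe : ∀ ν : ProbabilityMeasure X, MeasurePreserving f (ν : Measure X) (ν : Measure X) →
      ∫ x, Metric.infDist x Y ∂(ν : Measure X) ≤ 0 →
      kolSinai f ν + ∫ x, ψ x ∂(ν : Measure X) ≤ P := by
    intro ν hν hνY
    have := free_energy_le hf (ν : Measure X) hν Y (measure_eq_one_of_infDist hY hYn _ hνY) ψ hψ
    rw [← hP] at this
    exact_mod_cast this
  have hh := kolSinai_mix_le (μ : Measure X) ν₁ ν₂ hν₁ hν₂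
    (entBdd_of_finiteHtop hf hfin _ inferInstance hν₁)
    (entBdd_of_finiteHtop hf hfin _ inferInstance hν₂) ht ht1 hmix
  have hψm := integral_mix ht ht1 hmix hψ
  obtain ⟨hP₁, hP₂⟩ := le_of_mix ht ht1 (hfe ν₁ hν₁ hY₁) (hfe ν₂ hν₂ hY₂) (by linarith)
  have hφm := integral_mix ht ht1 hmix hφ
  rw [hμα] at hφm
  have h1 : (eqStates f Y ψ φ P (∫ x, φ x ∂(ν₁ : Measure X))).Nonempty := ⟨ν₁, hν₁, hY₁, hP₁, rfl⟩
  have h2 : (eqStates f Y ψ φ P (∫ x, φ x ∂(ν₂ : Measure X))).Nonempty := ⟨ν₂, hν₂, hY₂, hP₂, rfl⟩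
  have h3 : ∫ x, φ x ∂(ν₁ : Measure X) = α ∧ ∫ x, φ x ∂(ν₂ : Measure X) = α := by
    rcases hext with hext | hext
    · obtain ⟨h4, h5⟩ := le_of_mix ht ht1 (hext _ h1) (hext _ h2) (by linarith)
      exact ⟨le_antisymm (hext _ h1) h4, le_antisymm (hext _ h2) h5⟩
    · obtain ⟨h4, h5⟩ := le_of_mix ht ht1 (hext _ h1) (hext _ h2) (by linarith)
      exact ⟨le_antisymm h4 (hext _ h1), le_antisymm h5 (hext _ h2)⟩
  exact ⟨⟨hν₁, hY₁, hP₁, h3.1⟩, ⟨hν₂, hY₂, hP₂, h3.2⟩⟩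

end Equilibrium

/-! ### Convexity of the pressure function -/

section PressureFunction

variable [MeasurableSpace X]

/-- The standing assumptions: `f` is continuous with finite entropy and upper semicontinuous entropy
map, `φ` is continuous, and `g q` is the pressure of `q φ` on a compact forward invariant set `Y`. -/
structure PressureSetup [CompactSpace X] [BorelSpace X] (f : X → X) (φ : X → ℝ) (Y : Set X)
    (g : ℝ → ℝ) : Prop where
  hf : Continuous f
  hfin : FiniteHtop f
  husc : UpperSemicontinuousOn
      (fun μ : ProbabilityMeasure X => kolSinai f (μ : Measure X))
      {μ : ProbabilityMeasure X | MeasurePreserving f (μ : Measure X) (μ : Measure X)}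
  hφ : Continuous φ
  hY : IsClosed Y
  hfY : MapsTo f Y Y
  hg : ∀ q : ℝ, ((g q : ℝ) : EReal) = pressure f Y (fun x => q * φ x)

variable [CompactSpace X] [BorelSpace X] {f : X → X} {φ : X → ℝ} {Y : Set X} {g : ℝ → ℝ}

/-- The equilibrium states of `q φ` on `Y` with mean `a`. -/
abbrev qStates (f : X → X) (φ : X → ℝ) (Y : Set X) (g : ℝ → ℝ) (q a : ℝ) :
    Set (ProbabilityMeasure X) :=
  eqStates f Y (fun x => q * φ x) φ (g q) a

namespace PressureSetup

lemma nonempty (h : PressureSetup f φ Y g) : Y.Nonempty := nonempty_of_pressure (h.hg 0)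

lemma cont (h : PressureSetup f φ Y g) (q : ℝ) : Continuous fun x => q * φ x :=
  continuous_const.mul h.hφ

lemma exists_state (h : PressureSetup f φ Y g) (q : ℝ) : ∃ a, (qStates f φ Y g q a).Nonempty := by
  obtain ⟨μ, hμ, hμY, hμP⟩ := exists_equilibrium h.hf h.hfin h.husc h.hY h.nonempty h.hfY
    (h.cont q) (h.hg q)
  refine ⟨∫ x, φ x ∂(μ : Measure X), μ, hμ, ?_, hμP.le, rfl⟩
  have h1 : ∀ᵐ x ∂(μ : Measure X), Metric.infDist x Y = 0 := by
    have h2 : (μ : Measure X) Yᶜ = 0 := (prob_compl_eq_zero_iff h.hY.measurableSet).2 hμY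
    filter_upwards [measure_eq_zero_iff_ae_notMem.1 h2] with x hx
    exact Metric.infDist_zero_of_mem (not_not.1 hx)
  rw [integral_congr_ae h1]
  simp

lemma free_energy (h : PressureSetup f φ Y g) (μ : ProbabilityMeasure X)
    (hμ : MeasurePreserving f (μ : Measure X) (μ : Measure X))
    (hμY : ∫ x, Metric.infDist x Y ∂(μ : Measure X) ≤ 0) (r : ℝ) :
    kolSinai f μ + r * ∫ x, φ x ∂(μ : Measure X) ≤ g r := by
  have := free_energy_le h.hf (μ : Measure X) hμ Y
    (measure_eq_one_of_infDist h.hY h.nonempty _ hμY) _ (h.cont r)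
  rw [← h.hg, integral_const_mul] at this
  exact_mod_cast this

lemma state_entropy (h : PressureSetup f φ Y g) {q a : ℝ} {μ : ProbabilityMeasure X}
    (hμ : μ ∈ qStates f φ Y g q a) : kolSinai f μ = g q - q * a := by
  have h1 := h.free_energy μ hμ.1 hμ.2.1 q
  have h2 := hμ.2.2.1
  rw [integral_const_mul] at h2
  rw [hμ.2.2.2] at h1 h2
  linarith

/-- The mean of an equilibrium state is the slope of a supporting line. -/
lemma subgradient (h : PressureSetup f φ Y g) {q a : ℝ}
    (ha : (qStates f φ Y g q a).Nonempty) (r : ℝ) : g q + a * (r - q) ≤ g r := by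
  obtain ⟨μ, hμ⟩ := ha
  have h1 := h.free_energy μ hμ.1 hμ.2.1 r
  rw [h.state_entropy hμ, hμ.2.2.2] at h1
  linarith

lemma abs_mean_le {K : ℝ} (hK : ∀ x, |φ x| ≤ K) (μ : ProbabilityMeasure X) :
    |∫ x, φ x ∂(μ : Measure X)| ≤ K := by
  have := norm_integral_le_of_norm_le_const (μ := (μ : Measure X)) (f := φ) (C := K)
    (ae_of_all _ hK)
  simpa using this

lemma lipschitz (h : PressureSetup f φ Y g) {K : ℝ} (hK : ∀ x, |φ x| ≤ K) (q r : ℝ) :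
    g r - g q ≤ K * |r - q| := by
  obtain ⟨a, ha⟩ := h.exists_state r
  have h1 := h.subgradient ha q
  obtain ⟨μ, hμ⟩ := ha
  have h2 := abs_mean_le hK μ
  rw [hμ.2.2.2] at h2
  have h3 : a * (r - q) ≤ K * |r - q| := (le_abs_self _).trans (by
    rw [abs_mul]; exact mul_le_mul_of_nonneg_right h2 (abs_nonneg _))
  linarith

lemma exists_bound (h : PressureSetup f φ Y g) : ∃ K, ∀ x, |φ x| ≤ K := by
  obtain ⟨K, hK⟩ := isCompact_univ.exists_bound_of_continuousOn h.hφ.continuousOn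
  exact ⟨K, fun x => hK x (mem_univ x)⟩

lemma continuous (h : PressureSetup f φ Y g) : Continuous g := by
  obtain ⟨K, hK⟩ := h.exists_bound
  refine (LipschitzWith.of_dist_le_mul (K := K.toNNReal) fun q r => ?_).continuous
  have hK0 : 0 ≤ K := by
    obtain ⟨x, -⟩ := h.nonempty
    exact (abs_nonneg _).trans (hK x)
  rw [Real.coe_toNNReal _ hK0, Real.dist_eq, Real.dist_eq, abs_le]
  have h1 := h.lipschitz hK q r
  have h2 := h.lipschitz hK r q
  rw [abs_sub_comm] at h1
  constructor <;> linarith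

lemma mem_lowerBounds_quot {q a : ℝ} (ha : ∀ r, g q + a * (r - q) ≤ g r) :
    a ∈ lowerBounds {m : ℝ | ∃ ε : ℝ, 0 < ε ∧ m = (g (q + ε) - g q) / ε} := by
  rintro _ ⟨ε, hε, rfl⟩
  rw [le_div_iff₀ hε]
  have := ha (q + ε)
  rw [add_sub_cancel_left] at this
  linarith

lemma mem_upperBounds_quot {q a : ℝ} (ha : ∀ r, g q + a * (r - q) ≤ g r) :
    a ∈ upperBounds {m : ℝ | ∃ ε : ℝ, 0 < ε ∧ m = (g q - g (q - ε)) / ε} := by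
  rintro _ ⟨ε, hε, rfl⟩
  rw [div_le_iff₀ hε]
  have := ha (q - ε)
  rw [sub_sub_cancel_left] at this
  linarith

/-- Slopes of supporting lines at `q` lie between the one-sided derivatives. -/
lemma mem_Icc_of_support {q a : ℝ}
    (ha : ∀ r, g q + a * (r - q) ≤ g r) : a ∈ Icc (Dminus g q) (Dplus g q) :=
  ⟨csSup_le ⟨_, 1, one_pos, rfl⟩ (mem_upperBounds_quot ha),
    le_csInf ⟨_, 1, one_pos, rfl⟩ (mem_lowerBounds_quot ha)⟩

lemma Dplus_le (h : PressureSetup f φ Y g) (q : ℝ) {ε : ℝ} (hε : 0 < ε) :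
    Dplus g q * ε ≤ g (q + ε) - g q := by
  obtain ⟨a, ha⟩ := h.exists_state q
  rw [← le_div_iff₀ hε]
  exact csInf_le ⟨a, mem_lowerBounds_quot (h.subgradient ha)⟩ ⟨ε, hε, rfl⟩

lemma le_Dminus (h : PressureSetup f φ Y g) (q : ℝ) {ε : ℝ} (hε : 0 < ε) :
    g q - g (q - ε) ≤ Dminus g q * ε := by
  obtain ⟨a, ha⟩ := h.exists_state q
  rw [← div_le_iff₀ hε]
  exact le_csSup ⟨a, mem_upperBounds_quot (h.subgradient ha)⟩ ⟨ε, hε, rfl⟩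

lemma state_mem_Icc (h : PressureSetup f φ Y g) {q a : ℝ} (ha : (qStates f φ Y g q a).Nonempty) :
    a ∈ Icc (Dminus g q) (Dplus g q) := mem_Icc_of_support (h.subgradient ha)

/-- Limits of equilibrium states along `q_k → q` are equilibrium states. -/
lemma exists_limit_state (h : PressureSetup f φ Y g) {q : ℝ} (p a : ℕ → ℝ)
    (hp : Tendsto p atTop (𝓝 q)) (ha : ∀ k, (qStates f φ Y g (p k) (a k)).Nonempty) :
    ∃ (U : Ultrafilter ℕ) (b : ℝ), (U : Filter ℕ) ≤ atTop ∧ Tendsto a U (𝓝 b) ∧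
      (qStates f φ Y g q b).Nonempty := by
  choose ν hν using ha
  obtain ⟨U, μ, hU, hμ, hμi, hμu⟩ := exists_limit_measure h.hf h.husc ν fun k => (hν k).1
  have hab : Tendsto a U (𝓝 (∫ x, φ x ∂(μ : Measure X))) :=
    (hμi φ h.hφ).congr fun k => (hν k).2.2.2
  have hpU := hp.mono_left hU
  refine ⟨U, _, hU, hab, μ, hμ, le_of_tendsto' (hμi _ (Metric.continuous_infDist_pt Y))
    fun k => (hν k).2.1, ?_, rfl⟩
  have h1 := hμu (fun k => g (p k) - p k * a k) _
    (((h.continuous.tendsto q).comp hpU).sub (hpU.mul hab)) fun k => (h.state_entropy (hν k)).ge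
  rw [integral_const_mul]
  linarith

lemma exists_state_Dplus (h : PressureSetup f φ Y g) (q : ℝ) :
    (qStates f φ Y g q (Dplus g q)).Nonempty := by
  choose a ha using fun k : ℕ => h.exists_state (q + 1 / (k + 1 : ℝ))
  have hp : Tendsto (fun k : ℕ => q + 1 / (k + 1 : ℝ)) atTop (𝓝 q) := by
    simpa using tendsto_const_nhds.add (tendsto_one_div_add_atTop_nhds_zero_nat (𝕜 := ℝ))
  obtain ⟨U, b, hU, hab, hb⟩ := h.exists_limit_state _ a hp ha
  have h1 : Dplus g q ≤ b := by
    refine ge_of_tendsto' hab fun k => ?_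
    have hε : (0 : ℝ) < 1 / (k + 1) := by positivity
    have h2 := h.subgradient (ha k) q
    have h3 := h.Dplus_le q hε
    refine le_of_mul_le_mul_right ?_ hε
    linarith
  rwa [le_antisymm h1 (h.state_mem_Icc hb).2]

lemma exists_state_Dminus (h : PressureSetup f φ Y g) (q : ℝ) :
    (qStates f φ Y g q (Dminus g q)).Nonempty := by
  choose a ha using fun k : ℕ => h.exists_state (q - 1 / (k + 1 : ℝ))
  have hp : Tendsto (fun k : ℕ => q - 1 / (k + 1 : ℝ)) atTop (𝓝 q) := by
    simpa using tendsto_const_nhds.sub (tendsto_one_div_add_atTop_nhds_zero_nat (𝕜 := ℝ))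
  obtain ⟨U, b, hU, hab, hb⟩ := h.exists_limit_state _ a hp ha
  have h1 : b ≤ Dminus g q := by
    refine le_of_tendsto' hab fun k => ?_
    have hε : (0 : ℝ) < 1 / (k + 1) := by positivity
    have h2 := h.subgradient (ha k) q
    have h3 := h.le_Dminus q hε
    refine le_of_mul_le_mul_right ?_ hε
    linarith
  rwa [← le_antisymm h1 (h.state_mem_Icc hb).1]

/-- At an endpoint of the subdifferential there is an ergodic equilibrium state. -/
lemma exists_ergodic_of_endpoint (h : PressureSetup f φ Y g) {q α : ℝ}
    (hα : α = Dminus g q ∨ α = Dplus g q) :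
    ∃ μ ∈ qStates f φ Y g q α, Ergodic f (μ : Measure X) := by
  rcases hα with rfl | rfl
  · exact exists_ergodic_equilibrium h.hf h.hfin h.husc h.hY h.nonempty (h.cont q) h.hφ (h.hg q)
      (h.exists_state_Dminus q) (Or.inr fun β hβ => (h.state_mem_Icc hβ).1)
  · exact exists_ergodic_equilibrium h.hf h.hfin h.husc h.hY h.nonempty (h.cont q) h.hφ (h.hg q)
      (h.exists_state_Dplus q) (Or.inl fun β hβ => (h.state_mem_Icc hβ).2)

end PressureSetup

end PressureFunction

/-! ### The predicted spectrum and its domain -/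

section Domain

lemma pressure_add_const_le {f : X → X} {Z : Set X} {ψ : X → ℝ} (c : ℝ) {r : ℝ}
    (h : pressure f Z ψ < r) : pressure f Z (fun x => ψ x + c) ≤ ((r + c : ℝ) : EReal) := by
  refine iSup₂_le fun δ hδ => ?_
  obtain ⟨s, hs, hm⟩ := exists_mP_of_pressure_lt h δ hδ
  have h1 : mP f Z (s + c) (fun x => ψ x + c) δ = mP f Z s ψ δ := by
    have h2 : ∀ p : X × ℕ, -(p.2 : ℝ) * (s + c) + birk f (fun x => ψ x + c) p.2 p.1
        = -(p.2 : ℝ) * s + birk f ψ p.2 p.1 := fun p => by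
      have := birk_affine f ψ 1 c p.2 p.1
      simp only [one_mul] at this
      rw [this]; ring
    simp only [mP, h2]
  have h3 : pressureAt f Z (fun x => ψ x + c) δ ≤ ((s + c : ℝ) : EReal) :=
    sInf_le ⟨s + c, h1.trans hm, rfl⟩
  exact h3.trans (EReal.coe_le_coe_iff.2 (by linarith))

lemma pressure_add_const {f : X → X} {Z : Set X} {ψ : X → ℝ} (c : ℝ) {P : ℝ}
    (hP : (P : EReal) = pressure f Z ψ) :
    pressure f Z (fun x => ψ x + c) = ((P + c : ℝ) : EReal) := by
  refine le_antisymm (le_of_forall_gt fun b hb => ?_) (le_of_not_gt fun hlt => ?_)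
  · obtain ⟨r, hr, hrb⟩ := EReal.lt_iff_exists_real_btwn.1 hb
    refine lt_of_le_of_lt ?_ hrb
    have h1 : pressure f Z ψ < ((r - c : ℝ) : EReal) := by
      rw [← hP, EReal.coe_lt_coe_iff]
      have := EReal.coe_lt_coe_iff.1 hr
      linarith
    simpa using pressure_add_const_le c h1
  · obtain ⟨r, hr, hrb⟩ := EReal.lt_iff_exists_real_btwn.1 hlt
    have h1 := pressure_add_const_le (-c) hr
    simp only [add_neg_cancel_right] at h1
    rw [← hP, EReal.coe_le_coe_iff] at h1
    have := EReal.coe_lt_coe_iff.1 hrb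
    linarith

lemma sspec_eq {f : X → X} {φ : X → ℝ} {T0 : ℝ → ℝ}
    (hT0 : ∀ q : ℝ, ((T0 q : ℝ) : EReal) = pressure f univ (fun x => q * φ x)) (α : ℝ) :
    Sspec f φ (fun _ => 1) (fun _ => 1) α = ⨅ q : ℝ, ((T0 q - q * α : ℝ) : EReal) := by
  refine iInf_congr fun q => ?_
  have h1 : ∀ t : ℝ, pressure f univ (potential φ (fun _ => 1) (fun _ => 1) α q t) ≤ 0 ↔
      T0 q - q * α ≤ t := fun t => by
    have h2 : potential φ (fun _ => 1) (fun _ => 1) α q t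
        = fun x => q * φ x + (-(q * α) - t) := by
      funext x
      simp only [potential]
      ring
    rw [h2, pressure_add_const _ (hT0 q), ← EReal.coe_zero, EReal.coe_le_coe_iff]
    constructor <;> intro <;> linarith
  refine le_antisymm (sInf_le ⟨_, (h1 _).2 le_rfl, rfl⟩) (le_sInf ?_)
  rintro _ ⟨t, ht, rfl⟩
  exact EReal.coe_le_coe_iff.2 ((h1 t).1 ht)

variable [MeasurableSpace X] [CompactSpace X] [BorelSpace X] {f : X → X} {φ : X → ℝ}
  {T0 : ℝ → ℝ}

lemma infDist_univ_le (μ : Measure X) : ∫ x, Metric.infDist x univ ∂μ ≤ 0 := by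
  have : ∀ x : X, Metric.infDist x univ = 0 := fun x => Metric.infDist_zero_of_mem (mem_univ x)
  simp [this]

/-- The convex combinations of two invariant measures realize all intermediate means. -/
lemma exists_mean_between {μ ν : ProbabilityMeasure X} (hφ : Continuous φ)
    (hμ : MeasurePreserving f (μ : Measure X) (μ : Measure X))
    (hν : MeasurePreserving f (ν : Measure X) (ν : Measure X)) {α : ℝ}
    (h1 : ∫ x, φ x ∂(μ : Measure X) ≤ α) (h2 : α ≤ ∫ x, φ x ∂(ν : Measure X)) :
    ∃ m ∈ invProb f, α = ∫ x, φ x ∂m := by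
  obtain ⟨s, t, hs, ht, hst, hα⟩ : α ∈ segment ℝ (∫ x, φ x ∂(μ : Measure X))
      (∫ x, φ x ∂(ν : Measure X)) := by
    rw [segment_eq_Icc (h1.trans h2)]
    exact ⟨h1, h2⟩
  refine ⟨ENNReal.ofReal s • (μ : Measure X) + ENNReal.ofReal t • (ν : Measure X), ⟨⟨?_⟩, ?_⟩, ?_⟩
  · simp [← ENNReal.ofReal_add hs ht, hst]
  · refine ⟨hμ.measurable, ?_⟩
    rw [Measure.map_add _ _ hμ.measurable, Measure.map_smul, Measure.map_smul, hμ.map_eq, hν.map_eq]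
  · rw [integral_add_measure ((integrable_cont hφ _).smul_measure ENNReal.ofReal_ne_top)
      ((integrable_cont hφ _).smul_measure ENNReal.ofReal_ne_top), integral_smul_measure,
      integral_smul_measure, ENNReal.toReal_ofReal hs, ENNReal.toReal_ofReal ht]
    exact hα.symm

namespace PressureSetup

lemma nonneg_of_mean (h : PressureSetup f φ univ T0) {μ : ProbabilityMeasure X}
    (hμ : MeasurePreserving f (μ : Measure X) (μ : Measure X)) (q : ℝ) :
    q * ∫ x, φ x ∂(μ : Measure X) ≤ T0 q := by
  have h1 := h.free_energy μ hμ (infDist_univ_le _) q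
  have h2 := kolSinai_nonneg (μ : Measure X) (entBdd_of_finiteHtop h.hf h.hfin _ inferInstance hμ)
  linarith

lemma bddAbove_Dplus (h : PressureSetup f φ univ T0) : BddAbove (range (Dplus T0)) := by
  obtain ⟨K, hK⟩ := h.exists_bound
  refine ⟨K, ?_⟩
  rintro _ ⟨q, rfl⟩
  obtain ⟨μ, hμ⟩ := h.exists_state_Dplus q
  rw [← hμ.2.2.2]
  exact (abs_le.1 (abs_mean_le hK μ)).2

lemma bddBelow_Dminus (h : PressureSetup f φ univ T0) : BddBelow (range (Dminus T0)) := by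
  obtain ⟨K, hK⟩ := h.exists_bound
  refine ⟨-K, ?_⟩
  rintro _ ⟨q, rfl⟩
  obtain ⟨μ, hμ⟩ := h.exists_state_Dminus q
  rw [← hμ.2.2.2]
  exact (abs_le.1 (abs_mean_le hK μ)).1

lemma le_iSup_Dplus (h : PressureSetup f φ univ T0) {α : ℝ} (hα : ∀ q, q * α ≤ T0 q) :
    α ≤ ⨆ q : ℝ, Dplus T0 q := by
  refine le_of_forall_pos_le_add fun ε hε => ?_
  obtain ⟨n, hn⟩ := exists_nat_gt (T0 0 / ε)
  rw [div_lt_iff₀ hε] at hn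
  have hT : 0 ≤ T0 0 := by simpa using hα 0
  have hn0 : (0 : ℝ) < n := by nlinarith
  have h1 := le_ciSup h.bddAbove_Dplus (n : ℝ)
  have h2 := h.subgradient (h.exists_state_Dplus n) 0
  have h3 := hα n
  have h4 : (n : ℝ) * α ≤ n * (Dplus T0 n + ε) := by linarith
  linarith [le_of_mul_le_mul_left h4 hn0]

lemma iInf_Dminus_le (h : PressureSetup f φ univ T0) {α : ℝ} (hα : ∀ q, q * α ≤ T0 q) :
    ⨅ q : ℝ, Dminus T0 q ≤ α := by
  refine le_of_forall_pos_le_add fun ε hε => ?_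
  obtain ⟨n, hn⟩ := exists_nat_gt (T0 0 / ε)
  rw [div_lt_iff₀ hε] at hn
  have hT : 0 ≤ T0 0 := by simpa using hα 0
  have hn0 : (0 : ℝ) < n := by nlinarith
  have h1 := ciInf_le h.bddBelow_Dminus (-(n : ℝ))
  have h2 := h.subgradient (h.exists_state_Dminus (-(n : ℝ))) 0
  have h3 := hα (-(n : ℝ))
  have h4 : (n : ℝ) * Dminus T0 (-n) ≤ n * (α + ε) := by linarith
  linarith [le_of_mul_le_mul_left h4 hn0]

lemma domain_eq_Icc (h : PressureSetup f φ univ T0) (α : ℝ) :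
    (∀ q, q * α ≤ T0 q) ↔ α ∈ Icc (⨅ q : ℝ, Dminus T0 q) (⨆ q : ℝ, Dplus T0 q) := by
  refine ⟨fun hα => ⟨h.iInf_Dminus_le hα, h.le_iSup_Dplus hα⟩, fun hα q => ?_⟩
  rcases le_total 0 q with hq | hq
  · refine (mul_le_mul_of_nonneg_left hα.2 hq).trans ?_
    rw [Real.mul_iSup_of_nonneg hq]
    refine ciSup_le fun r => ?_
    obtain ⟨μ, hμ⟩ := h.exists_state_Dplus r
    have := h.nonneg_of_mean hμ.1 q
    rwa [hμ.2.2.2] at this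
  · refine (mul_le_mul_of_nonpos_left hα.1 hq).trans ?_
    rw [Real.mul_iInf_of_nonpos hq]
    refine ciSup_le fun r => ?_
    obtain ⟨μ, hμ⟩ := h.exists_state_Dminus r
    have := h.nonneg_of_mean hμ.1 q
    rwa [hμ.2.2.2] at this

/-- Every slope in the domain is a mean: the equilibrium states of `q φ` approach the extreme means
as `q → ±∞`. -/
lemma domain_eq_means (h : PressureSetup f φ univ T0) (α : ℝ) :
    (∀ q, q * α ≤ T0 q) ↔ ∃ μ ∈ invProb f, α = ∫ x, φ x ∂μ := by
  constructor
  · intro hα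
    have hT : 0 ≤ T0 0 := by simpa using hα 0
    have key : ∀ σ : ℝ, σ * σ = 1 → ∃ μ : ProbabilityMeasure X,
        MeasurePreserving f (μ : Measure X) (μ : Measure X) ∧
        σ * α ≤ σ * ∫ x, φ x ∂(μ : Measure X) := by
      intro σ hσ
      choose a ν hν using fun k : ℕ => h.exists_state (σ * (k + 1 : ℝ))
      obtain ⟨U, μ, hU, hμ, hμi, -⟩ := exists_limit_measure h.hf h.husc ν fun k => (hν k).1
      refine ⟨μ, hμ, ?_⟩
      have h1 : Tendsto (fun k : ℕ => σ * ∫ x, φ x ∂(ν k : Measure X) + T0 0 * (1 / (k + 1 : ℝ))) U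
          (𝓝 (σ * ∫ x, φ x ∂(μ : Measure X) + T0 0 * 0)) :=
        ((hμi φ h.hφ).const_mul σ).add
          ((tendsto_one_div_add_atTop_nhds_zero_nat.mono_left hU).const_mul _)
      rw [mul_zero, add_zero] at h1
      refine ge_of_tendsto' h1 fun k => ?_
      have hk : (0 : ℝ) < k + 1 := by positivity
      have h2 := h.subgradient ⟨ν k, hν k⟩ 0
      have h3 := hα (σ * (k + 1 : ℝ))
      rw [(hν k).2.2.2]
      refine le_of_mul_le_mul_right ?_ hk
      rw [add_mul, mul_assoc (T0 0), one_div, inv_mul_cancel₀ hk.ne']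
      linarith
    obtain ⟨μ, hμ, h1⟩ := key (-1) (by norm_num)
    obtain ⟨ν, hν, h2⟩ := key 1 (by norm_num)
    exact exists_mean_between h.hφ hμ hν (by linarith) (by linarith)
  · rintro ⟨μ, ⟨hμP, hμ⟩, rfl⟩ q
    exact h.nonneg_of_mean (μ := ⟨μ, hμP⟩) hμ q

lemma mem_domain_of_mem_Kbirk (h : PressureSetup f φ univ T0) {α : ℝ} {x : X}
    (hx : x ∈ Kbirk f φ α) (q : ℝ) : q * α ≤ T0 q := by
  have key : ∀ ε > 0, q * α ≤ T0 q + |q| * ε := by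
    intro ε hε
    obtain ⟨M, hM⟩ := eventually_atTop.1
      ((tendsto_order.1 hx).1 (α - ε) (by linarith) |>.and
        ((tendsto_order.1 hx).2 (α + ε) (by linarith)))
    have hM' : ∀ k, (k + M + 1 : ℕ) * (α - ε) ≤ birk f φ (k + M + 1) x ∧
        birk f φ (k + M + 1) x ≤ (k + M + 1 : ℕ) * (α + ε) := by
      intro k
      have h0 : (0 : ℝ) < (k + M + 1 : ℕ) := by positivity
      obtain ⟨h1, h2⟩ := hM (k + M + 1) (by omega)
      rw [lt_div_iff₀ h0] at h1
      rw [div_lt_iff₀ h0] at h2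
      constructor <;> linarith
    obtain ⟨μ, hμ, -, hμg⟩ := misiurewicz f h.hf (entBdd_of_finiteHtop h.hf h.hfin) 1 one_pos
      (fun k => k + M + 1) (fun k => by omega)
      (tendsto_atTop_mono (fun k => show k ≤ k + M + 1 by omega) tendsto_id) (fun _ => {x})
      (fun _ => Finset.singleton_nonempty x)
      (fun k => by
        intro y hy z hz hyz
        simp only [Finset.coe_singleton, mem_singleton_iff] at hy hz
        exact absurd (hy.trans hz.symm) hyz)
      (fun _ => 0) continuous_const 0 (fun k => by simp [birk])
    have h1 := hμg φ h.hφ (α + ε) fun k y hy => by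
      rw [Finset.mem_singleton.1 hy]
      exact (hM' k).2
    have h2 := hμg (fun x => -φ x) h.hφ.neg (-(α - ε)) fun k y hy => by
      have h3 : birk f (fun y => -φ y) (k + M + 1) x = -birk f φ (k + M + 1) x := by simp [birk]
      rw [Finset.mem_singleton.1 hy, h3]
      linarith [(hM' k).1]
    rw [integral_neg] at h2
    have h4 := h.nonneg_of_mean hμ q
    have h5 : |α - ∫ x, φ x ∂(μ : Measure X)| ≤ ε := by
      rw [abs_le]; constructor <;> linarith
    have h6 : q * (α - ∫ x, φ x ∂(μ : Measure X)) ≤ |q| * ε := (le_abs_self _).trans (by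
      rw [abs_mul]; exact mul_le_mul_of_nonneg_left h5 (abs_nonneg _))
    linarith
  refine le_of_forall_pos_le_add fun ε hε => ?_
  refine (key (ε / (|q| + 1)) (by positivity)).trans ?_
  have h1 : |q| * (ε / (|q| + 1)) ≤ ε := by
    rw [mul_div_assoc', div_le_iff₀ (by positivity)]
    nlinarith [abs_nonneg q]
  linarith

end PressureSetup

end Domain

/-! ### Coarse spectra -/

section Coarse

lemma lam_spec [CompactSpace X] {f : X → X} (hf : Continuous f) (φ : X → ℝ) (n : ℕ) {δ : ℝ}
    (hδ : 0 < δ) (U : Set ℝ) :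
    ∃ E : Finset X, E.card = Lam f φ n δ U ∧ Gset f φ n U ⊆ ⋃ x ∈ E, bowenBall f x n δ := by
  obtain ⟨E, -, -, hE⟩ := exists_maximal_sep hf (Gset f φ n U) n δ hδ
  exact Nat.sInf_mem (s := {m : ℕ | ∃ E : Finset X, E.card = m ∧
    Gset f φ n U ⊆ ⋃ x ∈ E, bowenBall f x n δ}) ⟨_, E, rfl, hE⟩

/-- Recentring: a set covered by finitely many Bowen balls is covered by as many balls of twice the
radius centred in the set. -/
lemma exists_recentred {f : X → X} {A : Set X} {n : ℕ} {δ : ℝ} (E : Finset X)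
    (hE : A ⊆ ⋃ x ∈ E, bowenBall f x n (δ / 2)) :
    ∃ E' : Finset X, (E' : Set X) ⊆ A ∧ E'.card ≤ E.card ∧ A ⊆ ⋃ x ∈ E', bowenBall f x n δ := by
  classical
  rcases A.eq_empty_or_nonempty with rfl | ⟨a, ha⟩
  · exact ⟨∅, by simp, by simp, by simp⟩
  have h1 : ∀ x : X, ∃ y ∈ A, (∃ z ∈ A, z ∈ bowenBall f x n (δ / 2)) →
      y ∈ bowenBall f x n (δ / 2) := by
    intro x
    by_cases h : ∃ z ∈ A, z ∈ bowenBall f x n (δ / 2)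
    · obtain ⟨z, hz, hzx⟩ := h
      exact ⟨z, hz, fun _ => hzx⟩
    · exact ⟨a, ha, fun h' => absurd h' h⟩
  choose y hyA hy using h1
  refine ⟨E.image y, ?_, Finset.card_image_le, fun z hz => ?_⟩
  · intro z hz
    obtain ⟨x, -, rfl⟩ := Finset.mem_image.1 (Finset.mem_coe.1 hz)
    exact hyA x
  · obtain ⟨x, hx, hzx⟩ := mem_iUnion₂.1 (hE hz)
    refine mem_iUnion₂.2 ⟨y x, Finset.mem_image_of_mem y hx, fun k hk => ?_⟩
    have h2 := hy x ⟨z, hz, hzx⟩ k hk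
    have h3 := hzx k hk
    calc dist (f^[k] (y x)) (f^[k] z) ≤ dist (f^[k] x) (f^[k] (y x)) + dist (f^[k] x) (f^[k] z) :=
          dist_triangle_left _ _ _
      _ < δ := by linarith

lemma card_le_of_elogn_lt {m n : ℕ} (hn : 0 < n) {c : ℝ} (h : elogn m n < c) :
    (m : ℝ) ≤ Real.exp (n * c) := by
  unfold elogn at h
  split_ifs at h with hm
  · rw [hm, Nat.cast_zero]; exact (Real.exp_pos _).le
  · rw [EReal.coe_lt_coe_iff, div_lt_iff₀ (by exact_mod_cast hn)] at h
    rw [← Real.log_le_iff_le_exp (by exact_mod_cast Nat.pos_of_ne_zero hm)]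
    linarith

lemma coverSum_iUnion_le (E : ℕ → Set (X × ℕ)) (w : X × ℕ → ℝ) :
    coverSum (⋃ M, E M) w ≤ ∑' M, coverSum (E M) w :=
  ENNReal.tsum_iUnion_le_tsum (fun p => ENNReal.ofReal (Real.exp (w p))) E

lemma htop_le_lF [CompactSpace X] {f : X → X} (hf : Continuous f) (φ : X → ℝ) (α : ℝ) :
    pressure f (Kbirk f φ α) (fun _ => 0) ≤ lFspec f φ α := by
  refine le_iInf₂ fun U hU => iSup₂_le fun δ hδ => ?_
  refine le_trans ?_ (le_iSup₂ (f := fun (δ : ℝ) (_ : 0 < δ) =>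
    Filter.liminf (fun n : ℕ => elogn (Lam f φ n δ U) n) atTop) (δ / 2) (half_pos hδ))
  refine le_of_forall_gt fun b hb => ?_
  obtain ⟨c, hc, hcb⟩ := EReal.lt_iff_exists_real_btwn.1 hb
  obtain ⟨c', hc', hc'c⟩ := EReal.lt_iff_exists_real_btwn.1 hc
  refine lt_of_le_of_lt (sInf_le ⟨c, ?_, rfl⟩) hcb
  have hcc : c' < c := EReal.coe_lt_coe_iff.1 hc'c
  have hfreq : ∃ᶠ n : ℕ in atTop, elogn (Lam f φ n (δ / 2) U) n < c' :=
    frequently_lt_of_liminf_lt (by isBoundedDefault) hc'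
  refine mP_eq_zero_of_covers fun ε hε N => ?_
  have hlim : Tendsto (fun n : ℕ => Real.exp (-((n : ℝ) * (c - c')))) atTop (𝓝 0) :=
    Real.tendsto_exp_neg_atTop_nhds_zero.comp
      (tendsto_natCast_atTop_atTop.atTop_mul_const (sub_pos.2 hcc))
  have hex : ∀ M : ℕ, ∃ n : ℕ, elogn (Lam f φ n (δ / 2) U) n < c' ∧
      Real.exp (-((n : ℝ) * (c - c'))) < ε / 2 * (1 / 2) ^ M ∧ M ≤ n ∧ N ≤ n ∧ 0 < n := fun M =>
    (hfreq.and_eventually ((hlim.eventually_lt_const (by positivity)).and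
      ((eventually_ge_atTop M).and ((eventually_ge_atTop N).and (eventually_gt_atTop 0))))).exists
  choose n hn1 hn2 hnM hnN hn0 using hex
  set A : ℕ → Set X := fun M => {x ∈ Kbirk f φ α | ∀ k ≥ M, birk f φ k x / k ∈ U} with hA
  have hex2 : ∀ M, ∃ E : Finset X, (E : Set X) ⊆ A M ∧ (E.card : ℝ) ≤ Real.exp (n M * c') ∧
      A M ⊆ ⋃ x ∈ E, bowenBall f x (n M) δ := by
    intro M
    obtain ⟨E, hEc, hE⟩ := lam_spec hf φ (n M) (half_pos hδ) U
    obtain ⟨E', h1, h2, h3⟩ := exists_recentred (A := A M) E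
      (Subset.trans (fun x hx => hx.2 (n M) (hnM M)) hE)
    refine ⟨E', h1, ?_, h3⟩
    refine le_trans ?_ (card_le_of_elogn_lt (hn0 M) (hn1 M))
    rw [← hEc]
    exact_mod_cast h2
  choose E hEA hEc hE using hex2
  refine ⟨⋃ M, (fun x => (x, n M)) '' (E M : Set X), ⟨countable_iUnion fun M =>
    ((E M).finite_toSet.image _).countable, ?_, ?_⟩, ?_⟩
  · intro p hp
    obtain ⟨M, x, hx, rfl⟩ := mem_iUnion.1 hp
    exact ⟨(hEA M hx).1, hnN M⟩
  · intro x hx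
    obtain ⟨M, hM⟩ := eventually_atTop.1 (Filter.Tendsto.eventually hx hU)
    obtain ⟨y, hy, hyx⟩ := mem_iUnion₂.1 (hE M ⟨hx, hM⟩)
    exact mem_iUnion₂.2 ⟨(y, n M), mem_iUnion.2 ⟨M, y, hy, rfl⟩, hyx⟩
  · refine (coverSum_iUnion_le _ _).trans ?_
    have h1 : ∀ M, coverSum ((fun x => (x, n M)) '' (E M : Set X))
        (fun p => -(p.2 : ℝ) * c + birk f (fun _ => 0) p.2 p.1)
        ≤ ENNReal.ofReal (ε / 2 * (1 / 2) ^ M) := by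
      intro M
      rw [coverSum_finset]
      refine ENNReal.ofReal_le_ofReal ?_
      have h2 : ∀ x, birk f (fun _ => 0) (n M) x = 0 := fun x => by simp [birk]
      simp only [h2, add_zero, Finset.sum_const, nsmul_eq_mul]
      calc _ ≤ Real.exp (n M * c') * Real.exp (-(n M : ℝ) * c) :=
            mul_le_mul_of_nonneg_right (hEc M) (Real.exp_pos _).le
        _ = Real.exp (-((n M : ℝ) * (c - c'))) := by rw [← Real.exp_add]; congr 1; ring
        _ ≤ _ := (hn2 M).le
    refine (ENNReal.tsum_le_tsum h1).trans ?_
    rw [← ENNReal.ofReal_tsum_of_nonneg (fun M => by positivity)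
      (summable_geometric_two.mul_left _), tsum_mul_left, tsum_geometric_two, div_mul_cancel₀ _ two_ne_zero]

lemma lF_le_uF (f : X → X) (φ : X → ℝ) (α : ℝ) : lFspec f φ α ≤ uFspec f φ α :=
  iInf₂_mono fun _ _ => iSup₂_mono fun _ _ => liminf_le_limsup

variable [MeasurableSpace X] [CompactSpace X] [BorelSpace X] {f : X → X} {φ : X → ℝ}
  {T0 : ℝ → ℝ}

/-- Many separated orbits with averages near `α` carry an invariant measure of large entropy with
mean near `α`, which is bounded by the pressure. -/
lemma uF_le (h : PressureSetup f φ univ T0) (α q : ℝ) :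
    uFspec f φ α ≤ ((T0 q - q * α : ℝ) : EReal) := by
  refine le_of_forall_gt fun b hb => ?_
  obtain ⟨c, hc, hcb⟩ := EReal.lt_iff_exists_real_btwn.1 hb
  rw [EReal.coe_lt_coe_iff] at hc
  refine lt_of_le_of_lt ?_ hcb
  set η := (c - (T0 q - q * α)) / (2 * (|q| + 1)) with hη
  have hη0 : 0 < η := div_pos (by linarith) (by positivity)
  refine (iInf₂_le (Metric.ball α η) (Metric.ball_mem_nhds α hη0)).trans
    (iSup₂_le fun δ hδ => le_of_not_gt fun hlt => ?_)
  have hfreq : ∃ᶠ n : ℕ in atTop, (c : EReal) < elogn (Lam f φ n δ (Metric.ball α η)) n :=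
    frequently_lt_of_lt_limsup (by isBoundedDefault) hlt
  have hfreq2 : ∃ᶠ n : ℕ in atTop, 0 < n ∧ ∃ E : Finset X,
      (E : Set X) ⊆ Gset f φ n (Metric.ball α η) ∧ IsSep f n δ E ∧ E.Nonempty ∧
      n * c ≤ Real.log E.card := by
    refine (hfreq.and_eventually (eventually_gt_atTop 0)).mono fun n hn => ⟨hn.2, ?_⟩
    obtain ⟨E, h1, h2, h3⟩ := exists_maximal_sep h.hf (Gset f φ n (Metric.ball α η)) n δ hδ
    have h4 : Lam f φ n δ (Metric.ball α η) ≤ E.card := Nat.sInf_le ⟨E, rfl, h3⟩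
    have h5 := hn.1
    unfold elogn at h5
    split_ifs at h5 with h6
    · exact absurd h5 not_lt_bot
    · rw [EReal.coe_lt_coe_iff, lt_div_iff₀ (by exact_mod_cast hn.2)] at h5
      have h7 : 0 < Lam f φ n δ (Metric.ball α η) := Nat.pos_of_ne_zero h6
      refine ⟨E, h1, h2, Finset.card_pos.1 (h7.trans_le h4), ?_⟩
      have := Real.log_le_log (by exact_mod_cast h7) (Nat.cast_le (α := ℝ).2 h4)
      linarith
  obtain ⟨N, hNmono, hN⟩ := extraction_of_frequently_atTop hfreq2
  choose hN0 E hEG hEs hEn hEc using hN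
  obtain ⟨μ, hμ, hμc, hμg⟩ := misiurewicz f h.hf (entBdd_of_finiteHtop h.hf h.hfin) δ hδ N hN0
    hNmono.tendsto_atTop E hEn hEs (fun _ => 0) continuous_const c (fun k => by
      have h1 : ∀ x, birk f (fun _ => 0) (N k) x = 0 := fun x => by simp [birk]
      simpa [h1] using hEc k)
  have hG : ∀ k, ∀ x ∈ E k, N k * (α - η) ≤ birk f φ (N k) x ∧
      birk f φ (N k) x ≤ N k * (α + η) := by
    intro k x hx
    have h0 : (0 : ℝ) < N k := by exact_mod_cast hN0 k
    have h1 : dist (birk f φ (N k) x / N k) α < η := hEG k hx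
    rw [Real.dist_eq, abs_lt, sub_lt_iff_lt_add, div_lt_iff₀ h0, neg_lt_sub_iff_lt_add,
      ← sub_lt_iff_lt_add', lt_div_iff₀ h0] at h1
    constructor <;> linarith
  have h1 := hμg φ h.hφ (α + η) fun k x hx => (hG k x hx).2
  have h2 := hμg (fun x => -φ x) h.hφ.neg (-(α - η)) fun k x hx => by
    have h3 : birk f (fun y => -φ y) (N k) x = -birk f φ (N k) x := by simp [birk]
    rw [h3]
    linarith [(hG k x hx).1]
  rw [integral_neg] at h2
  have h4 := h.free_energy μ hμ (infDist_univ_le _) q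
  have h5 : |α - ∫ x, φ x ∂(μ : Measure X)| ≤ η := by
    rw [abs_le]; constructor <;> linarith
  have h6 : q * (α - ∫ x, φ x ∂(μ : Measure X)) ≤ |q| * η := (le_abs_self _).trans (by
    rw [abs_mul]; exact mul_le_mul_of_nonneg_left h5 (abs_nonneg _))
  have h7 : η * (2 * (|q| + 1)) = c - (T0 q - q * α) := div_mul_cancel₀ _ (by positivity)
  simp only [integral_zero, add_zero] at hμc
  have h8 : 0 ≤ |q| * η := by positivity
  linarith

/-- The formalism holds as soon as ergodic measures with mean `α` nearly attain the predicted
value. -/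
lemma formalism_of_ergodic (h : PressureSetup f φ univ T0) {α : ℝ}
    (H : ∀ ε > 0, ∃ μ : Measure X, IsProbabilityMeasure μ ∧ Ergodic f μ ∧ ∫ x, φ x ∂μ = α ∧
      ∃ q, T0 q - q * α - ε ≤ kolSinai f μ) : BirkFormalism f φ T0 α := by
  set S : EReal := ⨅ q : ℝ, ((T0 q - q * α : ℝ) : EReal) with hS
  set K := Kbirk f φ α with hK
  have hKh : ∀ μ : Measure X, IsProbabilityMeasure μ → Ergodic f μ → μ K = 1 →
      (kolSinai f μ : EReal) ≤ pressure f K (fun _ => 0) := by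
    intro μ hμP hμ hμK
    have := free_energy_le h.hf μ hμ.toMeasurePreserving K hμK (fun _ => 0) continuous_const
    simpa using this
  have H' : ∀ b < S, ∃ μ : Measure X, IsProbabilityMeasure μ ∧ Ergodic f μ ∧ ∫ x, φ x ∂μ = α ∧
      b < kolSinai f μ := by
    intro b hb
    obtain ⟨r', hr', hr'S⟩ := EReal.lt_iff_exists_real_btwn.1 hb
    obtain ⟨r, hbr, hrr⟩ := EReal.lt_iff_exists_real_btwn.1 hr'
    obtain ⟨μ, hμP, hμ, hμα, q, hq⟩ := H (r' - r) (sub_pos.2 (EReal.coe_lt_coe_iff.1 hrr))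
    refine ⟨μ, hμP, hμ, hμα, hbr.trans_le (EReal.coe_le_coe_iff.2 ?_)⟩
    have h1 : r' < T0 q - q * α :=
      EReal.coe_lt_coe_iff.1 (hr'S.trans_le (iInf_le (fun q : ℝ => ((T0 q - q * α : ℝ) : EReal)) q))
    linarith
  have hSK : S ≤ pressure f K (fun _ => 0) := by
    refine le_of_forall_lt fun b hb => ?_
    obtain ⟨μ, hμP, hμ, hμα, hbμ⟩ := H' b hb
    exact hbμ.trans_le (hKh μ hμP hμ (kbirk_measure_one h.hf hμ h.hφ hμα))
  have h1 := htop_le_lF h.hf φ α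
  have h2 := lF_le_uF f φ α
  have h3 : uFspec f φ α ≤ S := le_iInf fun q => uF_le h α q
  refine ⟨le_antisymm h1 (h2.trans (h3.trans hSK)), le_antisymm h2 (h3.trans (hSK.trans h1)),
    le_antisymm h3 (hSK.trans (h1.trans h2)), le_antisymm ?_ (sSup_le ?_),
    le_antisymm ?_ (sSup_le ?_)⟩
  · refine le_of_forall_lt fun b hb => ?_
    obtain ⟨μ, hμP, hμ, hμα, hbμ⟩ := H' b hb
    exact hbμ.trans_le (le_sSup ⟨μ, ⟨hμP, hμ.toMeasurePreserving⟩, hμα, rfl⟩)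
  · rintro _ ⟨μ, ⟨hμP, hμ⟩, rfl, rfl⟩
    refine le_iInf fun q => EReal.coe_le_coe_iff.2 ?_
    have := h.free_energy ⟨μ, hμP⟩ hμ (infDist_univ_le _) q
    change kolSinai f μ + q * ∫ x, φ x ∂μ ≤ T0 q at this
    linarith
  · refine le_of_forall_lt fun b hb => ?_
    obtain ⟨μ, hμP, hμ, hμα, hbμ⟩ := H' b hb
    exact hbμ.trans_le (le_sSup ⟨μ, hμP, hμ, kbirk_measure_one h.hf hμ h.hφ hμα, rfl⟩)
  · rintro _ ⟨μ, hμP, hμ, hμK, rfl⟩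
    exact (hKh μ hμP hμ hμK).trans (h1.trans (h2.trans h3))

end Coarse

/-! ### Slopes in the interior of the domain -/

section Interior

variable [MeasurableSpace X] [CompactSpace X] [BorelSpace X] {f : X → X} {φ : X → ℝ}
  {T0 : ℝ → ℝ}

lemma nonneg_sspec_iff
    (hT0 : ∀ q : ℝ, ((T0 q : ℝ) : EReal) = pressure f univ (fun x => q * φ x)) (α : ℝ) :
    0 ≤ Sspec f φ (fun _ => 1) (fun _ => 1) α ↔ ∀ q, q * α ≤ T0 q := by
  rw [sspec_eq hT0, le_iInf_iff]
  refine forall_congr' fun q => ?_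
  rw [← EReal.coe_zero, EReal.coe_le_coe_iff, sub_nonneg]

lemma coercive_of_interior {α : ℝ} (hα : α ∈ interior {β : ℝ | ∀ q, q * β ≤ T0 q}) :
    ∃ ε > 0, ∀ q, |q| * ε ≤ T0 q - q * α := by
  obtain ⟨η, hη, hball⟩ := Metric.mem_nhds_iff.1 (mem_interior_iff_mem_nhds.1 hα)
  have hm : ∀ s : ℝ, |s| < η → ∀ q, q * (α + s) ≤ T0 q := fun s hs =>
    hball (by rw [Metric.mem_ball, Real.dist_eq, add_sub_cancel_left]; exact hs)
  refine ⟨η / 2, half_pos hη, fun q => ?_⟩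
  have h1 := hm (η / 2) (by rw [abs_of_pos (half_pos hη)]; linarith) q
  have h2 := hm (-(η / 2)) (by rw [abs_neg, abs_of_pos (half_pos hη)]; linarith) q
  rcases abs_cases q with ⟨h, -⟩ | ⟨h, -⟩ <;> rw [h] <;> linarith

/-- Interior slopes are slopes of supporting lines, by coercivity of `q ↦ T_0(q) - q α`. -/
lemma exists_support (h : PressureSetup f φ univ T0) {α : ℝ}
    (hα : α ∈ interior {β : ℝ | ∀ q, q * β ≤ T0 q}) :
    ∃ q, ∀ r, T0 q + α * (r - q) ≤ T0 r := by
  obtain ⟨ε, hε, hc⟩ := coercive_of_interior hα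
  set R := T0 0 / ε with hR
  have hT : 0 ≤ T0 0 := by simpa using hc 0
  have hR0 : 0 ≤ R := div_nonneg hT hε.le
  obtain ⟨q, hq, hmin⟩ := (isCompact_Icc (a := -R) (b := R)).exists_isMinOn
    ⟨0, by linarith, hR0⟩ (f := fun q => T0 q - q * α)
    ((h.continuous.sub (continuous_id.mul continuous_const)).continuousOn)
  have hmin' : ∀ r ∈ Icc (-R) R, T0 q - q * α ≤ T0 r - r * α := fun r hr => hmin hr
  refine ⟨q, fun r => ?_⟩
  suffices T0 q - q * α ≤ T0 r - r * α by linarith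
  by_cases hr : r ∈ Icc (-R) R
  · exact hmin' r hr
  · have h1 : R < |r| := by
      by_contra h2
      exact hr (abs_le.1 (not_lt.1 h2))
    have h2 : T0 0 ≤ |r| * ε := by
      have := mul_le_mul_of_nonneg_right h1.le hε.le
      rwa [hR, div_mul_cancel₀ _ hε.ne'] at this
    have h3 := hmin' 0 ⟨by linarith, hR0⟩
    rw [zero_mul, sub_zero] at h3
    exact h3.trans (h2.trans (hc r))

lemma formalism_of_not_interior (h : PressureSetup f φ univ T0) {α : ℝ}
    (hα : α ∈ interior {β : ℝ | ∀ q, q * β ≤ T0 q})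
    (hJ : ∀ q, α ∉ interior (Icc (Dminus T0 q) (Dplus T0 q))) : BirkFormalism f φ T0 α := by
  obtain ⟨q, hq⟩ := exists_support h hα
  have h1 := PressureSetup.mem_Icc_of_support hq
  have h2 : α = Dminus T0 q ∨ α = Dplus T0 q := by
    by_contra hcon
    push Not at hcon
    refine hJ q ?_
    rw [interior_Icc]
    exact ⟨lt_of_le_of_ne h1.1 hcon.1.symm, lt_of_le_of_ne h1.2 hcon.2⟩
  obtain ⟨μ, hμ, hμe⟩ := h.exists_ergodic_of_endpoint h2
  refine formalism_of_ergodic h fun ε hε => ⟨μ, inferInstance, hμe, hμ.2.2.2, q, ?_⟩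
  rw [h.state_entropy hμ]
  linarith

/-- A minimum of `q ↦ g(q) - q α` at a point of differentiability carries an ergodic equilibrium
state with mean `α`, since all equilibrium states there have mean `α`. -/
lemma exists_ergodic_of_differentiableAt {Y : Set X} {g : ℝ → ℝ} (h : PressureSetup f φ Y g)
    {q α : ℝ} (hd : DifferentiableAt ℝ g q) (hmin : IsLocalMin (fun r => g r - r * α) q) :
    ∃ μ ∈ qStates f φ Y g q α, Ergodic f (μ : Measure X) := by
  have key : ∀ β, IsLocalMin (fun r => g r - r * β) q → deriv g q = β := by
    intro β hβ
    have h1 : HasDerivAt (fun r => g r - r * β) (deriv g q - 1 * β) q :=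
      hd.hasDerivAt.sub ((hasDerivAt_id q).mul_const β)
    have := hβ.hasDerivAt_eq_zero h1
    linarith
  have hall : ∀ β, (qStates f φ Y g q β).Nonempty → β = α := by
    intro β hβ
    rw [← key α hmin, ← key β (Eventually.of_forall fun r => ?_)]
    have := h.subgradient hβ r
    change g q - q * β ≤ g r - r * β
    linarith
  obtain ⟨a, ha⟩ := h.exists_state q
  refine exists_ergodic_equilibrium h.hf h.hfin h.husc h.hY h.nonempty (h.cont q) h.hφ (h.hg q) ?_
    (Or.inl fun β hβ => (hall β hβ).le)
  rwa [hall a ha] at ha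

/-- Approximation of the pressure by differentiable pressure functions of subsystems. -/
lemma formalism_of_approx (h : PressureSetup f φ univ T0) {Y : ℕ → Set X} {g : ℕ → ℝ → ℝ}
    (hg : ∀ n, PressureSetup f φ (Y n) (g n)) (hd : ∀ n, Differentiable ℝ (g n))
    (hlim : ∀ q, Tendsto (fun n => g n q) atTop (𝓝 (T0 q))) {α : ℝ}
    (hα : α ∈ interior {β : ℝ | ∀ q, q * β ≤ T0 q}) : BirkFormalism f φ T0 α := by
  obtain ⟨ε₀, hε₀, hc⟩ := coercive_of_interior hα
  obtain ⟨K, hK⟩ := h.exists_bound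
  set R := T0 0 / ε₀ + 1 with hR
  have hT : 0 ≤ T0 0 := by simpa using hc 0
  have hR0 : 0 < R := by positivity
  have hRT : T0 0 < R * ε₀ := by
    rw [hR, add_mul, div_mul_cancel₀ _ hε₀.ne']
    linarith
  have hc1 : T0 0 < T0 R - R * α := by
    have := hc R
    rw [abs_of_pos hR0] at this
    linarith
  have hc2 : T0 0 < T0 (-R) - -R * α := by
    have := hc (-R)
    rw [abs_neg, abs_of_pos hR0] at this
    linarith
  obtain ⟨N, hN⟩ := eventually_atTop.1
    (((hlim 0).eventually_lt ((hlim R).sub_const (R * α)) hc1).and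
      ((hlim 0).eventually_lt ((hlim (-R)).sub_const (-R * α)) hc2))
  have hlim' : ∀ q, Tendsto (fun k => g (k + N) q) atTop (𝓝 (T0 q)) := fun q =>
    (hlim q).comp (tendsto_add_atTop_nat N)
  have hex : ∀ k, ∃ q ∈ Icc (-R) R, ∃ μ ∈ qStates f φ (Y (k + N)) (g (k + N)) q α,
      Ergodic f (μ : Measure X) := by
    intro k
    obtain ⟨q, hq, hmin⟩ := (isCompact_Icc (a := -R) (b := R)).exists_isMinOn
      ⟨0, by linarith, hR0.le⟩ (f := fun q => g (k + N) q - q * α)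
      (((hg (k + N)).continuous.sub (continuous_id.mul continuous_const)).continuousOn)
    have hmin' : ∀ r ∈ Icc (-R) R, g (k + N) q - q * α ≤ g (k + N) r - r * α :=
      fun r hr => hmin hr
    obtain ⟨h1, h2⟩ := hN (k + N) (by omega)
    have h3 := hmin' 0 ⟨by linarith, hR0.le⟩
    rw [zero_mul, sub_zero] at h3
    have h4 : q ≠ R := by
      rintro rfl
      linarith
    have h5 : q ≠ -R := by
      rintro rfl
      linarith
    have h6 : Icc (-R) R ∈ 𝓝 q :=
      Icc_mem_nhds (lt_of_le_of_ne hq.1 h5.symm) (lt_of_le_of_ne hq.2 h4)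
    exact ⟨q, hq, exists_ergodic_of_differentiableAt (hg _) ((hd _) q) (hmin.isLocalMin h6)⟩
  choose q hq μ hμ hμe using hex
  obtain ⟨p, -, ψ, hψ, hp⟩ := isCompact_Icc.tendsto_subseq hq
  refine formalism_of_ergodic h fun ε hε => ?_
  -- The `g n` share the Lipschitz constant `K`, so their values at `q k` are controlled by the
  -- values at the limit point `p`.
  have h1 : Tendsto (fun k => g (ψ k + N) p - K * |p - q (ψ k)| - q (ψ k) * α) atTop
      (𝓝 (T0 p - K * |p - p| - p * α)) :=
    (((hlim' p).comp hψ.tendsto_atTop).sub ((tendsto_const_nhds.sub hp).abs.const_mul K)).sub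
      (hp.mul_const α)
  rw [sub_self, abs_zero, mul_zero, sub_zero] at h1
  obtain ⟨k, hk⟩ := (h1.eventually_const_lt (by linarith : T0 p - p * α - ε < _)).exists
  refine ⟨μ (ψ k), inferInstance, hμe _, (hμ _).2.2.2, p, ?_⟩
  rw [(hg _).state_entropy (hμ (ψ k))]
  have h2 := (hg (ψ k + N)).lipschitz hK (q (ψ k)) p
  linarith

end Interior

/-! ### The Birkhoff spectrum -/

/-- Corollary: entropy spectrum for Birkhoff averages. -/
theorem birkhoff_spectrum {X : Type*} [MetricSpace X] [CompactSpace X] [Nonempty X]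
    [MeasurableSpace X] [BorelSpace X]
    (f : X → X) (hf : Continuous f) (hfin : FiniteHtop f)
    (husc : UpperSemicontinuousOn
      (fun μ : ProbabilityMeasure X => kolSinai f (μ : Measure X))
      {μ : ProbabilityMeasure X | MeasurePreserving f (μ : Measure X) (μ : Measure X)})
    (φ : X → ℝ) (hφ : Continuous φ)
    (T0 : ℝ → ℝ) (hT0 : ∀ q : ℝ, ((T0 q : ℝ) : EReal) = pressure f univ (fun x => q * φ x)) :
    (∀ α : ℝ,
      Sspec f φ (fun _ => 1) (fun _ => 1) α = ⨅ q : ℝ, ((T0 q - q * α : ℝ) : EReal)) ∧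
    {α : ℝ | 0 ≤ Sspec f φ (fun _ => 1) (fun _ => 1) α}
      = Icc (⨅ q : ℝ, Dminus T0 q) (⨆ q : ℝ, Dplus T0 q) ∧
    {α : ℝ | 0 ≤ Sspec f φ (fun _ => 1) (fun _ => 1) α}
      = {α : ℝ | ∃ μ ∈ invProb f, α = ∫ x, φ x ∂μ} ∧
    (∀ α : ℝ, α ∉ {β : ℝ | 0 ≤ Sspec f φ (fun _ => 1) (fun _ => 1) β} →
      Kbirk f φ α = ∅) ∧
    (∀ α ∈ interior {β : ℝ | 0 ≤ Sspec f φ (fun _ => 1) (fun _ => 1) β} \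
        ⋃ q : ℝ, interior (Icc (Dminus T0 q) (Dplus T0 q)),
      BirkFormalism f φ T0 α) ∧
    ((∃ Y : ℕ → Set X,
        (∀ n, IsCompact (Y n) ∧ MapsTo f (Y n) (Y n)) ∧
        (∃ g : ℕ → ℝ → ℝ,
          (∀ n q, ((g n q : ℝ) : EReal) = pressure f (Y n) (fun x => q * φ x)) ∧
          ∀ n, Differentiable ℝ (g n)) ∧
        (∀ q : ℝ, Tendsto (fun n => pressure f (Y n) (fun x => q * φ x)) atTop
          (𝓝 (pressure f univ (fun x => q * φ x))))) →
      ∀ α ∈ interior {β : ℝ | 0 ≤ Sspec f φ (fun _ => 1) (fun _ => 1) β},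
        BirkFormalism f φ T0 α) := by
  have h : PressureSetup f φ univ T0 :=
    ⟨hf, hfin, husc, hφ, isClosed_univ, mapsTo_univ _ _, hT0⟩
  have hdom : {α : ℝ | 0 ≤ Sspec f φ (fun _ => 1) (fun _ => 1) α}
      = {α : ℝ | ∀ q, q * α ≤ T0 q} := by
    ext α
    exact nonneg_sspec_iff hT0 α
  refine ⟨sspec_eq hT0, ?_, ?_, fun α hα => ?_, fun α hα => ?_, ?_⟩
  · rw [hdom]
    ext α
    exact h.domain_eq_Icc α
  · rw [hdom]
    ext α
    exact h.domain_eq_means α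
  · rw [hdom] at hα
    exact eq_empty_of_forall_notMem fun x hx => hα fun q => h.mem_domain_of_mem_Kbirk hx q
  · rw [hdom] at hα
    exact formalism_of_not_interior h hα.1 fun q hq => hα.2 (mem_iUnion.2 ⟨q, hq⟩)
  · rintro ⟨Y, hY, ⟨g, hg, hd⟩, hlim⟩ α hα
    rw [hdom] at hα
    refine formalism_of_approx h (Y := Y) (g := g) (fun n => ⟨hf, hfin, husc, hφ,
      (hY n).1.isClosed, (hY n).2, hg n⟩) hd (fun q => ?_) hα
    have := hlim q
    rw [← hT0] at this
    simp only [← hg] at this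
    exact EReal.tendsto_coe.1 this
end Multifractal
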